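/- In the DaC model with p = 1/2, for every r ∈ (0,1) there is no percolation of black vertices, i.e. Θ(1/2, r) = 0, and moreover the mean size of the black r-cluster of the origin under ℙ_{1/2,r} is infinite. -/

import Mathlib

/-!
Common definitions for the Divide-and-Colour (DaC) model of
Bálint, Camia and Meester, "Sharp phase transition and critical
behaviour in 2D divide and colour models".

The model is built concretely: a single uniform random variable on `(0,1]`
is decomposed into countably many i.i.d. uniform random variables (via its
binary digits); one family of uniforms drives the Bernoulli(p) bond
percolation (the edge configuration), and an independent family of uniforms
attaches an independent Bernoulli(r) colour to each bond cluster (the colour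
of a cluster is determined by the uniform label of its canonical
representative, the vertex of minimal encoding).  The DaC measure
`ℙ_{p,r}` is the pushforward of Lebesgue measure on `(0,1]` under the map
producing the pair (edge configuration, colour configuration).
-/

open MeasureTheory ENNReal

namespace DaC

/-- Vertices of the lattice. -/
abbrev V : Type := ℤ × ℤ

/-- Square lattice adjacency: Euclidean distance `1`. -/
def SqAdj (u v : V) : Prop := (u.1 - v.1) ^ 2 + (u.2 - v.2) ^ 2 = 1

/-- `*`-adjacency (matching graph of the square lattice):
Euclidean distance `1` or `√2`. -/
def StarAdj (u v : V) : Prop :=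
  (u.1 - v.1) ^ 2 + (u.2 - v.2) ^ 2 = 1 ∨ (u.1 - v.1) ^ 2 + (u.2 - v.2) ^ 2 = 2

/-- Triangular lattice adjacency. -/
def TriAdj (u v : V) : Prop :=
  (u.1 - v.1, u.2 - v.2) ∈
    ({(1, 0), (-1, 0), (0, 1), (0, -1), (1, 1), (-1, -1)} : Set (ℤ × ℤ))

/-- Classical indicator of a proposition, as a boolean. -/
noncomputable def boolOf (P : Prop) : Bool := @decide P (Classical.propDecidable P)

/-- The `n`-th binary digit of a real number `x ∈ (0,1]`. -/
noncomputable def bit (n : ℕ) (x : ℝ) : Bool := boolOf (⌊x * 2 ^ (n + 1)⌋ % 2 = 1)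

/-- A countable family of i.i.d. uniform random variables on `[0,1]`, extracted
from a single uniform sample `x` by splitting its binary digits. -/
noncomputable def unif (i : ℕ) (x : ℝ) : ℝ :=
  ∑' k : ℕ, if bit (Nat.pair i k) x then ((2 : ℝ)⁻¹) ^ (k + 1) else 0

/-- A symmetric encoding of (unordered) pairs of vertices. -/
noncomputable def eIdx (u v : V) : ℕ :=
  min (Encodable.encode (u, v)) (Encodable.encode (v, u))

/-- The uniform label attached to the edge `{u,v}`. -/
noncomputable def edgeU (u v : V) (x : ℝ) : ℝ := unif (2 * eIdx u v) x

/-- The uniform label attached to the vertex `v` (independent of the edge labels). -/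
noncomputable def vtxU (v : V) (x : ℝ) : ℝ := unif (2 * Encodable.encode v + 1) x

/-- Edge configurations: a boolean (open/closed) for each (ordered) pair of
vertices; configurations arising from the model are symmetric and are
supported on pairs of adjacent vertices. -/
abbrev EdgeCfg : Type := V → V → Bool

/-- Colour configurations: a colour (black = `true`, white = `false`) for each vertex. -/
abbrev ColourCfg : Type := V → Bool

/-- Full configurations of the DaC model: an edge configuration together with
a colour configuration. -/
abbrev Config : Type := EdgeCfg × ColourCfg

/-- The Bernoulli(p) edge configuration determined by the uniform sample `x`,
on the lattice with adjacency `adj`: an edge `{u,v}` of the lattice is open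
iff its uniform label is `< p`. -/
noncomputable def edgeCfg (adj : V → V → Prop) (p : ℝ) (x : ℝ) : EdgeCfg :=
  fun u v => boolOf (adj u v) && boolOf (edgeU u v x < p)

/-- Connectivity through open edges of the edge configuration `η`. -/
def Conn (η : EdgeCfg) (u v : V) : Prop :=
  Relation.ReflTransGen (fun a b => η a b = true) u v

/-- The `p`-cluster of the vertex `v`: its connected component in the graph
retaining only open edges. -/
def pCluster (η : EdgeCfg) (v : V) : Set V := {w | Conn η v w}

/-- Canonical representative of the `p`-cluster of `v`: the vertex of the
cluster with minimal encoding. -/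
noncomputable def clusterRep (η : EdgeCfg) (v : V) : V :=
  (Encodable.decode (α := V) (sInf (Encodable.encode '' pCluster η v))).getD v

/-- The colour configuration with parameters `p, r` determined by the uniform
sample `x`: every `p`-cluster is coloured black (with probability `r`)
or white, independently of all other `p`-clusters, according to the uniform
label of its canonical representative. -/
noncomputable def colourCfg (adj : V → V → Prop) (p r : ℝ) (x : ℝ) : ColourCfg :=
  fun v => boolOf (vtxU (clusterRep (edgeCfg adj p x) v) x < r)

/-- The uniform sample: Lebesgue measure on `(0,1]`. -/
noncomputable def base : Measure ℝ := volume.restrict (Set.Ioc 0 1)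

/-- `ν_p`: the product Bernoulli(p) measure on edge configurations of the
lattice with adjacency `adj`. -/
noncomputable def edgeMeasure (adj : V → V → Prop) (p : ℝ) : Measure EdgeCfg :=
  base.map (edgeCfg adj p)

/-- `ℙ_{p,r}`: the DaC measure on pairs (edge configuration, colour
configuration) for the lattice with adjacency `adj`. -/
noncomputable def DaCMeasure (adj : V → V → Prop) (p r : ℝ) : Measure Config :=
  base.map (fun x => (edgeCfg adj p x, colourCfg adj p r x))

/-- Monochromatic connectivity: `u` and `v` are joined by a path (for the
adjacency `adj`) all of whose vertices have colour `c`. -/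
def MonoConn (adj : V → V → Prop) (ξ : ColourCfg) (c : Bool) (u v : V) : Prop :=
  Relation.ReflTransGen (fun a b => adj a b ∧ ξ a = c ∧ ξ b = c) u v

/-- The colour-`c` cluster of `v` (for the adjacency `adj`): empty if `v` does
not have colour `c`, and otherwise the maximal `adj`-connected set of
`c`-coloured vertices containing `v`. -/
def monoCluster (adj : V → V → Prop) (ξ : ColourCfg) (c : Bool) (v : V) : Set V :=
  {w | ξ v = c ∧ MonoConn adj ξ c v w}

/-- The origin. -/
def origin : V := (0, 0)

/-- The size (cardinality) of a set of vertices, with values in `ℝ≥0∞`. -/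
noncomputable def sizeE (S : Set V) : ℝ≥0∞ := S.encard

/-- The probability, under the DaC measure with edge adjacency `eadj` and
parameters `p, r`, that the origin lies in an infinite colour-`c` cluster for
the adjacency `cadj`. -/
noncomputable def percProb (eadj cadj : V → V → Prop) (c : Bool) (p r : ℝ) : ℝ≥0∞ :=
  DaCMeasure eadj p r {ω | (monoCluster cadj ω.2 c origin).Infinite}

/-- `Θ(p,r)` for the square lattice: probability that the origin lies in an
infinite black `r`-cluster. -/
noncomputable def thetaSq (p r : ℝ) : ℝ≥0∞ := percProb SqAdj SqAdj true p r

/-- `Θ*(p,s)` for the square lattice: the `ℙ_{p,1-s}`-probability that the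
origin lies in an infinite white `*`-cluster. -/
noncomputable def thetaStarSq (p s : ℝ) : ℝ≥0∞ := percProb SqAdj StarAdj false p (1 - s)

/-- `Θ(p,r)` for the triangular lattice. -/
noncomputable def thetaTri (p r : ℝ) : ℝ≥0∞ := percProb TriAdj TriAdj true p r

/-- The critical colouring density `r_c(p)` of the square lattice DaC model. -/
noncomputable def rcSq (p : ℝ) : ℝ :=
  sSup {r : ℝ | r ∈ Set.Icc (0 : ℝ) 1 ∧ thetaSq p r = 0}

/-- The critical colouring density `r_c*(p)` for white `*`-percolation. -/
noncomputable def rcStarSq (p : ℝ) : ℝ :=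
  sSup {s : ℝ | s ∈ Set.Icc (0 : ℝ) 1 ∧ thetaStarSq p s = 0}

/-- The critical colouring density `r_c(p)` of the triangular lattice DaC model. -/
noncomputable def rcTri (p : ℝ) : ℝ :=
  sSup {r : ℝ | r ∈ Set.Icc (0 : ℝ) 1 ∧ thetaTri p r = 0}

/-! ### Rectangles and crossings -/

/-- The rectangle `S_{n,m} = ([0,n] × [0,m]) ∩ ℤ²`. -/
def Rect (n m : ℕ) : Set V :=
  {v | 0 ≤ v.1 ∧ v.1 ≤ (n : ℤ) ∧ 0 ≤ v.2 ∧ v.2 ≤ (m : ℤ)}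

/-- The top side of `S_{n,m}`. -/
def TopSide (n m : ℕ) : Set V := {v | v ∈ Rect n m ∧ v.2 = (m : ℤ)}

/-- The bottom side of `S_{n,m}`. -/
def BotSide (n m : ℕ) : Set V := {v | v ∈ Rect n m ∧ v.2 = 0}

/-- The left side of `S_{n,m}`. -/
def LeftSide (n m : ℕ) : Set V := {v | v ∈ Rect n m ∧ v.1 = 0}

/-- The right side of `S_{n,m}`. -/
def RightSide (n m : ℕ) : Set V := {v | v ∈ Rect n m ∧ v.1 = (n : ℤ)}

/-- There is a path (for the adjacency `adj`), all of whose vertices lie in the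
region `R` and satisfy the predicate `good`, from the set `A` to the set `B`. -/
def HasCrossing (adj : V → V → Prop) (good : V → Prop) (R A B : Set V) : Prop :=
  ∃ (k : ℕ) (f : Fin (k + 1) → V),
    (∀ i, f i ∈ R ∧ good (f i)) ∧
    (∀ i : Fin k, adj (f i.castSucc) (f i.succ)) ∧
    f 0 ∈ A ∧ f (Fin.last k) ∈ B

/-- `V^b_{n,m}` as a set of colour configurations: there is a black vertical
crossing of `S_{n,m}` (for the adjacency `adj`). -/
def VertBC (adj : V → V → Prop) (n m : ℕ) : Set ColourCfg :=
  {ξ | HasCrossing adj (fun v => ξ v = true) (Rect n m) (TopSide n m) (BotSide n m)}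

/-- `V^{w*}_{n,m}` as a set of colour configurations: there is a white vertical
`*`-crossing of `S_{n,m}`. -/
def VertWStarC (n m : ℕ) : Set ColourCfg :=
  {ξ | HasCrossing StarAdj (fun v => ξ v = false) (Rect n m) (TopSide n m) (BotSide n m)}

/-- `H^{w*}_{n,m}` as a set of colour configurations: there is a white
horizontal `*`-crossing of `S_{n,m}`. -/
def HorizWStarC (n m : ℕ) : Set ColourCfg :=
  {ξ | HasCrossing StarAdj (fun v => ξ v = false) (Rect n m) (LeftSide n m) (RightSide n m)}

/-- The event (set of full configurations) determined by a set of colour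
configurations. -/
def colourEvent (C : Set ColourCfg) : Set Config := {ω | ω.2 ∈ C}

/-! ### Events depending on colours, increasing events, pivotal clusters -/

/-- The event `A` is defined in terms of the colours of the vertices in `W`. -/
def DependsOnColoursIn (A : Set Config) (W : Set V) : Prop :=
  ∀ ω ω' : Config, (∀ v ∈ W, ω.2 v = ω'.2 v) → (ω ∈ A ↔ ω' ∈ A)

/-- The event `A` is increasing (for the partial order comparing colour
configurations pointwise, black = `true` above white = `false`). -/
def IncreasingColourEvent (A : Set Config) : Prop :=
  ∀ ω ω' : Config, (∀ v : V, ω.2 v = true → ω'.2 v = true) → ω ∈ A → ω' ∈ A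

/-- Flip the colours of the vertices of `C`. -/
noncomputable def flipOn (C : Set V) (ξ : ColourCfg) : ColourCfg :=
  fun v => @ite _ (v ∈ C) (Classical.propDecidable _) (!ξ v) (ξ v)

/-- The set `C` is a pivotal `p`-cluster for the event `A` in the
configuration `ω`: `C` is a `p`-cluster of the edge configuration of `ω`, and
flipping the colour of (all the vertices of) `C` changes whether the
configuration belongs to `A`. -/
def IsPivotal (A : Set Config) (ω : Config) (C : Set V) : Prop :=
  (∃ v : V, C = pCluster ω.1 v) ∧ ¬ (ω ∈ A ↔ (ω.1, flipOn C ω.2) ∈ A)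

/-- `n(A)`: the number of pivotal `p`-clusters for the event `A`, with values
in `ℝ≥0∞`. -/
noncomputable def numPivotal (A : Set Config) (ω : Config) : ℝ≥0∞ :=
  {C : Set V | IsPivotal A ω C}.encard

/-! ### Barriers -/

/-- Connectivity in the square lattice avoiding the edges of `E`. -/
def AvoidConn (E : Set (V × V)) (u v : V) : Prop :=
  Relation.ReflTransGen (fun a b => SqAdj a b ∧ (a, b) ∉ E ∧ (b, a) ∉ E) u v

/-- `E` is a barrier: a set of edges of the square lattice whose removal
(keeping the end-vertices) separates `ℤ²` into two or more connected
components, exactly one of which is infinite. -/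
def IsBarrier (E : Set (V × V)) : Prop :=
  (∀ e ∈ E, SqAdj e.1 e.2) ∧
  (∃ v, {w | AvoidConn E v w}.Infinite) ∧
  (∀ v w, {x | AvoidConn E v x}.Infinite → {x | AvoidConn E w x}.Infinite → AvoidConn E v w) ∧
  (∃ v, {w | AvoidConn E v w}.Finite)

/-- The exterior of a barrier: its unique infinite complementary component. -/
def barrierExt (E : Set (V × V)) : Set V := {v | {w | AvoidConn E v w}.Infinite}

/-- The interior of a barrier: the union of the finite complementary components. -/
def barrierInt (E : Set (V × V)) : Set V := {v | {w | AvoidConn E v w}.Finite}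

/-- The event `A ⊆ EdgeCfg` is increasing (opening edges preserves it). -/
def IncreasingEdgeEvent (A : Set EdgeCfg) : Prop :=
  ∀ η η' : EdgeCfg, (∀ a b : V, η a b = true → η' a b = true) → η ∈ A → η' ∈ A

/-- The event `A ⊆ EdgeCfg` depends only on the states of the edges both of
whose endpoints lie in `W`. -/
def DependsOnEdgesIn (A : Set EdgeCfg) (W : Set V) : Prop :=
  ∀ η η' : EdgeCfg, (∀ a b : V, a ∈ W → b ∈ W → η a b = η' a b) → (η ∈ A ↔ η' ∈ A)

/-! ### Translations -/

/-- Translation of configurations by the vector `u`. -/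
def shift (u : V) (ω : Config) : Config :=
  (fun a b => ω.1 (a + u) (b + u), fun a => ω.2 (a + u))

end DaC

-- Part 1
section
namespace DaC

/-! ### Edges, reachability and mod 2 chains -/

/-- Edges of the square lattice: `(x,y,false)` joins `(x,y)` to `(x+1,y)`,
`(x,y,true)` joins `(x,y)` to `(x,y+1)`. -/
abbrev Ed : Type := ℤ × ℤ × Bool

/-- first endpoint -/
def eS (e : Ed) : V := (e.1, e.2.1)
/-- second endpoint -/
def eT (e : Ed) : V := if e.2.2 then (e.1, e.2.1 + 1) else (e.1 + 1, e.2.1)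

@[simp] lemma eS_mk (x y : ℤ) (b : Bool) : eS (x, y, b) = (x, y) := rfl
@[simp] lemma eT_h (x y : ℤ) : eT (x, y, false) = (x + 1, y) := rfl
@[simp] lemma eT_v (x y : ℤ) : eT (x, y, true) = (x, y + 1) := rfl

/-- adjacency through an edge of `O` -/
def AdjE (O : Set Ed) (u v : V) : Prop :=
  ∃ e ∈ O, (eS e = u ∧ eT e = v) ∨ (eS e = v ∧ eT e = u)

/-- reachability through edges of `O` -/
def Reach (O : Set Ed) : V → V → Prop := Relation.ReflTransGen (AdjE O)

lemma AdjE.symm {O : Set Ed} {u v : V} (h : AdjE O u v) : AdjE O v u := by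
  obtain ⟨e, he, h⟩ := h
  exact ⟨e, he, h.symm⟩

lemma Reach.refl (O : Set Ed) (u : V) : Reach O u u := Relation.ReflTransGen.refl

lemma Reach.trans {O : Set Ed} {u v w : V} (h : Reach O u v) (h' : Reach O v w) : Reach O u w :=
  Relation.ReflTransGen.trans h h'

lemma Reach.symm {O : Set Ed} {u v : V} (h : Reach O u v) : Reach O v u := by
  induction h with
  | refl => exact Reach.refl _ _
  | tail _ h ih => exact Relation.ReflTransGen.head h.symm ih

lemma Reach.mono {O O' : Set Ed} (hO : O ⊆ O') {u v : V} (h : Reach O u v) : Reach O' u v := by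
  induction h with
  | refl => exact Reach.refl _ _
  | tail _ h ih =>
    obtain ⟨e, he, h⟩ := h
    exact Relation.ReflTransGen.tail ih ⟨e, hO he, h⟩

lemma Reach.edge {O : Set Ed} {e : Ed} (he : e ∈ O) : Reach O (eS e) (eT e) :=
  Relation.ReflTransGen.single ⟨e, he, Or.inl ⟨rfl, rfl⟩⟩

lemma zmod2_add_self (a : ZMod 2) : a + a = 0 := CharTwo.add_self_eq_zero a

/-- boundary of a chain -/
def bdry (c : Ed → ZMod 2) (w : V) : ZMod 2 :=
  c (w.1, w.2, false) + c (w.1 - 1, w.2, false) + c (w.1, w.2, true) + c (w.1, w.2 - 1, true)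

/-- indicator of a vertex -/
def dl (u w : V) : ZMod 2 := if w = u then 1 else 0

/-- the vertex `v` is an endpoint of an edge charged by the chain `c` -/
def OnC (c : Ed → ZMod 2) (v : V) : Prop := ∃ e, c e ≠ 0 ∧ (eS e = v ∨ eT e = v)

lemma bdry_single (e : Ed) (w : V) :
    bdry (fun e' => if e' = e then 1 else 0) w = dl (eS e) w + dl (eT e) w := by
  obtain ⟨x, y, b⟩ := e
  obtain ⟨p, q⟩ := w
  cases b
  · simp only [bdry, dl, Prod.mk.injEq, eS_mk, eT_h]
    simp only [and_true, Bool.true_eq_false, and_false, if_false, add_zero]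
    congr 1
    congr 1
    simp only [eq_iff_iff]
    constructor <;> rintro ⟨h1, h2⟩ <;> constructor <;> omega
  · simp only [bdry, dl, Prod.mk.injEq, eS_mk, eT_v]
    simp only [and_true, Bool.false_eq_true, and_false, if_false, zero_add]
    congr 1
    congr 1
    simp only [eq_iff_iff]
    constructor <;> rintro ⟨h1, h2⟩ <;> constructor <;> omega

lemma exists_chain {O : Set Ed} {u v : V} (h : Reach O u v) :
    ∃ c : Ed → ZMod 2, (∀ e, c e ≠ 0 → e ∈ O ∧ Reach O u (eS e)) ∧
      ∀ w, bdry c w = dl u w + dl v w := by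
  induction h with
  | refl => exact ⟨fun _ => 0, by simp, fun w => by rw [zmod2_add_self]; simp [bdry]⟩
  | @tail b d hb hd ih =>
    obtain ⟨c, hc, hbd⟩ := ih
    obtain ⟨e, he, hed⟩ := hd
    have hre : Reach O u (eS e) := by
      rcases hed with ⟨h1, h2⟩ | ⟨h1, h2⟩
      · rw [h1]; exact hb
      · rw [h1]; exact Relation.ReflTransGen.tail hb ⟨e, he, Or.inr ⟨h1, h2⟩⟩
    refine ⟨fun e' => c e' + if e' = e then 1 else 0, ?_, ?_⟩
    · intro e' h'
      by_cases hee : e' = e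
      · subst hee; exact ⟨he, hre⟩
      · simp only [hee, if_false, add_zero] at h'
        exact hc e' h'
    · intro w
      have h1 : bdry (fun e' => c e' + if e' = e then 1 else 0) w
          = bdry c w + bdry (fun e' => if e' = e then 1 else 0) w := by
        simp only [bdry]; ring
      rw [h1, hbd, bdry_single]
      have h2 : dl (eS e) w + dl (eT e) w = dl b w + dl d w := by
        rcases hed with ⟨h1, h2⟩ | ⟨h1, h2⟩
        · rw [h1, h2]
        · rw [h1, h2, add_comm]
      rw [h2]
      have := zmod2_add_self (dl b w)
      linear_combination this

/-- dual edge: the edge `e` of the face lattice crosses the lattice edge `dE e` -/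
def dE (e : Ed) : Ed := if e.2.2 then (e.1, e.2.1 + 1, false) else (e.1 + 1, e.2.1, true)

@[simp] lemma dE_h (x y : ℤ) : dE (x, y, false) = (x + 1, y, true) := rfl
@[simp] lemma dE_v (x y : ℤ) : dE (x, y, true) = (x, y + 1, false) := rfl

lemma sum_tele (g : ℤ → ZMod 2) (a b : ℤ) (h : a - 1 ≤ b) :
    ∑ x ∈ Finset.Icc a b, (g (x - 1) + g x) = g (a - 1) + g b := by
  induction b, h using Int.leInduction with
  | base =>
    rw [Finset.Icc_eq_empty (by omega), Finset.sum_empty, zmod2_add_self]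
  | succ n hn ih =>
    have : Finset.Icc a (n + 1) = insert (n + 1) (Finset.Icc a n) := by
      ext z; simp only [Finset.mem_Icc, Finset.mem_insert]; omega
    rw [this, Finset.sum_insert (by simp), ih]
    have := zmod2_add_self (g n)
    simp only [add_sub_cancel_right]
    linear_combination this

/-- the rectangle `[x0,x1] × [y0,y1]` -/
def Box (x0 x1 y0 y1 : ℤ) : Set V := {v | x0 ≤ v.1 ∧ v.1 ≤ x1 ∧ y0 ≤ v.2 ∧ v.2 ≤ y1}

/-- edges with both endpoints in the rectangle -/
def EB (x0 x1 y0 y1 : ℤ) : Set Ed := {e | eS e ∈ Box x0 x1 y0 y1 ∧ eT e ∈ Box x0 x1 y0 y1}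

/-- the two end faces of `e` are in the rows `[y0,y1)` -/
def RowOK (y0 y1 : ℤ) (e : Ed) : Prop :=
  y0 ≤ (eS e).2 ∧ (eS e).2 < y1 ∧ y0 ≤ (eT e).2 ∧ (eT e).2 < y1

lemma exists_psi (c : Ed → ZMod 2) {x0 x1 y0 y1 : ℤ} (hy : y0 < y1) {u t : V}
    (hu : u.2 = y0) (ht : t.2 = y1) (hux : x0 ≤ u.1) (hux' : u.1 ≤ x1)
    (hc : ∀ e, c e ≠ 0 → e ∈ EB x0 x1 y0 y1)
    (hb : ∀ w, bdry c w = dl u w + dl t w) :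
    ∃ ψ : V → ZMod 2, (∀ f : V, f.1 < x0 → ψ f = 0) ∧
      (∀ f : V, x1 ≤ f.1 → y0 ≤ f.2 → f.2 < y1 → ψ f = 1) ∧
      (∀ e, RowOK y0 y1 e → ψ (eS e) + ψ (eT e) = c (dE e)) := by
  have hc' : ∀ e, e ∉ EB x0 x1 y0 y1 → c e = 0 := fun e he => by
    by_contra h; exact he (hc e h)
  set ψ : V → ZMod 2 := fun f => ∑ i ∈ Finset.Icc x0 f.1, c (i, f.2, true) with hψ
  have h0 : ∀ f : V, f.1 < x0 → ψ f = 0 := by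
    intro f hf
    simp only [hψ]
    rw [Finset.Icc_eq_empty (by omega), Finset.sum_empty]
  have hH : ∀ x y : ℤ, ψ (x, y) + ψ (x + 1, y) = c (x + 1, y, true) := by
    intro x y
    by_cases hx : x + 1 < x0
    · rw [h0 _ (by simp; omega), h0 _ (by simp; omega), hc']
      · simp
      · simp only [EB, Box, Set.mem_ofPred_eq, eS_mk, eT_v]; omega
    · have : Finset.Icc x0 (x + 1) = insert (x + 1) (Finset.Icc x0 x) := by
        ext z; simp only [Finset.mem_Icc, Finset.mem_insert]; omega
      simp only [hψ]
      rw [this, Finset.sum_insert (by simp)]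
      have := zmod2_add_self (∑ i ∈ Finset.Icc x0 x, c (i, y, true))
      linear_combination this
  have hV : ∀ x y : ℤ, y0 ≤ y → y + 1 < y1 → ψ (x, y) + ψ (x, y + 1) = c (x, y + 1, false) := by
    intro x y hy0 hy1
    by_cases hx : x < x0
    · rw [h0 _ (by simp; omega), h0 _ (by simp; omega), hc']
      · simp
      · simp only [EB, Box, Set.mem_ofPred_eq, eS_mk, eT_h]; omega
    · simp only [hψ]
      rw [← Finset.sum_add_distrib]
      have := sum_tele (fun i => c (i, y + 1, false)) x0 x (by omega)
      rw [hc' (x0 - 1, y + 1, false) (by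
        simp only [EB, Box, Set.mem_ofPred_eq, eS_mk, eT_h]; omega), zero_add] at this
      rw [← this]
      apply Finset.sum_congr rfl
      intro i _
      have hbi := hb (i, y + 1)
      have e1 : dl u (i, y + 1) = 0 := by
        unfold dl; rw [if_neg]; rintro rfl; simp at hu; omega
      have e2 : dl t (i, y + 1) = 0 := by
        unfold dl; rw [if_neg]; rintro rfl; simp at ht; omega
      rw [e1, e2] at hbi
      simp only [bdry, add_sub_cancel_right] at hbi
      have k1 := zmod2_add_self (c (i, y + 1, false))
      have k2 := zmod2_add_self (c (i - 1, y + 1, false))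
      linear_combination hbi - k1 - k2
  have hx01 : x0 ≤ x1 := hux.trans hux'
  have hbot : ψ (x1, y0) = 1 := by
    have := sum_tele (fun i => c (i, y0, false)) x0 x1 (by omega)
    rw [hc' (x0 - 1, y0, false) (by
        simp only [EB, Box, Set.mem_ofPred_eq, eS_mk, eT_h]; omega),
      hc' (x1, y0, false) (by
        simp only [EB, Box, Set.mem_ofPred_eq, eS_mk, eT_h]; omega)] at this
    have h1 : ∑ i ∈ Finset.Icc x0 x1, bdry c (i, y0) = 1 := by
      have : ∀ i ∈ Finset.Icc x0 x1, bdry c (i, y0) = if i = u.1 then 1 else 0 := by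
        intro i _
        rw [hb]
        have e2 : dl t (i, y0) = 0 := by
          unfold dl; rw [if_neg]; rintro rfl; simp at ht; omega
        rw [e2, add_zero]
        unfold dl
        congr 1
        rw [Prod.ext_iff]
        simp [hu]
      rw [Finset.sum_congr rfl this, Finset.sum_ite_eq' , if_pos (by simp [hux, hux'])]
    have h2 : ∑ i ∈ Finset.Icc x0 x1, bdry c (i, y0)
        = ∑ i ∈ Finset.Icc x0 x1, ((c (i - 1, y0, false) + c (i, y0, false)) + c (i, y0, true)) := by
      apply Finset.sum_congr rfl
      intro i _
      simp only [bdry]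
      rw [hc' (i, y0 - 1, true) (by
        simp only [EB, Box, Set.mem_ofPred_eq, eS_mk, eT_v]; omega)]
      ring
    rw [Finset.sum_add_distrib, this] at h2
    simp only [hψ]
    rw [← h1, h2]; ring
  have hright : ∀ y, y0 ≤ y → y < y1 → ψ (x1, y) = 1 := by
    intro y hy
    induction y, hy using Int.leInduction with
    | base => intro _; exact hbot
    | succ n hn ih =>
      intro hn1
      have h1 := hV x1 n hn hn1
      rw [ih (by omega), hc' (x1, n + 1, false) (by
        simp only [EB, Box, Set.mem_ofPred_eq, eS_mk, eT_h]; omega)] at h1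
      have := zmod2_add_self (1 : ZMod 2)
      linear_combination h1 - this
  refine ⟨ψ, h0, ?_, ?_⟩
  · rintro ⟨x, y⟩ hx hy0 hy1
    simp only at hx hy0 hy1
    induction x, hx using Int.leInduction with
    | base => exact hright y hy0 hy1
    | succ n hn ih =>
      have h1 := hH n y
      rw [ih, hc' (n + 1, y, true) (by
        simp only [EB, Box, Set.mem_ofPred_eq, eS_mk, eT_v]; omega)] at h1
      have := zmod2_add_self (1 : ZMod 2)
      linear_combination h1 - this
  · rintro ⟨x, y, b⟩ ⟨h1, h2, h3, h4⟩
    cases b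
    · exact hH x y
    · exact hV x y h1 h4

open Classical in
lemma hex (A : Set V) {x0 x1 y0 y1 : ℤ} (hx : x0 ≤ x1) (hy : y0 < y1)
    (hl : ∀ f : V, f.1 < x0 → y0 ≤ f.2 → f.2 < y1 → f ∈ A)
    (hr : ∀ f : V, x1 ≤ f.1 → y0 ≤ f.2 → f.2 < y1 → f ∉ A) :
    ∃ u t : V, u.2 = y0 ∧ t.2 = y1 ∧ x0 ≤ u.1 ∧ u.1 ≤ x1 ∧
      Reach {e' | ∃ e, e' = dE e ∧ RowOK y0 y1 e ∧ ¬ (eS e ∈ A ↔ eT e ∈ A)} u t := by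
  set O : Set Ed := {e' | ∃ e, e' = dE e ∧ RowOK y0 y1 e ∧ ¬ (eS e ∈ A ↔ eT e ∈ A)} with hO
  by_contra hcon
  push Not at hcon
  set K : Set V := {w | ∃ u : V, u.2 = y0 ∧ x0 ≤ u.1 ∧ u.1 ≤ x1 ∧ Reach O u w} with hK
  have hKe : ∀ e ∈ O, (eS e ∈ K ↔ eT e ∈ K) := by
    intro e he
    constructor
    · rintro ⟨u, h1, h2, h3, h4⟩; exact ⟨u, h1, h2, h3, h4.trans (Reach.edge he)⟩
    · rintro ⟨u, h1, h2, h3, h4⟩; exact ⟨u, h1, h2, h3, h4.trans (Reach.edge he).symm⟩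
  set a : ℤ → ℤ → ZMod 2 := fun x y => if ((x, y) : V) ∈ A then 1 else 0 with ha
  set k : ℤ → ℤ → ZMod 2 := fun x y => if ((x, y) : V) ∈ K then 1 else 0 with hk
  have hne : ∀ (P Q : Prop), (P ↔ Q) → ((if P then (1 : ZMod 2) else 0) + if Q then 1 else 0) = 0 := by
    intro P Q h
    by_cases hP : P
    · rw [if_pos hP, if_pos (h.1 hP), zmod2_add_self]
    · rw [if_neg hP, if_neg (fun hQ => hP (h.2 hQ)), zmod2_add_self]
  have hkv : ∀ x y, y0 ≤ y → y < y1 →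
      k x y * (a (x - 1) y + a x y) = k x (y + 1) * (a (x - 1) y + a x y) := by
    intro x y h1 h2
    by_cases h : ((x - 1, y) : V) ∈ A ↔ ((x, y) : V) ∈ A
    · have : a (x - 1) y + a x y = 0 := hne _ _ h
      rw [this, mul_zero, mul_zero]
    · have he : ((x, y, true) : Ed) ∈ O := by
        refine ⟨(x - 1, y, false), by simp, ?_, ?_⟩
        · simp only [RowOK, eS_mk, eT_h]; omega
        · simpa using h
      have := hKe _ he
      simp only [eS_mk, eT_v] at this
      simp only [hk, this]
  have hkh : ∀ x y, y0 ≤ y → y + 1 < y1 →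
      k x (y + 1) * (a x y + a x (y + 1)) = k (x + 1) (y + 1) * (a x y + a x (y + 1)) := by
    intro x y h1 h2
    by_cases h : ((x, y) : V) ∈ A ↔ ((x, y + 1) : V) ∈ A
    · have : a x y + a x (y + 1) = 0 := hne _ _ h
      rw [this, mul_zero, mul_zero]
    · have he : ((x, y + 1, false) : Ed) ∈ O := by
        refine ⟨(x, y, true), by simp, ?_, ?_⟩
        · simp only [RowOK, eS_mk, eT_v]; omega
        · simpa using h
      have := hKe _ he
      simp only [eS_mk, eT_h] at this
      simp only [hk, this]
  have key : ∀ y, y0 ≤ y → y < y1 → ∑ x ∈ Finset.Icc x0 x1, k x y * (a (x - 1) y + a x y) = 1 := by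
    intro y hy'
    induction y, hy' using Int.leInduction with
    | base =>
      intro _
      have h1 : ∀ x ∈ Finset.Icc x0 x1, k x y0 * (a (x - 1) y0 + a x y0)
          = ((fun x => a x y0) (x - 1) + (fun x => a x y0) x) := by
        intro x hx
        rw [Finset.mem_Icc] at hx
        have : k x y0 = 1 := by
          simp only [hk]; rw [if_pos]; exact ⟨(x, y0), rfl, hx.1, hx.2, Reach.refl _ _⟩
        rw [this, one_mul]
      rw [Finset.sum_congr rfl h1, sum_tele (fun x => a x y0) x0 x1 (by omega)]
      simp only [ha]
      rw [if_pos (hl _ (by simp) (by simp) (by simpa using hy)),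
        if_neg (hr _ (by simp) (by simp) (by simpa using hy)), add_zero]
    | succ n hn ih =>
      intro hn1
      have h1 := ih (by omega)
      rw [Finset.sum_congr rfl (fun x _ => hkv x n hn (by omega))] at h1
      have h2 : ∑ x ∈ Finset.Icc x0 x1, (k x (n + 1) * (a (x - 1) n + a x n)
          + k x (n + 1) * (a (x - 1) (n + 1) + a x (n + 1))) = 0 := by
        have h3 : ∀ x ∈ Finset.Icc x0 x1, (k x (n + 1) * (a (x - 1) n + a x n)
          + k x (n + 1) * (a (x - 1) (n + 1) + a x (n + 1)))
          = ((fun x => k x (n + 1) * (a x n + a x (n + 1))) (x - 1)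
            + (fun x => k x (n + 1) * (a x n + a x (n + 1))) x) := by
          intro x _
          have := hkh (x - 1) n hn hn1
          simp only [sub_add_cancel] at this
          simp only
          rw [this]; ring
        rw [Finset.sum_congr rfl h3,
          sum_tele (fun x => k x (n + 1) * (a x n + a x (n + 1))) x0 x1 (by omega)]
        have h4 : a (x0 - 1) n + a (x0 - 1) (n + 1) = 0 := hne _ _ (by
          constructor <;> intro _ <;> apply hl <;> simp <;> omega)
        have h5 : a x1 n + a x1 (n + 1) = 0 := hne _ _ (by
          constructor <;> intro h <;> exfalso <;> revert h <;> apply hr <;> simp <;> omega)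
        simp only [h4, h5]; ring
      rw [Finset.sum_add_distrib, h1] at h2
      have := zmod2_add_self (1 : ZMod 2)
      linear_combination h2 - this
  have h1 := key (y1 - 1) (by omega) (by omega)
  rw [Finset.sum_congr rfl (fun x _ => hkv x (y1 - 1) (by omega) (by omega))] at h1
  rw [Finset.sum_eq_zero] at h1
  · exact zero_ne_one h1
  · intro x _
    have : k x (y1 - 1 + 1) = 0 := by
      simp only [hk]; rw [if_neg]
      rintro ⟨u, h1, h2, h3, h4⟩
      exact hcon u _ h1 (by simp) h2 h3 h4
    rw [this, zero_mul]

end DaC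

end

-- Part 2
section
namespace DaC

/-! ### Planar geometry -/

/-- `f` is one of the four faces around the vertex `v` -/
def Around (v f : V) : Prop := v.1 - 1 ≤ f.1 ∧ f.1 ≤ v.1 ∧ v.2 - 1 ≤ f.2 ∧ f.2 ≤ v.2

lemma sqAdj_cases {u v : V} (h : SqAdj u v) :
    (v = (u.1 + 1, u.2)) ∨ (v = (u.1 - 1, u.2)) ∨ (v = (u.1, u.2 + 1)) ∨ (v = (u.1, u.2 - 1)) := by
  obtain ⟨a, b⟩ := u
  obtain ⟨c, d⟩ := v
  simp only [SqAdj] at h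
  simp only [Prod.mk.injEq]
  have h1 : -1 ≤ a - c ∧ a - c ≤ 1 := by constructor <;> nlinarith [sq_nonneg (b - d)]
  have h2 : -1 ≤ b - d ∧ b - d ≤ 1 := by constructor <;> nlinarith [sq_nonneg (a - c)]
  have h3 : a - c = -1 ∨ a - c = 0 ∨ a - c = 1 := by omega
  have h4 : b - d = -1 ∨ b - d = 0 ∨ b - d = 1 := by omega
  rcases h3 with h3 | h3 | h3 <;> rcases h4 with h4 | h4 | h4 <;> rw [h3, h4] at h <;>
    norm_num at h <;> omega

lemma sqAdj_of_edge (e : Ed) : SqAdj (eS e) (eT e) := by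
  obtain ⟨x, y, b⟩ := e
  cases b <;> simp [SqAdj]

lemma SqAdj.symm' {u v : V} (h : SqAdj u v) : SqAdj v u := by
  unfold SqAdj at *; linarith [sq_abs (u.1 - v.1), h, (by ring : (v.1 - u.1)^2 = (u.1-v.1)^2), (by ring : (v.2 - u.2)^2 = (u.2-v.2)^2)]

lemma AdjE.sqAdj {O : Set Ed} {u v : V} (h : AdjE O u v) : SqAdj u v := by
  obtain ⟨e, _, ⟨rfl, rfl⟩ | ⟨rfl, rfl⟩⟩ := h
  · exact sqAdj_of_edge e
  · exact (sqAdj_of_edge e).symm'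

lemma adjE_of_sqAdj {u v : V} (h : SqAdj u v) : ∃ e, (eS e = u ∧ eT e = v) ∨ (eS e = v ∧ eT e = u) := by
  obtain ⟨a, b⟩ := u
  rcases sqAdj_cases h with rfl | rfl | rfl | rfl
  · exact ⟨(a, b, false), by simp⟩
  · exact ⟨(a - 1, b, false), by simp⟩
  · exact ⟨(a, b, true), by simp⟩
  · exact ⟨(a, b - 1, true), by simp⟩

lemma around_const (I : Set ℤ) (P : V → Prop) (Z : Set Ed)
    (hP : ∀ e, dE e ∉ Z → (eS e).2 ∈ I → (eT e).2 ∈ I → (P (eS e) ↔ P (eT e))) (v : V)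
    (hv : ∀ e ∈ Z, eS e ≠ v ∧ eT e ≠ v) (f f' : V) (hf : Around v f) (hf' : Around v f')
    (hI : f.2 ∈ I) (hI' : f'.2 ∈ I) (h : P f) : P f' := by
  obtain ⟨x, y⟩ := v
  have hrow : ∀ j, (j = y - 1 ∨ j = y) → j ∈ I → (P (x - 1, j) ↔ P (x, j)) := by
    intro j hj hjI
    have := hP (x - 1, j, false) ?_ hjI hjI
    · simpa using this
    · intro hz
      have := hv _ hz
      rcases hj with rfl | rfl <;> simp at this
  have hcol : ∀ i, (i = x - 1 ∨ i = x) → (y - 1) ∈ I → y ∈ I → (P (i, y - 1) ↔ P (i, y)) := by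
    intro i hi h1 h2
    have := hP (i, y - 1, true) ?_ h1 (by simpa using h2)
    · simpa using this
    · intro hz
      have := hv _ hz
      rcases hi with rfl | rfl <;> simp at this
  obtain ⟨a, b⟩ := f
  obtain ⟨a', b'⟩ := f'
  simp only [Around] at hf hf' hI hI'
  have ha : a = x - 1 ∨ a = x := by omega
  have hb : b = y - 1 ∨ b = y := by omega
  have ha' : a' = x - 1 ∨ a' = x := by omega
  have hb' : b' = y - 1 ∨ b' = y := by omega
  have h1 : P (x, b) := by
    rcases ha with rfl | rfl
    · exact (hrow b hb hI).1 h
    · exact h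
  have h2 : P (x, b') := by
    rcases hb with rfl | rfl <;> rcases hb' with rfl | rfl
    · exact h1
    · exact (hcol _ (Or.inr rfl) hI hI').1 h1
    · exact (hcol _ (Or.inr rfl) hI' hI).2 h1
    · exact h1
  rcases ha' with rfl | rfl
  · exact (hrow b' hb' hI').2 h2
  · exact h2

lemma common_face {v v' : V} (h : SqAdj v v') {y0 y1 : ℤ} (hy : y0 < y1) (h1 : y0 ≤ v.2)
    (h2 : v.2 ≤ y1) (h3 : y0 ≤ v'.2) (h4 : v'.2 ≤ y1) :
    ∃ f, Around v f ∧ Around v' f ∧ f.2 ∈ Set.Ico y0 y1 := by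
  obtain ⟨x, y⟩ := v
  simp only [Around, Set.mem_Ico]
  rcases sqAdj_cases h with rfl | rfl | rfl | rfl <;> simp only at *
  · by_cases hh : y < y1
    · exact ⟨(x, y), by simp; omega⟩
    · exact ⟨(x, y - 1), by simp; omega⟩
  · by_cases hh : y < y1
    · exact ⟨(x - 1, y), by simp; omega⟩
    · exact ⟨(x - 1, y - 1), by simp; omega⟩
  · exact ⟨(x, y), by simp; omega⟩
  · exact ⟨(x, y - 1), by simp; omega⟩

lemma common_face' {v v' : V} (h : SqAdj v v') : ∃ f, Around v f ∧ Around v' f := by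
  obtain ⟨f, h1, h2, _⟩ := common_face h (y0 := min v.2 v'.2) (y1 := max v.2 v'.2 + 1)
    (by have := min_le_max (a := v.2) (b := v'.2); omega) (min_le_left _ _)
    (by have := le_max_left v.2 v'.2; omega) (min_le_right _ _)
    (by have := le_max_right v.2 v'.2; omega)
  exact ⟨f, h1, h2⟩

lemma around_dE (e : Ed) : Around (eS (dE e)) (eS e) ∧ Around (eS (dE e)) (eT e) ∧
    Around (eT (dE e)) (eS e) ∧ Around (eT (dE e)) (eT e) := by
  obtain ⟨x, y, b⟩ := e
  cases b <;> simp [Around]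

lemma reach_box {O : Set Ed} {x0 x1 y0 y1 : ℤ} {u v : V} (hu : u ∈ Box x0 x1 y0 y1)
    (h : Reach (O ∩ EB x0 x1 y0 y1) u v) : v ∈ Box x0 x1 y0 y1 := by
  cases h with
  | refl => exact hu
  | tail _ h =>
    obtain ⟨e, he, ⟨_, rfl⟩ | ⟨rfl, _⟩⟩ := h
    · exact he.2.2
    · exact he.2.1

/-- A bottom-top path meets every left-right path. -/
lemma int_lemma {O : Set Ed} {x0 x1 y0 y1 : ℤ} (hy : y0 < y1) {u t : V}
    (hu : u.2 = y0) (ht : t.2 = y1) (hux : x0 ≤ u.1) (hux' : u.1 ≤ x1)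
    (h : Reach (O ∩ EB x0 x1 y0 y1) u t) (r : V → V → Prop)
    (hr : ∀ a b, r a b → SqAdj a b ∧ y0 ≤ a.2 ∧ a.2 ≤ y1 ∧ y0 ≤ b.2 ∧ b.2 ≤ y1) {p q : V}
    (hp : p.1 ≤ x0) (hq : x1 ≤ q.1) (hp1 : y0 ≤ p.2) (hp2 : p.2 ≤ y1)
    (hpq : Relation.ReflTransGen r p q) :
    ∃ z, Relation.ReflTransGen r p z ∧ Reach (O ∩ EB x0 x1 y0 y1) u z := by
  by_contra hcon
  push Not at hcon
  obtain ⟨c, hc, hb⟩ := exists_chain h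
  obtain ⟨ψ, h0, h1, hψ⟩ := exists_psi c hy hu ht hux hux' (fun e he => (hc e he).1.2) hb
  have hP : ∀ e, dE e ∉ {e | c e ≠ 0} → (eS e).2 ∈ Set.Ico y0 y1 → (eT e).2 ∈ Set.Ico y0 y1 →
      ((fun f => ψ f = 0) (eS e) ↔ (fun f => ψ f = 0) (eT e)) := by
    intro e he hs ht
    have := hψ e ⟨hs.1, hs.2, ht.1, ht.2⟩
    simp only [Set.mem_ofPred_eq, not_not] at he
    rw [he] at this
    have k := zmod2_add_self (ψ (eS e))
    simp only
    constructor
    · intro h; rw [h] at this; simpa using this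
    · intro h; rw [h] at this; simpa using this
  have hfree : ∀ z, Relation.ReflTransGen r p z → ∀ e ∈ {e | c e ≠ 0}, eS e ≠ z ∧ eT e ≠ z := by
    intro z hz e he
    have := hc e he
    constructor
    · rintro rfl; exact hcon _ hz this.2
    · rintro rfl; exact hcon _ hz (this.2.trans (Reach.edge this.1))
  have hall : ∀ z, Relation.ReflTransGen r p z → (y0 ≤ z.2 ∧ z.2 ≤ y1 ∧
      ∀ f, Around z f → f.2 ∈ Set.Ico y0 y1 → ψ f = 0) := by
    intro z hz
    induction hz with
    | refl =>
      refine ⟨hp1, hp2, fun f hf hfI => ?_⟩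
      have hg : ∃ g : V, Around p g ∧ g.2 ∈ Set.Ico y0 y1 ∧ g.1 < x0 := by
        by_cases hh : p.2 < y1
        · exact ⟨(p.1 - 1, p.2), by simp [Around], ⟨hp1, hh⟩, by simp; omega⟩
        · exact ⟨(p.1 - 1, p.2 - 1), by simp [Around], ⟨by simp; omega, by simp; omega⟩, by simp; omega⟩
      obtain ⟨g, hg1, hg2, hg3⟩ := hg
      exact around_const _ (fun f => ψ f = 0) _ hP p (hfree p Relation.ReflTransGen.refl) g f hg1 hf
        hg2 hfI (h0 g hg3)
    | @tail b d hb hd ih =>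
      obtain ⟨hs, r1, r2, r3, r4⟩ := hr _ _ hd
      obtain ⟨g, g1, g2, g3⟩ := common_face hs hy r1 r2 r3 r4
      refine ⟨r3, r4, fun f hf hfI => ?_⟩
      exact around_const _ (fun f => ψ f = 0) _ hP d (hfree d (hb.tail hd)) g f g2 hf g3 hfI
        (ih.2.2 g g1 g3)
  obtain ⟨q1, q2, q3⟩ := hall q hpq
  have hg : ∃ g : V, Around q g ∧ g.2 ∈ Set.Ico y0 y1 ∧ g.1 = q.1 := by
    by_cases hh : q.2 < y1
    · exact ⟨(q.1, q.2), by simp [Around], ⟨q1, hh⟩, by simp⟩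
    · exact ⟨(q.1, q.2 - 1), by simp [Around], ⟨by simp; omega, by simp; omega⟩, by simp⟩
  obtain ⟨g, hg1, hg2, hg3⟩ := hg
  have e1 := q3 g hg1 hg2
  rw [h1 g (by omega) hg2.1 hg2.2] at e1
  exact one_ne_zero e1

/-- dual configuration -/
def dO (O : Set Ed) : Set Ed := {e | dE e ∉ O}

/-- horizontal crossing -/
def HC (O : Set Ed) (x0 x1 y0 y1 : ℤ) : Prop :=
  ∃ u t : V, u.1 = x0 ∧ t.1 = x1 ∧ y0 ≤ u.2 ∧ u.2 ≤ y1 ∧ Reach (O ∩ EB x0 x1 y0 y1) u t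

/-- vertical crossing -/
def VC (O : Set Ed) (x0 x1 y0 y1 : ℤ) : Prop :=
  ∃ u t : V, u.2 = y0 ∧ t.2 = y1 ∧ x0 ≤ u.1 ∧ u.1 ≤ x1 ∧ Reach (O ∩ EB x0 x1 y0 y1) u t

/-- faces reachable from the left by crossing closed edges -/
def LA (O : Set Ed) (x0 x1 y0 y1 : ℤ) : Set V :=
  {f | ∃ u : V, u.1 = x0 - 1 ∧ y0 ≤ u.2 ∧ u.2 ≤ y1 - 1 ∧
    Reach (dO O ∩ EB (x0 - 1) x1 y0 (y1 - 1)) u f}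

lemma LA_box {O : Set Ed} {x0 x1 y0 y1 : ℤ} (hx : x0 ≤ x1) {f : V} (hf : f ∈ LA O x0 x1 y0 y1) :
    f ∈ Box (x0 - 1) x1 y0 (y1 - 1) := by
  obtain ⟨u, h1, h2, h3, h4⟩ := hf
  exact reach_box ⟨by omega, by omega, by omega, by omega⟩ h4

lemma LA_col {O : Set Ed} {x0 x1 y0 y1 : ℤ} {f : V} (h1 : f.1 = x0 - 1) (h2 : y0 ≤ f.2)
    (h3 : f.2 ≤ y1 - 1) : f ∈ LA O x0 x1 y0 y1 := ⟨f, h1, h2, h3, Reach.refl _ _⟩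

lemma LA_step {O : Set Ed} {x0 x1 y0 y1 : ℤ} {e : Ed} (he : e ∈ EB (x0 - 1) x1 y0 (y1 - 1))
    (hO : dE e ∉ O) : eS e ∈ LA O x0 x1 y0 y1 ↔ eT e ∈ LA O x0 x1 y0 y1 := by
  have hr : Reach (dO O ∩ EB (x0 - 1) x1 y0 (y1 - 1)) (eS e) (eT e) := Reach.edge ⟨hO, he⟩
  constructor
  · rintro ⟨u, h1, h2, h3, h4⟩; exact ⟨u, h1, h2, h3, h4.trans hr⟩
  · rintro ⟨u, h1, h2, h3, h4⟩; exact ⟨u, h1, h2, h3, h4.trans hr.symm⟩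

lemma good_path {O : Set Ed} {x0 x1 y0 y1 : ℤ} (hx : x0 ≤ x1) (hy : y0 < y1)
    (hg : ∀ f ∈ LA O x0 x1 y0 y1, f.1 ≠ x1) :
    ∃ u t : V, u.2 = y0 ∧ t.2 = y1 ∧ x0 ≤ u.1 ∧ u.1 ≤ x1 ∧
      Reach {e' | (e' ∈ O ∩ EB x0 x1 y0 y1) ∧ ∃ e, e' = dE e ∧ RowOK y0 y1 e ∧
        ¬ (eS e ∈ LA O x0 x1 y0 y1 ↔ eT e ∈ LA O x0 x1 y0 y1)} u t := by
  obtain ⟨u, t, h1, h2, h3, h4, h5⟩ := hex (LA O x0 x1 y0 y1 ∪ {f | f.1 < x0}) hx hy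
    (fun f h1 _ _ => Or.inr h1) (by
      rintro f h1 _ _ (hf | hf)
      · have := LA_box hx hf
        simp only [Box, Set.mem_ofPred_eq] at this
        exact hg f hf (by omega)
      · simp only [Set.mem_ofPred_eq] at hf; omega)
  refine ⟨u, t, h1, h2, h3, h4, h5.mono ?_⟩
  rintro _ ⟨e, rfl, hR, hxor⟩
  -- main claim for an oriented boundary pair
  have main : ∀ f f' : V, ((f = eS e ∧ f' = eT e) ∨ (f = eT e ∧ f' = eS e)) →
      f ∈ LA O x0 x1 y0 y1 ∪ {f | f.1 < x0} → f' ∉ LA O x0 x1 y0 y1 ∪ {f | f.1 < x0} →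
      f ∈ LA O x0 x1 y0 y1 ∧ f' ∉ LA O x0 x1 y0 y1 ∧ f.1 < x1 ∧ x0 - 1 ≤ f.1 ∧ x0 ≤ f'.1 ∧
        f'.1 ≤ x1 := by
    intro f f' hff hf hf'
    have hn : f'.1 ≤ f.1 + 1 := by
      obtain ⟨x, y, b⟩ := e
      cases b <;> rcases hff with ⟨rfl, rfl⟩ | ⟨rfl, rfl⟩ <;> simp <;> omega
    have hrow : y0 ≤ f.2 ∧ f.2 ≤ y1 - 1 := by
      obtain ⟨r1, r2, r3, r4⟩ := hR
      rcases hff with ⟨rfl, rfl⟩ | ⟨rfl, rfl⟩ <;> omega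
    simp only [Set.mem_union, not_or, Set.mem_ofPred_eq, not_lt] at hf hf'
    have hfm : f ∈ LA O x0 x1 y0 y1 := by
      rcases hf with hf | hf
      · exact hf
      · exact LA_col (by omega) hrow.1 hrow.2
    have hb := LA_box hx hfm
    have := hg f hfm
    simp only [Box, Set.mem_ofPred_eq] at hb
    exact ⟨hfm, hf'.1, by omega, by omega, hf'.2, by omega⟩
  have hcase : (eS e ∈ LA O x0 x1 y0 y1 ∪ {f | f.1 < x0} ∧ eT e ∉ LA O x0 x1 y0 y1 ∪ {f | f.1 < x0})
      ∨ (eT e ∈ LA O x0 x1 y0 y1 ∪ {f | f.1 < x0} ∧ eS e ∉ LA O x0 x1 y0 y1 ∪ {f | f.1 < x0}) := by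
    tauto
  obtain ⟨r1, r2, r3, r4⟩ := hR
  have hkey : ¬ (eS e ∈ LA O x0 x1 y0 y1 ↔ eT e ∈ LA O x0 x1 y0 y1) ∧
      x0 - 1 ≤ (eS e).1 ∧ (eS e).1 ≤ x1 ∧ x0 - 1 ≤ (eT e).1 ∧ (eT e).1 ≤ x1 ∧
      (x0 ≤ (eS e).1 ∨ x0 ≤ (eT e).1) ∧ ((eS e).1 < x1 ∨ (eT e).1 < x1) := by
    rcases hcase with ⟨k1, k2⟩ | ⟨k1, k2⟩
    · obtain ⟨m1, m2, m3, m4, m5, m6⟩ := main _ _ (Or.inl ⟨rfl, rfl⟩) k1 k2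
      exact ⟨fun h => m2 (h.1 m1), m4, by omega, by omega, m6, Or.inr m5, Or.inl m3⟩
    · obtain ⟨m1, m2, m3, m4, m5, m6⟩ := main _ _ (Or.inr ⟨rfl, rfl⟩) k1 k2
      exact ⟨fun h => m2 (h.2 m1), by omega, m6, m4, by omega, Or.inl m5, Or.inr m3⟩
  obtain ⟨k0, k1, k2, k3, k4, k5, k6⟩ := hkey
  refine ⟨⟨?_, ?_⟩, e, rfl, ⟨r1, r2, r3, r4⟩, k0⟩
  · by_contra hO
    exact k0 (LA_step ⟨⟨k1, k2, r1, by omega⟩, ⟨k3, k4, r3, by omega⟩⟩ hO)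
  · obtain ⟨x, y, b⟩ := e
    cases b <;> simp [EB, Box] at * <;> omega

lemma vc_or_dual (O : Set Ed) {x0 x1 y0 y1 : ℤ} (hx : x0 ≤ x1) (hy : y0 < y1) :
    VC O x0 x1 y0 y1 ∨ HC (dO O) (x0 - 1) x1 y0 (y1 - 1) := by
  by_cases hg : ∀ f ∈ LA O x0 x1 y0 y1, f.1 ≠ x1
  · left
    obtain ⟨u, t, h1, h2, h3, h4, h5⟩ := good_path hx hy hg
    exact ⟨u, t, h1, h2, h3, h4, h5.mono (fun e he => he.1)⟩
  · right
    push Not at hg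
    obtain ⟨f, ⟨u, h1, h2, h3, h4⟩, hf⟩ := hg
    exact ⟨u, f, h1, hf, h2, h3, h4⟩

lemma good_of_vc {O : Set Ed} {x0 x1 y0 y1 : ℤ} (hx : x0 ≤ x1) (hy : y0 < y1)
    (h : VC O x0 x1 y0 y1) : ∀ f ∈ LA O x0 x1 y0 y1, f.1 ≠ x1 := by
  obtain ⟨u, t, h1, h2, h3, h4, h5⟩ := h
  obtain ⟨c, hc, hb⟩ := exists_chain h5
  obtain ⟨ψ, p0, p1, hψ⟩ := exists_psi c hy h1 h2 h3 h4 (fun e he => (hc e he).1.2) hb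
  rintro f hf hfx
  have hbox := LA_box hx hf
  obtain ⟨v, v1, v2, v3, v4⟩ := hf
  have : ψ f = 0 := by
    clear hfx hbox
    induction v4 with
    | refl => exact p0 _ (by omega)
    | tail _ hd ih =>
      obtain ⟨e, ⟨he, heB⟩, hed⟩ := hd
      have hz : c (dE e) = 0 := by
        by_contra hne
        exact he (hc _ hne).1.1
      simp only [EB, Box, Set.mem_ofPred_eq] at heB
      have := hψ e ⟨heB.1.2.2.1, by omega, heB.2.2.2.1, by omega⟩
      rw [hz] at this
      rcases hed with ⟨k1, k2⟩ | ⟨k1, k2⟩ <;> rw [k1, k2, ih] at this <;> simpa using this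
  simp only [Box, Set.mem_ofPred_eq] at hbox
  rw [p1 f (by omega) (by omega) (by omega)] at this
  exact one_ne_zero this

/-! #### The Russo–Seymour–Welsh gluing -/

/-- `v` is a corner of a face of `a` -/
def Inc (a : Set V) (v : V) : Prop := ∃ f ∈ a, Around v f

/-- reflection of faces in the line `y = n` -/
def rf (n : ℤ) (f : V) : V := (f.1, 2 * n - 1 - f.2)
/-- reflection of vertices in the line `y = n` -/
def rv (n : ℤ) (f : V) : V := (f.1, 2 * n - f.2)
/-- reflection of edges in the line `y = n` -/
def re (n : ℤ) (e : Ed) : Ed := (e.1, (if e.2.2 then 2 * n - 1 - e.2.1 else 2 * n - e.2.1), e.2.2)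

@[simp] lemma re_h (n x y : ℤ) : re n (x, y, false) = (x, 2 * n - y, false) := rfl
@[simp] lemma re_v (n x y : ℤ) : re n (x, y, true) = (x, 2 * n - 1 - y, true) := rfl

/-- faces whose reflection is in `a` -/
def ra (n : ℤ) (a : Set V) : Set V := {f | rf n f ∈ a}

/-- steps to the right of the explored region -/
def RelT (a : Set V) (O : Set Ed) (n m : ℤ) (u u' : V) : Prop :=
  AdjE (O ∩ EB 0 m 0 (2 * n)) u u' ∧ ¬ Inc a u' ∧ ¬ Inc (ra n a) u'

/-- there is a path from `a` to the right side -/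
def TT (a : Set V) (O : Set Ed) (n m : ℤ) : Prop :=
  ∃ v w : V, Inc a v ∧ w.1 = m ∧ Relation.ReflTransGen (RelT a O n m) v w

/-- there is a path from the reflection of `a` to the right side -/
def TT' (a : Set V) (O : Set Ed) (n m : ℤ) : Prop :=
  ∃ v w : V, Inc (ra n a) v ∧ w.1 = m ∧ Relation.ReflTransGen (RelT a O n m) v w

lemma tt_cover {a : Set V} {O : Set Ed} {n m : ℤ} (hn : 0 < n)
    (ha : ∀ f : V, f.1 = -1 → 0 ≤ f.2 → f.2 ≤ n - 1 → f ∈ a) (h : HC O 0 m 0 (2 * n)) :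
    TT a O n m ∨ TT' a O n m := by
  obtain ⟨u, w, h1, h2, h3, h4, h5⟩ := h
  have key : (TT a O n m ∨ TT' a O n m) ∨ Relation.ReflTransGen (RelT a O n m) u w := by
    clear h1 h3 h4
    unfold Reach at h5
    induction h5 using Relation.ReflTransGen.head_induction_on with
    | refl => exact Or.inr Relation.ReflTransGen.refl
    | @head p q hpq _ ih =>
      rcases ih with ih | ih
      · exact Or.inl ih
      · by_cases hq : Inc a q
        · exact Or.inl (Or.inl ⟨q, w, hq, h2, ih⟩)
        · by_cases hq' : Inc (ra n a) q
          · exact Or.inl (Or.inr ⟨q, w, hq', h2, ih⟩)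
          · exact Or.inr (Relation.ReflTransGen.head ⟨hpq, hq, hq'⟩ ih)
  rcases key with h | h
  · exact h
  · by_cases hu : u.2 ≤ n - 1
    · exact Or.inl ⟨u, w, ⟨(-1, u.2), ha _ rfl h3 hu, by simp [Around]; omega⟩, h2, h⟩
    · by_cases hu' : u.2 = n
      · exact Or.inl ⟨u, w, ⟨(-1, u.2 - 1), ha (-1, u.2 - 1) rfl (by simp; omega) (by simp; omega),
          by simp [Around]; omega⟩, h2, h⟩
      · refine Or.inr ⟨u, w, ⟨(-1, u.2 - 1), ?_, by simp [Around]; omega⟩, h2, h⟩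
        show rf n (-1, u.2 - 1) ∈ a
        exact ha _ rfl (by simp [rf]; omega) (by simp [rf]; omega)

/-- The Bollobás–Riordan event -/
def XC (O : Set Ed) (n m : ℤ) : Prop :=
  ∃ u t w : V, u.2 = 0 ∧ t.2 = n ∧ 0 ≤ u.1 ∧ u.1 ≤ n ∧ Reach (O ∩ EB 0 n 0 n) u t ∧
    w.1 = m ∧ Reach (O ∩ EB 0 m 0 (2 * n)) u w

lemma bdry_re (n : ℤ) (c : Ed → ZMod 2) (w : V) :
    bdry (fun e => c (re n e)) w = bdry c (rv n w) := by
  obtain ⟨x, y⟩ := w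
  simp only [bdry, re_h, re_v, rv]
  have h1 : 2 * n - 1 - y = 2 * n - y - 1 := by ring
  have h2 : 2 * n - 1 - (y - 1) = 2 * n - y := by ring
  rw [h1, h2]; ring

lemma re_ends (n : ℤ) (e : Ed) (v : V) (h : eS e = v ∨ eT e = v) :
    eS (re n e) = rv n v ∨ eT (re n e) = rv n v := by
  obtain ⟨x, y, b⟩ := e
  cases b <;> rcases h with rfl | rfl <;> simp [rv] <;> omega

lemma EB_mono {x0 x1 y0 y1 x0' x1' y0' y1' : ℤ} (h1 : x0' ≤ x0) (h2 : x1 ≤ x1') (h3 : y0' ≤ y0)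
    (h4 : y1 ≤ y1') : EB x0 x1 y0 y1 ⊆ EB x0' x1' y0' y1' := by
  rintro e ⟨⟨a1, a2, a3, a4⟩, ⟨b1, b2, b3, b4⟩⟩
  exact ⟨⟨by omega, by omega, by omega, by omega⟩, ⟨by omega, by omega, by omega, by omega⟩⟩

lemma xc_of_tt {O : Set Ed} {n m : ℤ} (hn : 0 < n) (hm : n ≤ m)
    (hg : ∀ f ∈ LA O 0 n 0 n, f.1 ≠ n) (hT : TT (LA O 0 n 0 n) O n m) : XC O n m := by
  set a := LA O 0 n 0 n with ha
  obtain ⟨u, t, hu, ht, hu0, hu1, hut⟩ := good_path hn.le hn hg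
  set O1 : Set Ed := {e' | (e' ∈ O ∩ EB 0 n 0 n) ∧ ∃ e, e' = dE e ∧ RowOK 0 n e ∧
        ¬ (eS e ∈ LA O 0 n 0 n ↔ eT e ∈ LA O 0 n 0 n)} with hO1
  obtain ⟨c, hc, hb⟩ := exists_chain hut
  obtain ⟨v, w, hv, hw, hvw⟩ := hT
  have hrvrv : ∀ z, rv n (rv n z) = z := by intro z; ext <;> simp [rv]
  have hb' : ∀ z, bdry (fun e => c e + c (re n e)) z = dl u z + dl (rv n u) z := by
    intro z
    have h1 : bdry (fun e => c e + c (re n e)) z = bdry c z + bdry (fun e => c (re n e)) z := by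
      simp only [bdry]; ring
    rw [h1, bdry_re, hb, hb]
    have h2 : dl t (rv n z) = dl t z := by
      unfold dl
      congr 1
      simp only [eq_iff_iff, rv, Prod.ext_iff]
      constructor <;> rintro ⟨q1, q2⟩ <;> constructor <;> omega
    have h3 : dl u (rv n z) = dl (rv n u) z := by
      unfold dl
      congr 1
      simp only [eq_iff_iff, rv, Prod.ext_iff]
      constructor <;> rintro ⟨q1, q2⟩ <;> constructor <;> omega
    rw [h2, h3]
    have := zmod2_add_self (dl t z)
    linear_combination this
  have hsupp : ∀ e, (c e + c (re n e)) ≠ 0 → c e ≠ 0 ∨ c (re n e) ≠ 0 := by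
    intro e he
    by_contra hh
    push Not at hh
    rw [hh.1, hh.2] at he
    simp at he
  obtain ⟨ψ, h0, h1, hψ⟩ := exists_psi (fun e => c e + c (re n e)) (x0 := 0) (x1 := n) (y0 := 0)
    (y1 := 2 * n) (by omega) hu (t := rv n u) (by simp [rv, hu]) hu0 hu1 (by
      intro e he
      rcases hsupp e he with h | h
      · exact EB_mono le_rfl le_rfl le_rfl (by omega) (hc e h).1.1.2
      · have := (hc _ h).1.1.2
        obtain ⟨x, y, b⟩ := e
        cases b <;> simp [EB, Box] at * <;> omega) hb'
  have hP : ∀ e, dE e ∉ {e | c e + c (re n e) ≠ 0} → (eS e).2 ∈ Set.Ico 0 (2 * n) →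
      (eT e).2 ∈ Set.Ico 0 (2 * n) →
      ((fun f => ψ f = 0) (eS e) ↔ (fun f => ψ f = 0) (eT e)) := by
    intro e he hs ht
    have := hψ e ⟨hs.1, hs.2, ht.1, ht.2⟩
    simp only [Set.mem_ofPred_eq, not_not] at he
    rw [he] at this
    simp only
    constructor
    · intro h; rw [h] at this; simpa using this
    · intro h; rw [h] at this; simpa using this
  have hmid : ∀ e, c (re n e) ≠ 0 → n ≤ (eS e).2 ∧ n ≤ (eT e).2 := by
    intro e he
    have := (hc _ he).1.1.2
    obtain ⟨x, y, b⟩ := e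
    cases b <;> simp [EB, Box] at * <;> omega
  have hmidh : ∀ x y, c (re n (x, y, false)) ≠ 0 → n < y := by
    intro x y he
    obtain ⟨e, he1, he2, _⟩ := (hc _ he).1.2
    obtain ⟨x', y', b⟩ := e
    cases b <;> simp [RowOK] at * <;> omega
  have hψa : ∀ f ∈ a, ψ f = 0 := by
    rintro f ⟨z, z1, z2, z3, z4⟩
    induction z4 with
    | refl => exact h0 _ (by omega)
    | tail _ hd ih =>
      obtain ⟨e, ⟨he, heB⟩, hed⟩ := hd
      have hz : c (dE e) + c (re n (dE e)) = 0 := by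
        by_contra hne
        rcases hsupp _ hne with h | h
        · exact he (hc _ h).1.1.1
        · have k1 := hmid _ h
          obtain ⟨x, y, b⟩ := e
          cases b
          · simp [EB, Box] at heB k1; omega
          · have : n < y + 1 := hmidh x (y + 1) h
            simp [EB, Box] at heB; omega
      simp only [EB, Box, Set.mem_ofPred_eq] at heB
      have := hψ e ⟨heB.1.2.2.1, by omega, heB.2.2.2.1, by omega⟩
      simp only [hz] at this
      rcases hed with ⟨k1, k2⟩ | ⟨k1, k2⟩ <;> rw [k1, k2, ih] at this <;> simpa using this
  have hinc : ∀ e z, c e ≠ 0 → (eS e = z ∨ eT e = z) → Inc a z := by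
    intro e z he hez
    obtain ⟨e', rfl, _, hxor⟩ := (hc _ he).1.2
    obtain ⟨a1, a2, a3, a4⟩ := around_dE e'
    by_cases hs : eS e' ∈ a
    · rcases hez with rfl | rfl
      · exact ⟨_, hs, a1⟩
      · exact ⟨_, hs, a3⟩
    · have ht : eT e' ∈ a := by
        by_contra ht; exact hxor ⟨fun h => absurd h hs, fun h => absurd h ht⟩
      rcases hez with rfl | rfl
      · exact ⟨_, ht, a2⟩
      · exact ⟨_, ht, a4⟩
  have hinc' : ∀ z, Inc a (rv n z) → Inc (ra n a) z := by
    rintro z ⟨f, hf, hz⟩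
    refine ⟨rf n f, ?_, ?_⟩
    · have : rf n (rf n f) = f := by ext <;> simp [rf]
      simpa [ra, this] using hf
    · simp only [Around, rv, rf] at *; omega
  have hfree : ∀ z, ¬ Inc a z → ¬ Inc (ra n a) z → ∀ e ∈ {e | c e + c (re n e) ≠ 0},
      eS e ≠ z ∧ eT e ≠ z := by
    intro z z1 z2 e he
    by_contra hh
    have hh' : eS e = z ∨ eT e = z := by tauto
    rcases hsupp e he with h | h
    · exact z1 (hinc _ _ h hh')
    · exact z2 (hinc' _ (hinc _ _ h (re_ends n e z hh')))
  have hvrow : 0 ≤ v.2 ∧ v.2 ≤ n := by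
    obtain ⟨f, hf, hfv⟩ := hv
    have := LA_box hn.le hf
    simp only [Box, Set.mem_ofPred_eq, Around] at *; omega
  -- `v` lies on the crossing
  have hon : Reach O1 u v := by
    have hcase : ∃ e, c e + c (re n e) ≠ 0 ∧ (eS e = v ∨ eT e = v) := by
      by_contra hcon
      push Not at hcon
      have hall : ∀ z, Relation.ReflTransGen (RelT a O n m) v z → (0 ≤ z.2 ∧ z.2 ≤ 2 * n ∧
          ∀ f, Around z f → f.2 ∈ Set.Ico 0 (2 * n) → ψ f = 0) := by
        intro z hz
        induction hz with
        | refl =>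
          refine ⟨hvrow.1, by omega, fun f hf hfI => ?_⟩
          obtain ⟨g, hga, hgv⟩ := hv
          have hgb := LA_box hn.le hga
          simp only [Box, Set.mem_ofPred_eq] at hgb
          exact around_const _ (fun f => ψ f = 0) _ hP v (fun e he => hcon e he) g f
            hgv hf ⟨by omega, by omega⟩ hfI (hψa g hga)
        | @tail b d hb hd ih =>
          obtain ⟨hs, r1, r2⟩ := hd
          have hdrow : 0 ≤ d.2 ∧ d.2 ≤ 2 * n := by
            obtain ⟨e, he, ⟨_, rfl⟩ | ⟨rfl, _⟩⟩ := hs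
            · exact ⟨he.2.2.2.2.1, he.2.2.2.2.2⟩
            · exact ⟨he.2.1.2.2.1, he.2.1.2.2.2⟩
          obtain ⟨g, g1, g2, g3⟩ := common_face hs.sqAdj (by omega : 0 < 2 * n) ih.1 ih.2.1
            hdrow.1 hdrow.2
          refine ⟨hdrow.1, hdrow.2, fun f hf hfI => ?_⟩
          exact around_const _ (fun f => ψ f = 0) _ hP d (hfree d r1 r2) g f g2 hf g3 hfI
            (ih.2.2 g g1 g3)
      obtain ⟨q1, q2, q3⟩ := hall w hvw
      have hg : ∃ g : V, Around w g ∧ g.2 ∈ Set.Ico 0 (2 * n) ∧ g.1 = w.1 := by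
        by_cases hh : w.2 < 2 * n
        · exact ⟨(w.1, w.2), by simp [Around], ⟨q1, hh⟩, by simp⟩
        · exact ⟨(w.1, w.2 - 1), by simp [Around], ⟨by simp; omega, by simp; omega⟩, by simp⟩
      obtain ⟨g, hg1, hg2, hg3⟩ := hg
      have e1 := q3 g hg1 hg2
      rw [h1 g (by omega) hg2.1 hg2.2] at e1
      exact one_ne_zero e1
    obtain ⟨e, he, hev⟩ := hcase
    have : ∃ e, c e ≠ 0 ∧ (eS e = v ∨ eT e = v) := by
      rcases hsupp e he with h | h
      · exact ⟨e, h, hev⟩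
      · refine ⟨re n e, h, ?_⟩
        have k1 := hmid e h
        have : v.2 = n := by rcases hev with rfl | rfl <;> omega
        have hvv : rv n v = v := by ext <;> simp [rv]; omega
        have := re_ends n e v hev
        rwa [hvv] at this
    obtain ⟨e, he, rfl | rfl⟩ := this
    · exact (hc e he).2
    · exact (hc e he).2.trans (Reach.edge (hc e he).1)
  have hsub : O1 ⊆ O ∩ EB 0 n 0 n := fun e he => he.1
  have htail : Reach (O ∩ EB 0 m 0 (2 * n)) v w := by
    clear hw hon
    induction hvw with
    | refl => exact Reach.refl _ _
    | tail _ hd ih => exact Relation.ReflTransGen.tail ih hd.1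
  refine ⟨u, t, w, hu, ht, hu0, hu1, hut.mono hsub, hw, ?_⟩
  refine ((hon.mono hsub).mono ?_).trans htail
  exact fun e he => ⟨he.1, EB_mono le_rfl hm le_rfl (by omega) he.2⟩

end DaC

end

-- Part 3
section
namespace DaC

/-! ### Symmetries and gluing -/

lemma Reach.map {O O' : Set Ed} (g : V → V) (σ : Ed → Ed)
    (hσ : ∀ e, (eS (σ e) = g (eS e) ∧ eT (σ e) = g (eT e)) ∨
      (eS (σ e) = g (eT e) ∧ eT (σ e) = g (eS e)))
    (hO : ∀ e ∈ O, σ e ∈ O') {u v : V} (h : Reach O u v) : Reach O' (g u) (g v) := by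
  induction h with
  | refl => exact Reach.refl _ _
  | tail _ h ih =>
    obtain ⟨e, he, h⟩ := h
    refine Relation.ReflTransGen.tail ih ⟨σ e, hO e he, ?_⟩
    rcases h with ⟨rfl, rfl⟩ | ⟨rfl, rfl⟩
    · exact hσ e
    · exact (hσ e).symm

/-- translation -/
def tr (k l : ℤ) (e : Ed) : Ed := (e.1 + k, e.2.1 + l, e.2.2)
/-- transposition -/
def sw (e : Ed) : Ed := (e.2.1, e.1, !e.2.2)
/-- reflection `x ↦ k - x` -/
def rx (k : ℤ) (e : Ed) : Ed := ((if e.2.2 then k - e.1 else k - 1 - e.1), e.2.1, e.2.2)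

@[simp] lemma tr_mk (k l x y : ℤ) (b : Bool) : tr k l (x, y, b) = (x + k, y + l, b) := rfl
@[simp] lemma sw_mk (x y : ℤ) (b : Bool) : sw (x, y, b) = (y, x, !b) := rfl
@[simp] lemma rx_h (k x y : ℤ) : rx k (x, y, false) = (k - 1 - x, y, false) := rfl
@[simp] lemma rx_v (k x y : ℤ) : rx k (x, y, true) = (k - x, y, true) := rfl

lemma sw_sw (e : Ed) : sw (sw e) = e := by
  obtain ⟨x, y, b⟩ := e; simp

lemma tr_inj (k l : ℤ) : Function.Injective (tr k l) := by
  rintro ⟨x, y, b⟩ ⟨x', y', b'⟩ h; simpa using h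
lemma sw_inj : Function.Injective sw := fun a b h => by rw [← sw_sw a, h, sw_sw]
lemma rx_inj (k : ℤ) : Function.Injective (rx k) := by
  rintro ⟨x, y, b⟩ ⟨x', y', b'⟩ h
  cases b <;> cases b' <;> simp at h ⊢ <;> omega
lemma re_inj (k : ℤ) : Function.Injective (re k) := by
  rintro ⟨x, y, b⟩ ⟨x', y', b'⟩ h
  cases b <;> cases b' <;> simp at h ⊢ <;> omega
lemma dE_inj : Function.Injective dE := by
  rintro ⟨x, y, b⟩ ⟨x', y', b'⟩ h
  cases b <;> cases b' <;> simp at h ⊢ <;> omega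

lemma tr_ends (k l : ℤ) (e : Ed) : (eS (tr k l e) = ((eS e).1 + k, (eS e).2 + l)) ∧
    eT (tr k l e) = ((eT e).1 + k, (eT e).2 + l) := by
  obtain ⟨x, y, b⟩ := e
  cases b <;> simp <;> omega

lemma sw_ends (e : Ed) : eS (sw e) = (eS e).swap ∧ eT (sw e) = (eT e).swap := by
  obtain ⟨x, y, b⟩ := e
  cases b <;> simp

lemma rx_ends (k : ℤ) (e : Ed) :
    (eS (rx k e) = (k - (eS e).1, (eS e).2) ∧ eT (rx k e) = (k - (eT e).1, (eT e).2)) ∨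
    (eS (rx k e) = (k - (eT e).1, (eT e).2) ∧ eT (rx k e) = (k - (eS e).1, (eS e).2)) := by
  obtain ⟨x, y, b⟩ := e
  cases b <;> simp <;> omega

lemma HC_tr {O : Set Ed} (k l : ℤ) {x0 x1 y0 y1 : ℤ} (h : HC (tr k l ⁻¹' O) x0 x1 y0 y1) :
    HC O (x0 + k) (x1 + k) (y0 + l) (y1 + l) := by
  obtain ⟨u, t, h1, h2, h3, h4, h5⟩ := h
  refine ⟨(u.1 + k, u.2 + l), (t.1 + k, t.2 + l), by simp; omega, by simp; omega, by simp; omega,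
    by simp; omega, ?_⟩
  refine h5.map (fun v => (v.1 + k, v.2 + l)) (tr k l) (fun e => Or.inl (tr_ends k l e)) ?_
  rintro e ⟨he, heB⟩
  refine ⟨he, ?_⟩
  simp only [EB, Box, Set.mem_ofPred_eq, tr_ends] at heB ⊢; omega

lemma VC_sw {O : Set Ed} {x0 x1 y0 y1 : ℤ} (h : VC (sw ⁻¹' O) x0 x1 y0 y1) :
    HC O y0 y1 x0 x1 := by
  obtain ⟨u, t, h1, h2, h3, h4, h5⟩ := h
  refine ⟨u.swap, t.swap, h1, h2, h3, h4, ?_⟩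
  refine h5.map Prod.swap sw (fun e => Or.inl (sw_ends e)) ?_
  rintro e ⟨he, heB⟩
  refine ⟨he, ?_⟩
  simp only [EB, Box, Set.mem_ofPred_eq, sw_ends, Prod.fst_swap, Prod.snd_swap] at heB ⊢; omega

lemma HC_sw {O : Set Ed} {x0 x1 y0 y1 : ℤ} (h : HC (sw ⁻¹' O) x0 x1 y0 y1) :
    VC O y0 y1 x0 x1 := by
  obtain ⟨u, t, h1, h2, h3, h4, h5⟩ := h
  refine ⟨u.swap, t.swap, h1, h2, h3, h4, ?_⟩
  refine h5.map Prod.swap sw (fun e => Or.inl (sw_ends e)) ?_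
  rintro e ⟨he, heB⟩
  refine ⟨he, ?_⟩
  simp only [EB, Box, Set.mem_ofPred_eq, sw_ends, Prod.fst_swap, Prod.snd_swap] at heB ⊢; omega

lemma sw_pre (O : Set Ed) : sw ⁻¹' (sw ⁻¹' O) = O := by
  ext e; simp [sw_sw]

lemma HC.mono {O O' : Set Ed} (hO : O ⊆ O') {x0 x1 y0 y1 : ℤ} (h : HC O x0 x1 y0 y1) :
    HC O' x0 x1 y0 y1 := by
  obtain ⟨u, t, h1, h2, h3, h4, h5⟩ := h
  exact ⟨u, t, h1, h2, h3, h4, h5.mono (Set.inter_subset_inter_left _ hO)⟩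

lemma VC.mono {O O' : Set Ed} (hO : O ⊆ O') {x0 x1 y0 y1 : ℤ} (h : VC O x0 x1 y0 y1) :
    VC O' x0 x1 y0 y1 := by
  obtain ⟨u, t, h1, h2, h3, h4, h5⟩ := h
  exact ⟨u, t, h1, h2, h3, h4, h5.mono (Set.inter_subset_inter_left _ hO)⟩

lemma XC.mono {O O' : Set Ed} (hO : O ⊆ O') {n m : ℤ} (h : XC O n m) : XC O' n m := by
  obtain ⟨u, t, w, h1, h2, h3, h4, h5, h6, h7⟩ := h
  exact ⟨u, t, w, h1, h2, h3, h4, h5.mono (Set.inter_subset_inter_left _ hO), h6,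
    h7.mono (Set.inter_subset_inter_left _ hO)⟩

/-- narrowing: a horizontal crossing crosses shorter rectangles -/
lemma HC.shrink {O : Set Ed} {x0 x1 x1' y0 y1 y0' y1' : ℤ} (hx : x0 ≤ x1') (hx' : x1' ≤ x1)
    (h3 : y0' ≤ y0) (h4 : y1 ≤ y1')
    (h : HC O x0 x1 y0 y1) : HC O x0 x1' y0' y1' := by
  obtain ⟨u, t, h1, h2, h3, h4, h5⟩ := h
  have key : ∀ w, Reach (O ∩ EB x0 x1 y0 y1) u w →
      (∃ z : V, z.1 = x1' ∧ Reach (O ∩ EB x0 x1' y0' y1') u z) ∨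
      (w.1 < x1' ∧ Reach (O ∩ EB x0 x1' y0' y1') u w) := by
    intro w hw
    induction hw with
    | refl =>
      by_cases hu : x0 = x1'
      · exact Or.inl ⟨u, by omega, Reach.refl _ _⟩
      · exact Or.inr ⟨by omega, Reach.refl _ _⟩
    | @tail b d hb hd ih =>
      rcases ih with ih | ⟨ih1, ih2⟩
      · exact Or.inl ih
      · obtain ⟨e, ⟨he, heB⟩, hed⟩ := hd
        have hd1 : d.1 ≤ x1' := by
          rcases sqAdj_cases (AdjE.sqAdj ⟨e, he, hed⟩) with rfl | rfl | rfl | rfl <;> simp <;> omega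
        have hr : Reach (O ∩ EB x0 x1' y0' y1') u d := by
          refine ih2.tail ⟨e, ⟨he, ?_⟩, hed⟩
          simp only [EB, Box, Set.mem_ofPred_eq] at heB ⊢
          rcases hed with ⟨rfl, rfl⟩ | ⟨rfl, rfl⟩ <;> omega
        by_cases hh : d.1 = x1'
        · exact Or.inl ⟨d, hh, hr⟩
        · exact Or.inr ⟨by omega, hr⟩
  rcases key t h5 with ⟨z, z1, z2⟩ | ⟨h6, _⟩
  · exact ⟨u, z, h1, z1, by omega, by omega, z2⟩
  · omega

lemma adjE_rows {O : Set Ed} {x0 x1 y0 y1 : ℤ} {a b : V} (h : AdjE (O ∩ EB x0 x1 y0 y1) a b) :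
    SqAdj a b ∧ y0 ≤ a.2 ∧ a.2 ≤ y1 ∧ y0 ≤ b.2 ∧ b.2 ≤ y1 := by
  refine ⟨h.sqAdj, ?_⟩
  obtain ⟨e, ⟨_, heB⟩, hed⟩ := h
  simp only [EB, Box, Set.mem_ofPred_eq] at heB
  rcases hed with ⟨rfl, rfl⟩ | ⟨rfl, rfl⟩ <;> omega

/-- a horizontal path meets a vertical crossing -/
lemma cross {O : Set Ed} {x0 x1 y0 y1 a b c d : ℤ} (hy : y0 < y1) {u t p q : V}
    (hu : u.2 = y0) (ht : t.2 = y1) (hux : x0 ≤ u.1) (hux' : u.1 ≤ x1)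
    (h : Reach (O ∩ EB x0 x1 y0 y1) u t) (hc : y0 ≤ c) (hd : d ≤ y1)
    (hp : p.1 = a) (hq : q.1 = b) (hp1 : c ≤ p.2) (hp2 : p.2 ≤ d) (ha : a ≤ x0) (hb : x1 ≤ b)
    (hpq : Reach (O ∩ EB a b c d) p q) :
    ∃ z, Reach (O ∩ EB a b c d) p z ∧ Reach (O ∩ EB x0 x1 y0 y1) u z := by
  refine int_lemma hy hu ht hux hux' h (AdjE (O ∩ EB a b c d)) ?_ (p := p) (q := q) (by omega)
    (by omega) (by omega) (by omega) hpq
  intro v w hvw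
  obtain ⟨h0, h1, h2, h3, h4⟩ := adjE_rows hvw
  exact ⟨h0, by omega, by omega, by omega, by omega⟩

lemma glue {O : Set Ed} {a b c d e f y0 y1 : ℤ} (hy : y0 < y1) (h1 : a ≤ e) (h2 : e ≤ c)
    (h3 : d ≤ b) (h4 : b ≤ f) (hA : HC O a b y0 y1) (hV : VC O c d y0 y1)
    (hB : HC O e f y0 y1) : HC O a f y0 y1 := by
  obtain ⟨p, q, p1, p2, p3, p4, p5⟩ := hA
  obtain ⟨p', q', p1', p2', p3', p4', p5'⟩ := hB
  obtain ⟨u, t, u1, u2, u3, u4, u5⟩ := hV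
  obtain ⟨z, z1, z2⟩ := cross hy u1 u2 u3 u4 u5 le_rfl le_rfl p1 p2 p3 p4 (by omega) (by omega) p5
  obtain ⟨z', z1', z2'⟩ := cross hy u1 u2 u3 u4 u5 le_rfl le_rfl p1' p2' p3' p4' (by omega)
    (by omega) p5'
  have m1 : O ∩ EB a b y0 y1 ⊆ O ∩ EB a f y0 y1 :=
    Set.inter_subset_inter_right _ (EB_mono le_rfl (by omega) le_rfl le_rfl)
  have m2 : O ∩ EB e f y0 y1 ⊆ O ∩ EB a f y0 y1 :=
    Set.inter_subset_inter_right _ (EB_mono (by omega) (by omega) le_rfl le_rfl)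
  have m3 : O ∩ EB c d y0 y1 ⊆ O ∩ EB a f y0 y1 :=
    Set.inter_subset_inter_right _ (EB_mono (by omega) (by omega) le_rfl le_rfl)
  exact ⟨p, q', p1, p2', p3, p4, (z1.mono m1).trans ((z2.mono m3).symm.trans ((z2'.mono m3).trans
    ((z1'.mono m2).symm.trans (p5'.mono m2))))⟩

lemma glueX {O : Set Ed} {n : ℤ} (hn : 0 < n) (h1 : XC O n (2 * n))
    (h2 : XC (rx n ⁻¹' O) n (2 * n)) (h3 : HC O 0 n 0 n) : HC O (-n) (2 * n) 0 (2 * n) := by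
  obtain ⟨u, t, w, a1, a2, a3, a4, a5, a6, a7⟩ := h1
  obtain ⟨u', t', w', b1, b2, b3, b4, b5, b6, b7⟩ := h2
  obtain ⟨p, q, c1, c2, c3, c4, c5⟩ := h3
  set g : V → V := fun v => (n - v.1, v.2) with hg
  have b5' : Reach (O ∩ EB 0 n 0 n) (g u') (g t') := b5.map g (rx n) (rx_ends n) (by
    rintro e ⟨he, heB⟩
    refine ⟨he, ?_⟩
    simp only [EB, Box, Set.mem_ofPred_eq] at heB ⊢
    rcases rx_ends n e with ⟨k1, k2⟩ | ⟨k1, k2⟩ <;> rw [k1, k2] <;> simp only <;> omega)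
  have b7' : Reach (O ∩ EB (-n) n 0 (2 * n)) (g u') (g w') := b7.map g (rx n) (rx_ends n) (by
    rintro e ⟨he, heB⟩
    refine ⟨he, ?_⟩
    simp only [EB, Box, Set.mem_ofPred_eq] at heB ⊢
    rcases rx_ends n e with ⟨k1, k2⟩ | ⟨k1, k2⟩ <;> rw [k1, k2] <;> simp only <;> omega)
  obtain ⟨z, z1, z2⟩ := cross hn a1 a2 a3 a4 a5 le_rfl le_rfl c1 c2 c3 c4 le_rfl le_rfl c5
  obtain ⟨z', z1', z2'⟩ := cross hn (u := g u') (t := g t') b1 b2 (by simp [hg]; omega)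
    (by simp [hg]; omega) b5' le_rfl le_rfl c1 c2 c3 c4 le_rfl le_rfl c5
  have m1 : O ∩ EB 0 n 0 n ⊆ O ∩ EB (-n) (2 * n) 0 (2 * n) :=
    Set.inter_subset_inter_right _ (EB_mono (by omega) (by omega) le_rfl (by omega))
  have m2 : O ∩ EB (-n) n 0 (2 * n) ⊆ O ∩ EB (-n) (2 * n) 0 (2 * n) :=
    Set.inter_subset_inter_right _ (EB_mono (by omega) (by omega) le_rfl (by omega))
  have m3 : O ∩ EB 0 (2 * n) 0 (2 * n) ⊆ O ∩ EB (-n) (2 * n) 0 (2 * n) :=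
    Set.inter_subset_inter_right _ (EB_mono (by omega) (by omega) le_rfl (by omega))
  have hw' : g w' ∈ Box (-n) (2 * n) 0 (2 * n) :=
    reach_box (O := O) (u := g u') (by simp [Box, hg]; omega) (b7'.mono m2)
  refine ⟨g w', w, by simp [hg]; omega, a6, hw'.2.2.1, hw'.2.2.2, ?_⟩
  exact (b7'.mono m2).symm.trans ((z2'.mono m1).trans ((z1'.mono m1).symm.trans
    ((z1.mono m1).trans ((z2.mono m1).symm.trans (a7.mono m3)))))

lemma tt_of_tt' {a : Set V} {O : Set Ed} {n m : ℤ} (h : TT' a (re n ⁻¹' O) n m) : TT a O n m := by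
  have hinc : ∀ b z, Inc b (rv n z) → Inc (ra n b) z := by
    rintro b z ⟨f, hf, hz⟩
    refine ⟨rf n f, ?_, ?_⟩
    · have : rf n (rf n f) = f := by ext <;> simp [rf]
      simpa [ra, this] using hf
    · simp only [Around, rv, rf] at *; omega
  have hrr : ra n (ra n a) = a := by
    ext f
    have : rf n (rf n f) = f := by ext <;> simp [rf]
    simp [ra, this]
  have hvv : ∀ z, rv n (rv n z) = z := by intro z; ext <;> simp [rv]
  obtain ⟨v, w, h1, h2, h3⟩ := h
  refine ⟨rv n v, rv n w, ?_, h2, ?_⟩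
  · rw [← hvv v] at h1
    have := hinc _ _ h1
    rwa [hrr] at this
  · clear h2 h1
    induction h3 with
    | refl => exact Relation.ReflTransGen.refl
    | @tail b d hb hd ih =>
      refine ih.tail ?_
      obtain ⟨⟨e, ⟨he, heB⟩, hed⟩, k1, k2⟩ := hd
      refine ⟨⟨re n e, ⟨he, ?_⟩, ?_⟩, ?_, ?_⟩
      · obtain ⟨x, y, b⟩ := e
        cases b <;> simp [EB, Box] at heB ⊢ <;> omega
      · obtain ⟨x, y, b⟩ := e
        cases b <;> rcases hed with ⟨rfl, rfl⟩ | ⟨rfl, rfl⟩ <;> simp [rv] <;> omega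
      · intro hh; exact k2 (hinc _ _ hh)
      · intro hh
        have := hinc _ _ hh
        rw [hrr] at this
        exact k1 this

/-! #### circuits -/

/-- four crossings around the origin -/
def Circ (O : Set Ed) (a : ℤ) : Prop :=
  HC O (-(3 * a)) (3 * a) (-(3 * a)) (-a) ∧ HC O (-(3 * a)) (3 * a) a (3 * a) ∧
  VC O (-(3 * a)) (-a) (-(3 * a)) (3 * a) ∧ VC O a (3 * a) (-(3 * a)) (3 * a)

lemma psi_const {c : Ed → ZMod 2} {ψ : V → ZMod 2} {y0 y1 : ℤ}
    (hψ : ∀ e, RowOK y0 y1 e → ψ (eS e) + ψ (eT e) = c (dE e)) {e : Ed} (h : RowOK y0 y1 e)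
    (hc : c (dE e) = 0) : ψ (eS e) = ψ (eT e) := by
  have := hψ e h
  rw [hc] at this
  have k := zmod2_add_self (ψ (eT e))
  linear_combination this - k

lemma dE_sw (e : Ed) : dE (sw e) = sw (dE e) := by
  obtain ⟨x, y, b⟩ := e
  cases b <;> simp

set_option maxHeartbeats 1000000 in
lemma circ_inside {O : Set Ed} {a : ℤ} (ha : 0 < a) (h : Circ O a) :
    ∃ (P : V → Prop) (Z : Set Ed) (u0 : V), (u0.1 ≤ -a ∧ u0 ∈ Box (-(3 * a)) (3 * a) (-(3 * a)) (3 * a)) ∧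
      (∀ e ∈ Z, Reach O u0 (eS e) ∧ Reach O u0 (eT e) ∧ e ∈ O) ∧
      (∀ f : V, -a ≤ f.1 → f.1 < a → -a ≤ f.2 → f.2 < a → P f) ∧
      (∀ f, P f → -(3 * a) ≤ f.1 ∧ f.1 < 3 * a ∧ -(3 * a) ≤ f.2 ∧ f.2 < 3 * a) ∧
      (∀ e, dE e ∉ Z → (P (eS e) ↔ P (eT e))) := by
  obtain ⟨hB, hT, hL, hR⟩ := h
  have hB' := HC_sw (O := sw ⁻¹' O) (by rw [sw_pre]; exact hB)
  have hT' := HC_sw (O := sw ⁻¹' O) (by rw [sw_pre]; exact hT)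
  have hex : ∀ (O : Set Ed) (x0 x1 : ℤ), VC O x0 x1 (-(3 * a)) (3 * a) →
      ∃ (u t : V) (c : Ed → ZMod 2) (ψ : V → ZMod 2), u.2 = -(3 * a) ∧ t.2 = 3 * a ∧
        x0 ≤ u.1 ∧ u.1 ≤ x1 ∧ Reach (O ∩ EB x0 x1 (-(3 * a)) (3 * a)) u t ∧
        (∀ e, c e ≠ 0 → e ∈ O ∧ Reach O u (eS e)) ∧
        (∀ f : V, f.1 < x0 → ψ f = 0) ∧
        (∀ f : V, x1 ≤ f.1 → -(3 * a) ≤ f.2 → f.2 < 3 * a → ψ f = 1) ∧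
        (∀ e, RowOK (-(3 * a)) (3 * a) e → ψ (eS e) + ψ (eT e) = c (dE e)) := by
    rintro O x0 x1 ⟨u, t, h1, h2, h3, h4, h5⟩
    obtain ⟨c, hc, hb⟩ := exists_chain h5
    obtain ⟨ψ, p0, p1, hψ⟩ := exists_psi c (by omega) h1 h2 h3 h4 (fun e he => (hc e he).1.2) hb
    exact ⟨u, t, c, ψ, h1, h2, h3, h4, h5, fun e he => ⟨(hc e he).1.1,
      (hc e he).2.mono Set.inter_subset_left⟩, p0, p1, hψ⟩
  obtain ⟨uL, tL, cL, ψL, L1, L2, L3, L4, L5, L6, L7, L8, L9⟩ := hex O _ _ hL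
  obtain ⟨uR, tR, cR, ψR, R1, R2, R3, R4, R5, R6, R7, R8, R9⟩ := hex O _ _ hR
  obtain ⟨uB, tB, cB, ψB, B1, B2, B3, B4, B5, B6, B7, B8, B9⟩ := hex _ _ _ hB'
  obtain ⟨uT, tT, cT, ψT, T1, T2, T3, T4, T5, T6, T7, T8, T9⟩ := hex _ _ _ hT'
  have hmap : ∀ {x0 x1 y0 y1 : ℤ} {u v : V}, Reach (sw ⁻¹' O ∩ EB x0 x1 y0 y1) u v →
      Reach (O ∩ EB y0 y1 x0 x1) u.swap v.swap := by
    intro x0 x1 y0 y1 u v h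
    refine h.map Prod.swap sw (fun e => Or.inl (sw_ends e)) ?_
    rintro e ⟨he, heB⟩
    refine ⟨he, ?_⟩
    simp only [EB, Box, Set.mem_ofPred_eq, sw_ends, Prod.fst_swap, Prod.snd_swap] at heB ⊢; omega
  have hmap' : ∀ {u v : V}, Reach (sw ⁻¹' O) u v → Reach O u.swap v.swap := by
    intro u v h
    exact h.map Prod.swap sw (fun e => Or.inl (sw_ends e)) (fun e he => he)
  have B5' := hmap B5
  have T5' := hmap T5
  have hs : ∀ s : Set Ed, O ∩ s ⊆ O := fun s => Set.inter_subset_left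
  have cLB : Reach O uL uB.swap := by
    obtain ⟨z, z1, z2⟩ := cross (by omega) L1 L2 L3 L4 L5 (c := -(3 * a)) (d := -a) le_rfl (by omega)
      (p := uB.swap) (q := tB.swap) B1 B2 B3 B4 (by omega) (by omega) B5'
    exact (z2.mono (hs _)).trans (z1.mono (hs _)).symm
  have cRB : Reach O uR uB.swap := by
    obtain ⟨z, z1, z2⟩ := cross (by omega) R1 R2 R3 R4 R5 (c := -(3 * a)) (d := -a) le_rfl (by omega)
      (p := uB.swap) (q := tB.swap) B1 B2 B3 B4 (by omega) (by omega) B5'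
    exact (z2.mono (hs _)).trans (z1.mono (hs _)).symm
  have cLT : Reach O uL uT.swap := by
    obtain ⟨z, z1, z2⟩ := cross (by omega) L1 L2 L3 L4 L5 (c := a) (d := 3 * a) (by omega) (by omega)
      (p := uT.swap) (q := tT.swap) T1 T2 T3 T4 (by omega) (by omega) T5'
    exact (z2.mono (hs _)).trans (z1.mono (hs _)).symm
  set P : V → Prop := fun f => (-(3 * a) ≤ f.1 ∧ f.1 < 3 * a ∧ -(3 * a) ≤ f.2 ∧ f.2 < 3 * a) ∧
    ψL f = 1 ∧ ψR f = 0 ∧ ψB f.swap = 1 ∧ ψT f.swap = 0 with hP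
  set Z : Set Ed := {e | cL e ≠ 0 ∨ cR e ≠ 0 ∨ cB (sw e) ≠ 0 ∨ cT (sw e) ≠ 0} with hZ
  have hswS : ∀ e, (eS (sw e)).swap = eS e := by intro e; rw [(sw_ends e).1, Prod.swap_swap]
  have hZ1 : ∀ e ∈ Z, Reach O uL (eS e) ∧ e ∈ O := by
    rintro e (he | he | he | he)
    · exact ⟨(L6 e he).2, (L6 e he).1⟩
    · exact ⟨cLB.trans (cRB.symm.trans (R6 e he).2), (R6 e he).1⟩
    · have := hmap' (B6 _ he).2
      rw [hswS] at this
      exact ⟨cLB.trans this, by simpa [sw_sw] using (B6 _ he).1⟩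
    · have := hmap' (T6 _ he).2
      rw [hswS] at this
      exact ⟨cLT.trans this, by simpa [sw_sw] using (T6 _ he).1⟩
  refine ⟨P, Z, uL, ⟨by omega, by omega, by omega, by omega, by omega⟩, fun e he => ⟨(hZ1 e he).1, (hZ1 e he).1.trans (Reach.edge (hZ1 e he).2),
    (hZ1 e he).2⟩, ?_, fun f hf => hf.1, ?_⟩
  · intro f f1 f2 f3 f4
    refine ⟨⟨by omega, by omega, by omega, by omega⟩, L8 f (by omega) (by omega) (by omega),
      R7 f (by omega), B8 _ (by simp; omega) (by simp; omega) (by simp; omega),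
      T7 _ (by simp; omega)⟩
  · intro e he
    simp only [hZ, Set.mem_ofPred_eq, not_or, not_not] at he
    obtain ⟨z1, z2, z3, z4⟩ := he
    rw [← dE_sw] at z3 z4
    have kL : RowOK (-(3 * a)) (3 * a) e → ψL (eS e) = ψL (eT e) := fun h => psi_const L9 h z1
    have kR : RowOK (-(3 * a)) (3 * a) e → ψR (eS e) = ψR (eT e) := fun h => psi_const R9 h z2
    have kB : RowOK (-(3 * a)) (3 * a) (sw e) → ψB (eS e).swap = ψB (eT e).swap := fun h => by
      have := psi_const B9 h z3
      rwa [(sw_ends e).1, (sw_ends e).2] at this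
    have kT : RowOK (-(3 * a)) (3 * a) (sw e) → ψT (eS e).swap = ψT (eT e).swap := fun h => by
      have := psi_const T9 h z4
      rwa [(sw_ends e).1, (sw_ends e).2] at this
    clear z1 z2 z3 z4
    have h01 : (0 : ZMod 2) ≠ 1 := by decide
    have main : ∀ f f' : V, ((f = eS e ∧ f' = eT e) ∨ (f = eT e ∧ f' = eS e)) → P f → P f' := by
      rintro f f' hff ⟨⟨b1, b2, b3, b4⟩, b5, b6, b7, b8⟩
      have kk : (f.2 = f'.2 ∨ f.1 = f'.1) := by
        obtain ⟨x, y, b⟩ := e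
        cases b <;> rcases hff with ⟨rfl, rfl⟩ | ⟨rfl, rfl⟩ <;> simp
      have kL' : (-(3 * a) ≤ f'.2 ∧ f'.2 < 3 * a) → ψL f' = 1 ∧ ψR f' = 0 := by
        intro hh
        have hok : RowOK (-(3 * a)) (3 * a) e := by
          unfold RowOK
          rcases hff with ⟨rfl, rfl⟩ | ⟨rfl, rfl⟩ <;> omega
        have g1 := kL hok
        have g2 := kR hok
        rcases hff with ⟨rfl, rfl⟩ | ⟨rfl, rfl⟩
        · exact ⟨g1.symm.trans b5, g2.symm.trans b6⟩
        · exact ⟨g1.trans b5, g2.trans b6⟩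
      have kB' : (-(3 * a) ≤ f'.1 ∧ f'.1 < 3 * a) → ψB f'.swap = 1 ∧ ψT f'.swap = 0 := by
        intro hh
        have hok : RowOK (-(3 * a)) (3 * a) (sw e) := by
          unfold RowOK
          rw [(sw_ends e).1, (sw_ends e).2]
          simp only [Prod.snd_swap]
          rcases hff with ⟨rfl, rfl⟩ | ⟨rfl, rfl⟩ <;> omega
        have g1 := kB hok
        have g2 := kT hok
        rcases hff with ⟨rfl, rfl⟩ | ⟨rfl, rfl⟩
        · exact ⟨g1.symm.trans b7, g2.symm.trans b8⟩
        · exact ⟨g1.trans b7, g2.trans b8⟩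
      rcases kk with kk | kk
      · obtain ⟨j1, j2⟩ := kL' (by omega)
        have i1 : -(3 * a) ≤ f'.1 := by
          by_contra hcon
          rw [L7 f' (by omega)] at j1; exact h01 j1
        have i2 : f'.1 < 3 * a := by
          by_contra hcon
          rw [R8 f' (by omega) (by omega) (by omega)] at j2; exact h01 j2.symm
        obtain ⟨j3, j4⟩ := kB' ⟨i1, i2⟩
        exact ⟨⟨i1, i2, by omega, by omega⟩, j1, j2, j3, j4⟩
      · obtain ⟨j1, j2⟩ := kB' (by omega)
        have i1 : -(3 * a) ≤ f'.2 := by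
          by_contra hcon
          rw [B7 f'.swap (by simp; omega)] at j1; exact h01 j1
        have i2 : f'.2 < 3 * a := by
          by_contra hcon
          rw [T8 f'.swap (by simp; omega) (by simp; omega) (by simp; omega)] at j2
          exact h01 j2.symm
        obtain ⟨j3, j4⟩ := kL' ⟨i1, i2⟩
        exact ⟨⟨by omega, by omega, i1, i2⟩, j3, j4, j1, j2⟩
    exact ⟨main _ _ (Or.inl ⟨rfl, rfl⟩), main _ _ (Or.inr ⟨rfl, rfl⟩)⟩

/-- any nearest neighbour path from the origin to outside meets the circuit cluster -/
lemma circ_sep {O : Set Ed} {a : ℤ} (ha : 0 < a) (h : Circ O a) :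
    ∃ u0 : V, (u0.1 ≤ -a ∧ u0 ∈ Box (-(3 * a)) (3 * a) (-(3 * a)) (3 * a)) ∧ ∀ (r : V → V → Prop), (∀ x y, r x y → SqAdj x y) → ∀ q : V,
      Relation.ReflTransGen r (0, 0) q → q ∉ Box (-(3 * a)) (3 * a) (-(3 * a)) (3 * a) →
      ∃ z, Relation.ReflTransGen r (0, 0) z ∧ Reach O u0 z := by
  obtain ⟨P, Z, u0, hu0, hZ, hP0, hP1, hP2⟩ := circ_inside ha h
  refine ⟨u0, hu0, fun r hr q hq hqB => ?_⟩
  by_contra hcon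
  push Not at hcon
  have hfree : ∀ z, Relation.ReflTransGen r (0, 0) z → ∀ e ∈ Z, eS e ≠ z ∧ eT e ≠ z := by
    intro z hz e he
    constructor
    · rintro rfl; exact hcon _ hz (hZ e he).1
    · rintro rfl; exact hcon _ hz (hZ e he).2.1
  have hall : ∀ z, Relation.ReflTransGen r (0, 0) z → ∀ f, Around z f → P f := by
    intro z hz
    induction hz with
    | refl =>
      intro f hf
      simp only [Around] at hf
      exact hP0 f (by omega) (by omega) (by omega) (by omega)
    | @tail b d hb hd ih =>
      intro f hf
      obtain ⟨g, g1, g2⟩ := common_face' (hr _ _ hd)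
      exact around_const Set.univ P Z (fun e he _ _ => hP2 e he) d (hfree d (hb.tail hd)) g f g2 hf
        trivial trivial (ih g g1)
  have := hP1 _ (hall q hq q (by simp [Around]))
  exact hqB ⟨by omega, by omega, by omega, by omega⟩

/-- clusters do not cross dual circuits -/
lemma circ_dual {O : Set Ed} {a : ℤ} (ha : 0 < a) (h : Circ (dO O) a) {v w : V}
    (hv : v ∈ Box (-a + 1) a (-a + 1) a) (hvw : Reach O v w) :
    w ∈ Box (-(3 * a)) (3 * a) (-(3 * a)) (3 * a) := by
  obtain ⟨P, Z, u0, hu0, hZ, hP0, hP1, hP2⟩ := circ_inside ha h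
  simp only [Box, Set.mem_ofPred_eq] at hv
  have key : P (w.1 - 1, w.2 - 1) := by
    induction hvw with
    | refl => exact hP0 _ (by simp; omega) (by simp; omega) (by simp; omega) (by simp; omega)
    | tail _ hd ih =>
      obtain ⟨e, he, hed⟩ := hd
      have h2 := hP2 (tr (-1) (-1) e) (fun hz => by
        have := (hZ _ hz).2.2
        apply this
        obtain ⟨x, y, b⟩ := e
        cases b <;> simpa using he)
      rw [(tr_ends _ _ e).1, (tr_ends _ _ e).2] at h2
      rcases hed with ⟨rfl, rfl⟩ | ⟨rfl, rfl⟩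
      · exact h2.1 ih
      · exact h2.2 ih
  have := hP1 _ key
  simp only at this
  exact ⟨by omega, by omega, by omega, by omega⟩

end DaC

end

-- Part 4
section
open MeasureTheory ProbabilityTheory
namespace DaC

/-! ### Fair coin configurations -/

/-- the fair coin -/
noncomputable def coin : Measure Bool := (2⁻¹ : ENNReal) • Measure.count

lemma coin_singleton (b : Bool) : coin {b} = 2⁻¹ := by
  simp [coin]

instance : IsProbabilityMeasure coin := by
  constructor
  have h : (Set.univ : Set Bool) = {true} ∪ {false} := by ext b; cases b <;> simp
  rw [h, measure_union (by simp) (measurableSet_singleton _), coin_singleton, coin_singleton,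
    ENNReal.inv_two_add_inv_two]

/-- the law of critical bond percolation -/
noncomputable def mu : Measure (Ed → Bool) := Measure.infinitePi (fun _ => coin)

instance : IsProbabilityMeasure mu := by unfold mu; infer_instance

/-- the set of open edges -/
def op (ω : Ed → Bool) : Set Ed := {e | ω e = true}

/-- the event `s` depends on the coordinates in `S` only -/
def Dep (s : Set (Ed → Bool)) (S : Set Ed) : Prop :=
  ∀ ω ω' : Ed → Bool, (∀ e ∈ S, ω e = ω' e) → ω ∈ s → ω' ∈ s

lemma Dep.mono {s : Set (Ed → Bool)} {S S' : Set Ed} (h : Dep s S) (hS : S ⊆ S') : Dep s S' :=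
  fun ω ω' hw => h ω ω' (fun e he => hw e (hS he))

lemma Dep.compl {s : Set (Ed → Bool)} {S : Set Ed} (h : Dep s S) : Dep sᶜ S :=
  fun ω ω' hw hs hs' => hs (h ω' ω (fun e he => (hw e he).symm) hs')

lemma Dep.inter {s t : Set (Ed → Bool)} {S : Set Ed} (h : Dep s S) (h' : Dep t S) :
    Dep (s ∩ t) S := fun ω ω' hw hs => ⟨h ω ω' hw hs.1, h' ω ω' hw hs.2⟩

lemma Dep.eq_pre {s : Set (Ed → Bool)} {S : Finset Ed} (h : Dep s S) :
    s = S.restrict ⁻¹' (S.restrict '' s) := by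
  apply Set.Subset.antisymm (Set.subset_preimage_image _ _)
  rintro ω ⟨ω', h', hw⟩
  refine h ω' ω (fun e he => ?_) h'
  exact congrFun hw ⟨e, he⟩

lemma Dep.meas {s : Set (Ed → Bool)} {S : Set Ed} (h : Dep s S) (hS : S.Finite) :
    MeasurableSet s := by
  obtain ⟨S, rfl⟩ := hS.exists_finset_coe
  rw [h.eq_pre]
  exact (Finset.measurable_restrict S) (Set.toFinite _).measurableSet

lemma Dep.indep {s t : Set (Ed → Bool)} {S T : Set Ed} (hs : Dep s S) (ht : Dep t T)
    (hS : S.Finite) (hT : T.Finite) (hd : Disjoint S T) : mu (s ∩ t) = mu s * mu t := by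
  obtain ⟨S, rfl⟩ := hS.exists_finset_coe
  obtain ⟨T, rfl⟩ := hT.exists_finset_coe
  have h1 : iIndepFun (fun (i : Ed) (ω : Ed → Bool) => ω i) mu :=
    iIndepFun_infinitePi (X := fun _ b => b) (fun _ => measurable_id)
  have h2 := h1.indepFun_finset S T (by exact_mod_cast hd) (fun i => measurable_pi_apply i)
  have h3 := h2.measure_inter_preimage_eq_mul (S.restrict '' s) (T.restrict '' t)
    (Set.toFinite _).measurableSet (Set.toFinite _).measurableSet
  have e1 : (fun (a : Ed → Bool) (i : S) => a i) ⁻¹' (S.restrict '' s) = s := hs.eq_pre.symm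
  have e2 : (fun (a : Ed → Bool) (i : T) => a i) ⁻¹' (T.restrict '' t) = t := ht.eq_pre.symm
  rwa [e1, e2] at h3

/-- the configuration whose open edges are `A` -/
def cfgOf (S : Finset Ed) (A : Finset S) (i : S) : Bool := decide (i ∈ A)

open Classical in
lemma Dep.count {s : Set (Ed → Bool)} {S : Finset Ed} (h : Dep s S) :
    mu s = (Finset.univ.filter (fun A : Finset S => cfgOf S A ∈ S.restrict '' s)).card *
      (2⁻¹ : ENNReal) ^ S.card := by
  have hb : ∀ A B : Finset S, cfgOf S A = cfgOf S B → A = B := by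
    intro A B hAB
    ext i
    have := congrFun hAB i
    simpa [cfgOf] using this
  have h1 : mu s = (Measure.pi fun _ : S => coin) (S.restrict '' s) := by
    conv_lhs => rw [h.eq_pre]
    rw [← Measure.map_apply (Finset.measurable_restrict S) (Set.toFinite _).measurableSet, mu,
      Measure.infinitePi_map_restrict]
  have h2 : S.restrict '' s = ↑((Finset.univ.filter
      (fun A : Finset S => cfgOf S A ∈ S.restrict '' s)).image (cfgOf S)) := by
    ext f
    simp only [Finset.coe_image, Finset.coe_filter, Finset.mem_univ, true_and]
    constructor
    · intro hf
      have : cfgOf S (Finset.univ.filter (fun i => f i = true)) = f := by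
        ext i; simp [cfgOf]
      exact ⟨_, by simpa only [Set.mem_ofPred_eq, this] using hf, this⟩
    · rintro ⟨A, hA, rfl⟩
      exact hA
  rw [h1]
  conv_lhs => rw [h2]
  rw [← sum_measure_singleton, Finset.sum_image (fun A _ B _ h => hb A B h)]
  rw [Finset.sum_congr rfl (g := fun _ => (2⁻¹ : ENNReal) ^ S.card)]
  · simp
  · intro A _
    rw [Measure.pi_singleton]
    simp [coin_singleton]

open Classical in
/-- Harris' inequality -/
lemma harris {s t : Set (Ed → Bool)} {S : Set Ed} (hS : S.Finite) (hs : Dep s S) (ht : Dep t S)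
    (us : IsUpperSet s) (ut : IsUpperSet t) : mu s * mu t ≤ mu (s ∩ t) := by
  obtain ⟨S, rfl⟩ := hS.exists_finset_coe
  rw [hs.count, ht.count, (hs.inter ht).count]
  have hup : ∀ r : Set (Ed → Bool), Dep r S → IsUpperSet r →
      IsUpperSet (↑(Finset.univ.filter (fun A : Finset S => cfgOf S A ∈ S.restrict '' r)) :
        Set (Finset S)) := by
    intro r hr ur A B hAB hA
    simp only [Finset.coe_filter, Finset.mem_univ, true_and, Set.mem_ofPred_eq] at hA ⊢
    obtain ⟨ω, hω, hA⟩ := hA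
    refine ⟨fun e => if h : e ∈ S then cfgOf S B ⟨e, h⟩ else ω e, ?_, ?_⟩
    · refine ur ?_ hω
      intro e
      by_cases he : e ∈ S
      · simp only [he, dif_pos]
        have : ω e = cfgOf S A ⟨e, he⟩ := congrFun hA ⟨e, he⟩
        rw [this]
        simp only [cfgOf]
        by_cases hm : (⟨e, he⟩ : S) ∈ A
        · simp [hm, hAB hm]
        · simp [hm]
      · simp [he]
    · ext i
      simp [Finset.restrict]
  have key := IsUpperSet.le_card_inter_finset (hup s hs us) (hup t ht ut)
  have hsub : (Finset.univ.filter (fun A : Finset S => cfgOf S A ∈ S.restrict '' s)) ∩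
      (Finset.univ.filter (fun A : Finset S => cfgOf S A ∈ S.restrict '' t)) =
      (Finset.univ.filter (fun A : Finset S => cfgOf S A ∈ S.restrict '' (s ∩ t))) := by
    ext A
    simp only [Finset.mem_inter, Finset.mem_filter, Finset.mem_univ, true_and]
    constructor
    · rintro ⟨⟨ω, hω, h1⟩, h2⟩
      refine ⟨ω, ⟨hω, ?_⟩, h1⟩
      rw [← h1] at h2
      rw [ht.eq_pre]; exact h2
    · rintro ⟨ω, hω, h1⟩
      exact ⟨⟨ω, hω.1, h1⟩, ⟨ω, hω.2, h1⟩⟩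
  rw [hsub] at key
  simp only [Fintype.card_coe] at key
  generalize (Finset.univ.filter (fun A : Finset S => cfgOf S A ∈ S.restrict '' s)).card = a at *
  generalize (Finset.univ.filter (fun A : Finset S => cfgOf S A ∈ S.restrict '' t)).card = b at *
  generalize (Finset.univ.filter
    (fun A : Finset S => cfgOf S A ∈ S.restrict '' (s ∩ t))).card = c at *
  have key' : (a : ENNReal) * b ≤ 2 ^ S.card * c := by exact_mod_cast key
  calc (a : ENNReal) * 2⁻¹ ^ S.card * (b * 2⁻¹ ^ S.card)
      = (a * b) * (2⁻¹ ^ S.card * 2⁻¹ ^ S.card) := by ring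
    _ ≤ (2 ^ S.card * c) * (2⁻¹ ^ S.card * 2⁻¹ ^ S.card) := by gcongr
    _ = c * 2⁻¹ ^ S.card * (2 * 2⁻¹) ^ S.card := by rw [mul_pow]; ring
    _ = c * 2⁻¹ ^ S.card := by
      rw [ENNReal.mul_inv_cancel (by norm_num) (by norm_num)]; simp

lemma mu_perm {σ : Ed → Ed} (hσ : Function.Injective σ) :
    mu.map (fun ω i => ω (σ i)) = mu := by
  have h1 : iIndepFun (fun (i : Ed) (ω : Ed → Bool) => ω i) mu :=
    iIndepFun_infinitePi (X := fun _ b => b) (fun _ => measurable_id)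
  have h2 := (h1.precomp hσ).map_fun_eq_infinitePi_map (fun i => measurable_pi_apply _)
  have h3 : ∀ i, mu.map (fun ω => ω (σ i)) = coin := fun i =>
    Measure.infinitePi_map_eval (fun _ : Ed => coin) (σ i)
  simp only [h3] at h2
  exact h2

lemma coin_neg : coin.map (fun b => !b) = coin := by
  refine Measure.ext_of_singleton fun b => ?_
  rw [Measure.map_apply (measurable_of_countable _) (measurableSet_singleton _), coin_singleton]
  have : (fun b : Bool => !b) ⁻¹' {b} = {!b} := by
    ext c; cases b <;> cases c <;> simp
  rw [this, coin_singleton]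

lemma mu_neg : mu.map (fun ω i => !(ω i)) = mu := by
  have := Measure.infinitePi_map_pi (fun _ : Ed => coin) (f := fun _ b => !b)
    (fun _ => measurable_of_countable _)
  simp only [coin_neg] at this
  exact this

/-- the dual configuration -/
def du (ω : Ed → Bool) : Ed → Bool := fun e => !(ω (dE e))

lemma op_du (ω : Ed → Bool) : op (du ω) = dO (op ω) := by
  ext e; simp [op, du, dO]

lemma measurable_du : Measurable du :=
  measurable_pi_iff.2 fun _ => (measurable_of_countable _).comp (measurable_pi_apply _)

lemma mu_du : mu.map du = mu := by
  have h : du = (fun ω i => !(ω i)) ∘ (fun (ω : Ed → Bool) i => ω (dE i)) := rfl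
  rw [h, ← Measure.map_map, mu_perm dE_inj, mu_neg]
  · exact measurable_pi_iff.2 fun i =>
      (measurable_of_countable (fun b : Bool => !b)).comp (measurable_pi_apply i)
  · exact measurable_pi_iff.2 fun _ => measurable_pi_apply _

lemma mu_pre_du {s : Set (Ed → Bool)} (hs : MeasurableSet s) : mu (du ⁻¹' s) = mu s := by
  conv_rhs => rw [← mu_du]
  rw [Measure.map_apply measurable_du hs]

lemma mu_pre_perm {σ : Ed → Ed} (hσ : Function.Injective σ) {s : Set (Ed → Bool)}
    (hs : MeasurableSet s) : mu {ω | (fun i => ω (σ i)) ∈ s} = mu s := by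
  conv_rhs => rw [← mu_perm hσ]
  rw [Measure.map_apply (measurable_pi_iff.2 fun _ => measurable_pi_apply _) hs]
  rfl

lemma op_perm (ω : Ed → Bool) (σ : Ed → Ed) : op (fun i => ω (σ i)) = σ ⁻¹' op ω := rfl

lemma op_mono {ω ω' : Ed → Bool} (h : ω ≤ ω') : op ω ⊆ op ω' := by
  intro e he
  have := h e
  simp only [op, Set.mem_ofPred_eq] at he ⊢
  rw [he] at this
  exact Bool.eq_true_of_true_le this

/-- event given by a property of the set of open edges -/
def ev (Q : Set Ed → Prop) : Set (Ed → Bool) := {ω | Q (op ω)}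

lemma dep_ev {Q : Set Ed → Prop} {S : Set Ed} (h : ∀ O O' : Set Ed, O ∩ S = O' ∩ S → Q O → Q O') :
    Dep (ev Q) S := by
  intro ω ω' hw hQ
  refine h (op ω) (op ω') ?_ hQ
  ext e
  simp only [Set.mem_inter_iff, op, Set.mem_ofPred_eq]
  constructor
  · rintro ⟨h1, h2⟩; exact ⟨by rw [← hw e h2]; exact h1, h2⟩
  · rintro ⟨h1, h2⟩; exact ⟨by rw [hw e h2]; exact h1, h2⟩

lemma upper_ev {Q : Set Ed → Prop} (h : ∀ O O' : Set Ed, O ⊆ O' → Q O → Q O') :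
    IsUpperSet (ev Q) := fun _ _ hw hQ => h _ _ (op_mono hw) hQ

end DaC

end

-- Part 5
section
open MeasureTheory ProbabilityTheory
namespace DaC

/-! ### Crossing probabilities -/

lemma EB_finite (x0 x1 y0 y1 : ℤ) : (EB x0 x1 y0 y1).Finite := by
  refine ((Set.finite_Icc x0 x1).prod ((Set.finite_Icc y0 y1).prod
    (Set.finite_univ (α := Bool)))).subset ?_
  rintro ⟨x, y, b⟩ ⟨⟨h1, h2, h3, h4⟩, _⟩
  exact ⟨⟨h1, h2⟩, ⟨h3, h4⟩, trivial⟩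

lemma Box_finite (x0 x1 y0 y1 : ℤ) : (Box x0 x1 y0 y1).Finite := by
  refine ((Set.finite_Icc x0 x1).prod (Set.finite_Icc y0 y1)).subset ?_
  rintro ⟨x, y⟩ ⟨h1, h2, h3, h4⟩
  exact ⟨⟨h1, h2⟩, ⟨h3, h4⟩⟩

/-- increasing event depending on finitely many edges -/
def FI (s : Set (Ed → Bool)) : Prop := IsUpperSet s ∧ ∃ S : Set Ed, S.Finite ∧ Dep s S

lemma FI.meas {s : Set (Ed → Bool)} (h : FI s) : MeasurableSet s := by
  obtain ⟨_, S, hS, hd⟩ := h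
  exact hd.meas hS

lemma FI.inter {s t : Set (Ed → Bool)} (h : FI s) (h' : FI t) : FI (s ∩ t) := by
  obtain ⟨u, S, hS, hd⟩ := h
  obtain ⟨u', S', hS', hd'⟩ := h'
  exact ⟨u.inter u', S ∪ S', hS.union hS', (hd.mono Set.subset_union_left).inter
    (hd'.mono Set.subset_union_right)⟩

lemma FI.harris {s t : Set (Ed → Bool)} (h : FI s) (h' : FI t) : mu s * mu t ≤ mu (s ∩ t) := by
  obtain ⟨u, S, hS, hd⟩ := h
  obtain ⟨u', S', hS', hd'⟩ := h'
  exact DaC.harris (hS.union hS') (hd.mono Set.subset_union_left)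
    (hd'.mono Set.subset_union_right) u u'

lemma FI.perm {s : Set (Ed → Bool)} (h : FI s) (σ : Ed → Ed) : FI {ω | (fun i => ω (σ i)) ∈ s} := by
  obtain ⟨u, S, hS, hd⟩ := h
  refine ⟨fun ω ω' hw hs => u (fun i => hw (σ i)) hs, σ '' S, hS.image _, ?_⟩
  intro ω ω' hw hs
  exact hd _ _ (fun e he => hw _ (Set.mem_image_of_mem _ he)) hs

/-- horizontal crossing event -/
def hE (x0 x1 y0 y1 : ℤ) : Set (Ed → Bool) := ev (fun O => HC O x0 x1 y0 y1)
/-- vertical crossing event -/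
def vE (x0 x1 y0 y1 : ℤ) : Set (Ed → Bool) := ev (fun O => VC O x0 x1 y0 y1)
/-- the event `XC` -/
def xE (n m : ℤ) : Set (Ed → Bool) := ev (fun O => XC O n m)

lemma dep_hE (x0 x1 y0 y1 : ℤ) : Dep (hE x0 x1 y0 y1) (EB x0 x1 y0 y1) := by
  refine dep_ev fun O O' h hQ => ?_
  unfold HC at *
  rwa [← h]

lemma dep_vE (x0 x1 y0 y1 : ℤ) : Dep (vE x0 x1 y0 y1) (EB x0 x1 y0 y1) := by
  refine dep_ev fun O O' h hQ => ?_
  unfold VC at *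
  rwa [← h]

lemma fi_hE (x0 x1 y0 y1 : ℤ) : FI (hE x0 x1 y0 y1) :=
  ⟨upper_ev fun _ _ h hq => hq.mono h, _, EB_finite _ _ _ _, dep_hE _ _ _ _⟩

lemma fi_vE (x0 x1 y0 y1 : ℤ) : FI (vE x0 x1 y0 y1) :=
  ⟨upper_ev fun _ _ h hq => hq.mono h, _, EB_finite _ _ _ _, dep_vE _ _ _ _⟩

lemma fi_xE {n m : ℤ} (hn : 0 ≤ n) (hm : n ≤ m) : FI (xE n m) := by
  refine ⟨upper_ev fun _ _ h hq => hq.mono h, EB 0 m 0 (2 * n), EB_finite _ _ _ _, ?_⟩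
  refine dep_ev fun O O' h hQ => ?_
  have hsub : EB 0 n 0 n ⊆ EB 0 m 0 (2 * n) := EB_mono le_rfl hm le_rfl (by omega)
  have h2 : O ∩ EB 0 n 0 n = O' ∩ EB 0 n 0 n := by
    rw [← Set.inter_eq_right.2 hsub, ← Set.inter_assoc, h, Set.inter_assoc]
  unfold XC at *
  rwa [← h, ← h2]

lemma hE_tr (k l x0 x1 y0 y1 : ℤ) :
    mu (hE x0 x1 y0 y1) ≤ mu (hE (x0 + k) (x1 + k) (y0 + l) (y1 + l)) := by
  rw [← mu_pre_perm (tr_inj k l) (fi_hE _ _ _ _).meas]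
  exact measure_mono fun ω hω => HC_tr (O := op ω) k l hω

lemma hE_sw (x0 x1 y0 y1 : ℤ) : mu (hE x0 x1 y0 y1) ≤ mu (vE y0 y1 x0 x1) := by
  rw [← mu_pre_perm sw_inj (fi_hE _ _ _ _).meas]
  exact measure_mono fun ω hω => HC_sw (O := op ω) hω

lemma vE_sw (x0 x1 y0 y1 : ℤ) : mu (vE x0 x1 y0 y1) ≤ mu (hE y0 y1 x0 x1) := by
  rw [← mu_pre_perm sw_inj (fi_vE _ _ _ _).meas]
  exact measure_mono fun ω hω => VC_sw (O := op ω) hω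

lemma half_hE {n : ℤ} (hn : 1 ≤ n) : 2⁻¹ ≤ mu (hE 0 n 0 n) := by
  have h1 : (1 : ENNReal) ≤ mu (vE 1 n 0 n) + mu (hE 0 n 0 (n - 1)) := by
    rw [← mu_pre_du (fi_hE _ _ _ _).meas, ← measure_univ (μ := mu)]
    refine le_trans (measure_mono ?_) (measure_union_le _ _)
    intro ω _
    rcases vc_or_dual (op ω) hn (by omega : (0 : ℤ) < n) with h | h
    · exact Or.inl h
    · right
      have : HC (op (du ω)) 0 n 0 (n - 1) := by
        rw [op_du]; simpa using h
      exact this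
  have h2 : mu (vE 1 n 0 n) ≤ mu (hE 0 n 0 (n - 1)) := by
    refine (vE_sw _ _ _ _).trans ((hE_tr 0 (-1) _ _ _ _).trans (le_of_eq ?_))
    congr 2 <;> ring
  have h3 : mu (hE 0 n 0 (n - 1)) ≤ mu (hE 0 n 0 n) :=
    measure_mono fun ω hω => HC.shrink (by omega) le_rfl le_rfl (by omega) hω
  have h4 : (1 : ENNReal) ≤ 2 * mu (hE 0 n 0 n) := by
    rw [two_mul]; exact h1.trans (add_le_add (h2.trans h3) h3)
  rw [ENNReal.inv_le_iff_le_mul] <;> simp [h4]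

lemma half_vE {n : ℤ} (hn : 1 ≤ n) (k : ℤ) : 2⁻¹ ≤ mu (vE k (k + n) 0 n) := by
  refine (half_hE hn).trans (le_trans ((hE_tr 0 k _ _ _ _).trans (le_of_eq ?_)) (hE_sw _ _ _ _))
  congr 2 <;> ring

lemma tt_dep (a : Set V) (n m : ℤ) : Dep (ev (fun O => TT a O n m))
    {e | e ∈ EB 0 m 0 (2 * n) ∧ (¬ Inc a (eS e) ∨ ¬ Inc a (eT e))} := by
  refine dep_ev fun O O' h hQ => ?_
  obtain ⟨v, w, h1, h2, h3⟩ := hQ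
  refine ⟨v, w, h1, h2, Relation.ReflTransGen.mono ?_ _ _ h3⟩
  rintro x y ⟨⟨e, ⟨he, heB⟩, hed⟩, k1, k2⟩
  refine ⟨⟨e, ⟨?_, heB⟩, hed⟩, k1, k2⟩
  have : e ∈ O ∩ {e | e ∈ EB 0 m 0 (2 * n) ∧ (¬ Inc a (eS e) ∨ ¬ Inc a (eT e))} := by
    refine ⟨he, heB, ?_⟩
    rcases hed with ⟨rfl, rfl⟩ | ⟨rfl, rfl⟩
    · exact Or.inr k1
    · exact Or.inl k1
  rw [h] at this
  exact this.1

lemma tt'_dep (a : Set V) (n m : ℤ) : Dep (ev (fun O => TT' a O n m)) (EB 0 m 0 (2 * n)) := by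
  refine dep_ev fun O O' h hQ => ?_
  unfold TT' RelT at *
  rwa [← h]

lemma la_dep (a : Set V) (n : ℤ) (hn : 0 ≤ n) : Dep (ev (fun O => LA O 0 n 0 n = a))
    {e' | ∃ e, e' = dE e ∧ e ∈ EB (0 - 1) n 0 (n - 1) ∧ (eS e ∈ a ∨ eT e ∈ a)} := by
  refine dep_ev fun O O' h hQ => ?_
  set D := {e' | ∃ e, e' = dE e ∧ e ∈ EB (0 - 1) n 0 (n - 1) ∧ (eS e ∈ a ∨ eT e ∈ a)} with hD
  have hiff : ∀ e, e ∈ EB (0 - 1) n 0 (n - 1) → (eS e ∈ a ∨ eT e ∈ a) → (dE e ∈ O ↔ dE e ∈ O') := by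
    intro e h1 h2
    have hm : dE e ∈ D := ⟨e, rfl, h1, h2⟩
    constructor
    · intro ho
      have : dE e ∈ O ∩ D := ⟨ho, hm⟩
      rw [h] at this; exact this.1
    · intro ho
      have : dE e ∈ O' ∩ D := ⟨ho, hm⟩
      rw [← h] at this; exact this.1
  apply Set.Subset.antisymm
  · rintro f ⟨u, u1, u2, u3, u4⟩
    induction u4 with
    | refl => rw [← hQ]; exact LA_col u1 u2 u3
    | @tail b d hb hd ih =>
      obtain ⟨e, ⟨he, heB⟩, hed⟩ := hd
      have hor : eS e ∈ a ∨ eT e ∈ a := by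
        rcases hed with ⟨rfl, rfl⟩ | ⟨rfl, rfl⟩
        · exact Or.inl ih
        · exact Or.inr ih
      have h1 : dE e ∉ O := fun ho => he ((hiff e heB hor).1 ho)
      have h2 := LA_step heB h1
      rw [hQ] at h2
      rcases hed with ⟨rfl, rfl⟩ | ⟨rfl, rfl⟩
      · exact h2.1 ih
      · exact h2.2 ih
  · intro f hf
    rw [← hQ] at hf
    obtain ⟨u, u1, u2, u3, u4⟩ := hf
    refine ⟨u, u1, u2, u3, ?_⟩
    have key : ∀ f, Reach (dO O ∩ EB (0 - 1) n 0 (n - 1)) u f →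
        f ∈ a ∧ Reach (dO O' ∩ EB (0 - 1) n 0 (n - 1)) u f := by
      intro f hf
      induction hf with
      | refl => exact ⟨by rw [← hQ]; exact LA_col u1 u2 u3, Reach.refl _ _⟩
      | @tail b d hb hd ih =>
        have hda : d ∈ a := by rw [← hQ]; exact ⟨u, u1, u2, u3, hb.tail hd⟩
        refine ⟨hda, ih.2.tail ?_⟩
        obtain ⟨e, ⟨he, heB⟩, hed⟩ := hd
        have hor : eS e ∈ a ∨ eT e ∈ a := by
          rcases hed with ⟨rfl, rfl⟩ | ⟨rfl, rfl⟩
          · exact Or.inl ih.1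
          · exact Or.inr ih.1
        exact ⟨e, ⟨fun ho => he ((hiff e heB hor).2 ho), heB⟩, hed⟩
    exact (key f u4).2

lemma tt_prob {a : Set V} {n : ℤ} (hn : 1 ≤ n)
    (ha : ∀ f : V, f.1 = -1 → 0 ≤ f.2 → f.2 ≤ n - 1 → f ∈ a) :
    2⁻¹ * 2⁻¹ ≤ mu (ev (fun O => TT a O n (2 * n))) := by
  have h1 := half_hE (n := 2 * n) (by omega)
  have h2 : mu (hE 0 (2 * n) 0 (2 * n)) ≤ mu (ev (fun O => TT a O n (2 * n))) +
      mu (ev (fun O => TT' a O n (2 * n))) := by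
    refine le_trans (measure_mono ?_) (measure_union_le _ _)
    intro ω hω
    exact tt_cover (by omega) ha hω
  have h3 : mu (ev (fun O => TT' a O n (2 * n))) ≤ mu (ev (fun O => TT a O n (2 * n))) := by
    rw [← mu_pre_perm (re_inj n) ((tt'_dep a n (2 * n)).meas (EB_finite _ _ _ _))]
    exact measure_mono fun ω hω => tt_of_tt' (O := op ω) hω
  have h4 : 2⁻¹ ≤ 2 * mu (ev (fun O => TT a O n (2 * n))) := by
    rw [two_mul]; exact h1.trans (h2.trans (by gcongr))
  calc (2⁻¹ : ENNReal) * 2⁻¹ ≤ 2⁻¹ * (2 * mu (ev (fun O => TT a O n (2 * n)))) := by gcongr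
    _ = mu (ev (fun O => TT a O n (2 * n))) := by
      rw [← mul_assoc, ENNReal.inv_mul_cancel (by norm_num) (by norm_num), one_mul]

lemma xE_prob {n : ℤ} (hn : 1 ≤ n) : 2⁻¹ * (2⁻¹ * 2⁻¹) ≤ mu (xE n (2 * n)) := by
  classical
  have hfin : {a : Set V | a ⊆ Box (0 - 1) n 0 (n - 1) ∧ ∀ f ∈ a, f.1 ≠ n}.Finite :=
    (Box_finite (0 - 1) n 0 (n - 1)).finite_subsets.subset (fun a ha => ha.1)
  set 𝒜 := hfin.toFinset with h𝒜
  set L : Set V → Set (Ed → Bool) := fun a => ev (fun O => LA O 0 n 0 n = a) with hL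
  set T : Set V → Set (Ed → Bool) := fun a => ev (fun O => TT a O n (2 * n)) with hT
  have hD1 : ∀ a : Set V, {e' | ∃ e, e' = dE e ∧ e ∈ EB (0 - 1) n 0 (n - 1) ∧
      (eS e ∈ a ∨ eT e ∈ a)}.Finite := fun a => by
    refine ((EB_finite (0 - 1) n 0 (n - 1)).image dE).subset ?_
    rintro _ ⟨e, rfl, h, _⟩
    exact ⟨e, h, rfl⟩
  have hD2 : ∀ a : Set V, {e | e ∈ EB 0 (2 * n) 0 (2 * n) ∧
      (¬ Inc a (eS e) ∨ ¬ Inc a (eT e))}.Finite := fun a =>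
    (EB_finite 0 (2 * n) 0 (2 * n)).subset fun e he => he.1
  have hLm : ∀ a, MeasurableSet (L a) := fun a => (la_dep a n (by omega)).meas (hD1 a)
  have hTm : ∀ a, MeasurableSet (T a) := fun a => (tt_dep a n (2 * n)).meas (hD2 a)
  have hind : ∀ a, mu (L a ∩ T a) = mu (L a) * mu (T a) := fun a => by
    refine (la_dep a n (by omega)).indep (tt_dep a n (2 * n)) (hD1 a) (hD2 a) ?_
    rw [Set.disjoint_left]
    rintro _ ⟨e, rfl, _, h⟩ ⟨_, h'⟩
    obtain ⟨a1, a2, a3, a4⟩ := around_dE e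
    rcases h with h | h <;> rcases h' with h' | h'
    · exact h' ⟨_, h, a1⟩
    · exact h' ⟨_, h, a3⟩
    · exact h' ⟨_, h, a2⟩
    · exact h' ⟨_, h, a4⟩
  have hdisj : Set.PairwiseDisjoint (↑𝒜 : Set (Set V)) L := by
    intro a _ b _ hab
    rw [Function.onFun, Set.disjoint_left]
    intro ω h1 h2
    exact hab (h1.symm.trans h2)
  have hG : 2⁻¹ ≤ ∑ a ∈ 𝒜, mu (L a) := by
    rw [← measure_biUnion_finset hdisj (fun a _ => hLm a)]
    have := half_vE hn 0
    rw [zero_add] at this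
    refine this.trans (measure_mono ?_)
    intro ω hω
    refine Set.mem_biUnion (x := LA (op ω) 0 n 0 n) ?_ rfl
    rw [h𝒜, hfin.coe_toFinset]
    exact ⟨fun f hf => LA_box (by omega) hf, good_of_vc (by omega) (by omega) hω⟩
  calc 2⁻¹ * (2⁻¹ * 2⁻¹) ≤ (∑ a ∈ 𝒜, mu (L a)) * (2⁻¹ * 2⁻¹) := by gcongr
    _ = ∑ a ∈ 𝒜, mu (L a) * (2⁻¹ * 2⁻¹) := by rw [Finset.sum_mul]
    _ ≤ ∑ a ∈ 𝒜, mu (L a ∩ T a) := by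
      refine Finset.sum_le_sum fun a _ => ?_
      rw [hind]
      by_cases hne : (L a).Nonempty
      · gcongr
        obtain ⟨ω, hω⟩ := hne
        refine tt_prob hn ?_
        intro f f1 f2 f3
        rw [← (show LA (op ω) 0 n 0 n = a from hω)]
        exact LA_col (by omega) f2 f3
      · rw [Set.not_nonempty_iff_eq_empty.1 hne]; simp
    _ = mu (⋃ a ∈ 𝒜, L a ∩ T a) := by
      rw [measure_biUnion_finset _ (fun a _ => (hLm a).inter (hTm a))]
      intro a ha b hb hab
      exact (hdisj ha hb hab).mono Set.inter_subset_left Set.inter_subset_left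
    _ ≤ mu (xE n (2 * n)) := by
      refine measure_mono ?_
      intro ω hω
      simp only [Set.mem_iUnion, exists_prop] at hω
      obtain ⟨a, ha, h1, h2⟩ := hω
      rw [h𝒜, hfin.mem_toFinset] at ha
      have h1' : LA (op ω) 0 n 0 n = a := h1
      refine xc_of_tt (by omega) (by omega) ?_ ?_
      · rw [h1']; exact ha.2
      · rw [h1']; exact h2

lemma rsw : ∃ c : ENNReal, 0 < c ∧ ∀ n : ℤ, 1 ≤ n → c ≤ mu (hE 0 (6 * n) 0 (2 * n)) := by
  set c1 : ENNReal := (2⁻¹ * (2⁻¹ * 2⁻¹)) * (2⁻¹ * (2⁻¹ * 2⁻¹)) * 2⁻¹ with hc1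
  set c2 : ENNReal := c1 * 2⁻¹ * c1 with hc2
  set c3 : ENNReal := c2 * 2⁻¹ * c2 with hc3
  have h2 : (0 : ENNReal) < 2⁻¹ := by simp
  have p1 : 0 < c1 := ENNReal.mul_pos (ENNReal.mul_pos (by positivity) (by positivity)).ne' h2.ne'
  have p2 : 0 < c2 := ENNReal.mul_pos (ENNReal.mul_pos p1.ne' h2.ne').ne' p1.ne'
  have p3 : 0 < c3 := ENNReal.mul_pos (ENNReal.mul_pos p2.ne' h2.ne').ne' p2.ne'
  refine ⟨c3, p3, fun n hn => ?_⟩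
  have hx := fi_xE (n := n) (m := 2 * n) (by omega) (by omega)
  have hx' := hx.perm (rx n)
  have s1 : ∀ k : ℤ, c1 ≤ mu (hE k (k + 3 * n) 0 (2 * n)) := by
    intro k
    have : c1 ≤ mu (hE (-n) (2 * n) 0 (2 * n)) := by
      calc c1 ≤ mu (xE n (2 * n)) * mu {ω | (fun i => ω (rx n i)) ∈ xE n (2 * n)} * mu (hE 0 n 0 n) := by
            rw [mu_pre_perm (rx_inj n) hx.meas, hc1]
            gcongr
            · exact xE_prob hn
            · exact xE_prob hn
            · exact half_hE hn
        _ ≤ mu (xE n (2 * n) ∩ {ω | (fun i => ω (rx n i)) ∈ xE n (2 * n)}) * mu (hE 0 n 0 n) := by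
            gcongr
            exact hx.harris hx'
        _ ≤ mu (xE n (2 * n) ∩ {ω | (fun i => ω (rx n i)) ∈ xE n (2 * n)} ∩ hE 0 n 0 n) :=
            (hx.inter hx').harris (fi_hE _ _ _ _)
        _ ≤ mu (hE (-n) (2 * n) 0 (2 * n)) := by
            refine measure_mono ?_
            rintro ω ⟨⟨h1, h2⟩, h3⟩
            exact glueX (by omega) h1 h2 h3
    refine this.trans ((hE_tr (k + n) 0 _ _ _ _).trans (le_of_eq ?_))
    congr 2 <;> ring
  have s : ∀ (b d e f : ℤ) (c : ENNReal), 0 ≤ e → e + 2 * n = b → b ≤ f →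
      c ≤ mu (hE 0 b 0 (2 * n)) → c ≤ mu (hE e f 0 (2 * n)) →
      c * 2⁻¹ * c ≤ mu (hE 0 f 0 (2 * n)) := by
    intro b d e f c h1 h2 h3 h4 h5
    calc c * 2⁻¹ * c ≤ mu (hE 0 b 0 (2 * n)) * mu (vE e (e + 2 * n) 0 (2 * n)) *
          mu (hE e f 0 (2 * n)) := by
          gcongr
          exact half_vE (by omega) _
      _ ≤ mu (hE 0 b 0 (2 * n) ∩ vE e (e + 2 * n) 0 (2 * n)) * mu (hE e f 0 (2 * n)) := by
          gcongr
          exact (fi_hE _ _ _ _).harris (fi_vE _ _ _ _)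
      _ ≤ mu (hE 0 b 0 (2 * n) ∩ vE e (e + 2 * n) 0 (2 * n) ∩ hE e f 0 (2 * n)) :=
          ((fi_hE _ _ _ _).inter (fi_vE _ _ _ _)).harris (fi_hE _ _ _ _)
      _ ≤ mu (hE 0 f 0 (2 * n)) := by
          refine measure_mono ?_
          rintro ω ⟨⟨k1, k2⟩, k3⟩
          exact glue (by omega) h1 le_rfl (by omega) h3 k1 k2 k3
  have s2 : c2 ≤ mu (hE 0 (4 * n) 0 (2 * n)) := by
    refine s (3 * n) 0 n (4 * n) c1 (by omega) (by omega) (by omega) ?_ ?_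
    · simpa using s1 0
    · have := s1 n
      rwa [(by ring : n + 3 * n = 4 * n)] at this
  refine s (4 * n) 0 (2 * n) (6 * n) c2 (by omega) (by omega) (by omega) s2 ?_
  refine s2.trans ((hE_tr (2 * n) 0 _ _ _ _).trans (le_of_eq ?_))
  congr 2 <;> ring

/-- circuit event -/
def cE (a : ℤ) : Set (Ed → Bool) := ev (fun O => Circ O a)

lemma cE_eq (a : ℤ) : cE a = hE (-(3 * a)) (3 * a) (-(3 * a)) (-a) ∩ (hE (-(3 * a)) (3 * a) a (3 * a) ∩
    (vE (-(3 * a)) (-a) (-(3 * a)) (3 * a) ∩ vE a (3 * a) (-(3 * a)) (3 * a))) := rfl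

lemma fi_cE (a : ℤ) : FI (cE a) := by
  rw [cE_eq]
  exact (fi_hE _ _ _ _).inter ((fi_hE _ _ _ _).inter ((fi_vE _ _ _ _).inter (fi_vE _ _ _ _)))

lemma cE_prob : ∃ c : ENNReal, 0 < c ∧ ∀ n : ℤ, 1 ≤ n → c ≤ mu (cE n) := by
  obtain ⟨c, hc, h⟩ := rsw
  refine ⟨c * (c * (c * c)), ENNReal.mul_pos hc.ne' (ENNReal.mul_pos hc.ne'
    (ENNReal.mul_pos hc.ne' hc.ne').ne').ne', fun n hn => ?_⟩
  have hh : ∀ l : ℤ, c ≤ mu (hE (-(3 * n)) (3 * n) l (l + 2 * n)) := by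
    intro l
    refine (h n hn).trans ((hE_tr (-(3 * n)) l _ _ _ _).trans (le_of_eq ?_))
    congr 2 <;> ring
  have hv : ∀ l : ℤ, c ≤ mu (vE l (l + 2 * n) (-(3 * n)) (3 * n)) := fun l =>
    (hh l).trans (hE_sw _ _ _ _)
  have h1 := hh (-(3 * n))
  have h2 := hh n
  have h3 := hv (-(3 * n))
  have h4 := hv n
  rw [(by ring : -(3 * n) + 2 * n = -n)] at h1 h3
  rw [(by ring : n + 2 * n = 3 * n)] at h2 h4
  rw [cE_eq]
  refine le_trans ?_ ((fi_hE _ _ _ _).harris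
    ((fi_hE _ _ _ _).inter ((fi_vE _ _ _ _).inter (fi_vE _ _ _ _))))
  gcongr
  refine le_trans ?_ ((fi_hE _ _ _ _).harris ((fi_vE _ _ _ _).inter (fi_vE _ _ _ _)))
  gcongr
  refine le_trans ?_ ((fi_vE _ _ _ _).harris (fi_vE _ _ _ _))
  gcongr

end DaC

end

-- Part 6
section
open MeasureTheory ProbabilityTheory
namespace DaC

/-! ### Circuits at infinitely many scales -/

/-- the annulus of edges on which the circuit event depends -/
def An (a : ℤ) : Set Ed := {e | -(3 * a) ≤ e.1 ∧ e.1 ≤ 3 * a ∧ -(3 * a) ≤ e.2.1 ∧ e.2.1 ≤ 3 * a ∧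
  ¬ (-a < e.1 ∧ e.1 < a ∧ -a < e.2.1 ∧ e.2.1 < a)}

lemma An_finite (a : ℤ) : (An a).Finite := by
  have h : An a ⊆ (Set.Icc (-(3 * a)) (3 * a)) ×ˢ ((Set.Icc (-(3 * a)) (3 * a)) ×ˢ Set.univ) := by
    rintro e ⟨h1, h2, h3, h4, _⟩
    exact ⟨⟨h1, h2⟩, ⟨h3, h4⟩, trivial⟩
  exact Set.Finite.subset ((Set.finite_Icc _ _).prod ((Set.finite_Icc _ _).prod Set.finite_univ)) h

lemma dep_cE {a : ℤ} (ha : 0 < a) : Dep (cE a) (An a) := by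
  have hsub : ∀ x0 x1 y0 y1 : ℤ, (-(3 * a) ≤ x0 ∧ x1 ≤ 3 * a ∧ -(3 * a) ≤ y0 ∧ y1 ≤ 3 * a) →
      (x1 ≤ -a ∨ a ≤ x0 ∨ y1 ≤ -a ∨ a ≤ y0) → EB x0 x1 y0 y1 ⊆ An a := by
    rintro x0 x1 y0 y1 h1 h2 ⟨x, y, b⟩ ⟨h3, _⟩
    simp only [Box, eS_mk, Set.mem_ofPred_eq] at h3
    simp only [An, Set.mem_ofPred_eq]
    omega
  rw [cE_eq]
  refine ((dep_hE _ _ _ _).mono (hsub _ _ _ _ ?_ ?_)).inter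
    (((dep_hE _ _ _ _).mono (hsub _ _ _ _ ?_ ?_)).inter
    (((dep_vE _ _ _ _).mono (hsub _ _ _ _ ?_ ?_)).inter
    ((dep_vE _ _ _ _).mono (hsub _ _ _ _ ?_ ?_)))) <;> omega

lemma An_disj {a b : ℤ} (h : 3 * a < b) : Disjoint (An a) (An b) := by
  rw [Set.disjoint_left]
  rintro ⟨x, y, c⟩ h1 h2
  simp only [An, Set.mem_ofPred_eq] at h1 h2
  omega

lemma pow_sep {i j : ℕ} (h : i < j) : 3 * (10 : ℤ) ^ i < 10 ^ j := by
  have h1 : (10 : ℤ) ^ (i + 1) ≤ 10 ^ j := pow_le_pow_right₀ (by norm_num) h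
  have h2 : (0 : ℤ) < 10 ^ i := by positivity
  rw [pow_succ] at h1; omega

lemma pow_pos10 (i : ℕ) : (0 : ℤ) < 10 ^ i := by positivity

lemma cE_indep : iIndepSet (fun j : ℕ => cE (10 ^ j)) mu := by
  rw [iIndepSet_iff_meas_biInter (fun j => (fi_cE _).meas)]
  intro s
  induction s using Finset.induction_on with
  | empty => simp
  | @insert j s hj ih =>
    rw [Finset.set_biInter_insert, Finset.prod_insert hj, ← ih]
    have hd : Dep (⋂ i ∈ s, cE (10 ^ i)) (⋃ i ∈ s, An (10 ^ i)) := by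
      intro ω ω' hw h
      simp only [Set.mem_iInter] at h ⊢
      intro i hi
      refine dep_cE (pow_pos10 i) ω ω' (fun e he => hw e ?_) (h i hi)
      simp only [Set.mem_iUnion]
      exact ⟨i, hi, he⟩
    refine (dep_cE (pow_pos10 j)).indep hd (An_finite _)
      (s.finite_toSet.biUnion fun i _ => An_finite _) ?_
    simp only [Set.disjoint_iUnion_right]
    intro i hi
    rcases lt_trichotomy i j with h | h | h
    · exact (An_disj (pow_sep h)).symm
    · exact absurd (h ▸ hi) hj
    · exact An_disj (pow_sep h)

lemma cE_io : ∀ᵐ ω ∂mu, ∃ᶠ j : ℕ in Filter.atTop, Circ (op ω) (10 ^ j) := by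
  obtain ⟨c, hc, h⟩ := cE_prob
  have h1 := measure_limsup_eq_one (fun j => (fi_cE _).meas) cE_indep (by
    refine top_le_iff.1 ?_
    rw [← ENNReal.tsum_const_eq_top_of_ne_zero (α := ℕ) hc.ne']
    exact ENNReal.tsum_le_tsum fun j => h _ (pow_pos10 j))
  have h2 : MeasurableSet (Filter.limsup (fun j : ℕ => cE (10 ^ j)) Filter.atTop) :=
    MeasurableSet.measurableSet_limsup fun j => (fi_cE _).meas
  have h3 : ∀ᵐ ω ∂mu, ω ∈ Filter.limsup (fun j : ℕ => cE (10 ^ j)) Filter.atTop :=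
    (prob_compl_eq_zero_iff h2).2 h1
  filter_upwards [h3] with ω hω
  rw [Filter.mem_limsup_iff_frequently_mem] at hω
  exact hω

lemma cE_io_dual : ∀ᵐ ω ∂mu, ∃ᶠ j : ℕ in Filter.atTop, Circ (dO (op ω)) (10 ^ j) := by
  have h := cE_io
  rw [← mu_du] at h
  have := ae_of_ae_map measurable_du.aemeasurable h
  filter_upwards [this] with ω hω
  rwa [op_du] at hω

/-- deterministic consequence : infinitely many clusters block the origin -/
lemma blockers {O : Set Ed} (h1 : ∃ᶠ j : ℕ in Filter.atTop, Circ O (10 ^ j))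
    (h2 : ∃ᶠ j : ℕ in Filter.atTop, Circ (dO O) (10 ^ j)) (rep : V → V)
    (hrep : ∀ u v, rep u = rep v → Reach O u v) (hrep' : ∀ u v, Reach O u v → rep u = rep v) :
    ∃ S : Set V, S.Infinite ∧ ∀ s ∈ S, ∀ r : V → V → Prop, (∀ x y, r x y → SqAdj x y) →
      {q | Relation.ReflTransGen r (0, 0) q}.Infinite →
      ∃ z, Relation.ReflTransGen r (0, 0) z ∧ rep z = s := by
  choose! u hu hu' using fun (j : ℕ) (h : Circ O (10 ^ j)) => circ_sep (pow_pos10 j) h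
  set I : Set ℕ := {j | Circ O (10 ^ j)} with hI
  have hIinf : I.Infinite := Nat.frequently_atTop_iff_infinite.1 h1
  refine ⟨(fun j => rep (u j)) '' I, ?_, ?_⟩
  · intro hfin
    have : ∃ s ∈ (fun j => rep (u j)) '' I, (I ∩ (fun j => rep (u j)) ⁻¹' {s}).Infinite := by
      by_contra hcon
      push Not at hcon
      apply hIinf
      refine (hfin.biUnion hcon).subset fun j hj => ?_
      simp only [Set.mem_iUnion]
      exact ⟨_, ⟨j, hj, rfl⟩, hj, rfl⟩
    obtain ⟨s, -, hs⟩ := this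
    obtain ⟨j, hj, hjs⟩ := hs.nonempty
    obtain ⟨k, hk, hkD⟩ := (Filter.frequently_atTop.1 h2) (j + 1)
    obtain ⟨l, ⟨hl, hls⟩, hlk⟩ := hs.exists_gt k
    simp only [Set.mem_preimage, Set.mem_singleton_iff] at hjs hls
    have hr := hrep (u j) (u l) (hjs.trans hls.symm)
    have b1 := hu j hj
    have b2 := hu l hl
    have p1 := pow_sep (show j < k by omega)
    have p2 := pow_sep hlk
    have := circ_dual (pow_pos10 k) hkD (v := u j) (by
      have := b1.2
      simp only [Box, Set.mem_ofPred_eq] at this ⊢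
      omega) hr
    simp only [Box, Set.mem_ofPred_eq] at this
    omega
  · rintro s ⟨j, hj, rfl⟩ r hr hinf
    obtain ⟨q, hq, hqB⟩ := hinf.exists_notMem_finite
      (Box_finite (-(3 * 10 ^ j)) (3 * 10 ^ j) (-(3 * 10 ^ j)) (3 * 10 ^ j))
    obtain ⟨z, hz, hz'⟩ := hu' j hj r hr q hq hqB
    exact ⟨z, hz, (hrep' _ _ hz').symm⟩

/-! ### One arm estimate -/

/-- the two point event -/
def cn (v w : V) : Set (Ed → Bool) := {ω | Reach (op ω) v w}

/-- reachability in `n` steps -/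
def stp (R : V → V → Prop) (u : V) : ℕ → V → Prop
  | 0, w => u = w
  | n + 1, w => ∃ t, stp R u n t ∧ R t w

lemma stp_iff (R : V → V → Prop) (u v : V) : Relation.ReflTransGen R u v ↔ ∃ n, stp R u n v := by
  constructor
  · intro h
    induction h with
    | refl => exact ⟨0, rfl⟩
    | tail _ hd ih =>
      obtain ⟨n, hn⟩ := ih
      exact ⟨n + 1, _, hn, hd⟩
  · rintro ⟨n, hn⟩
    induction n generalizing v with
    | zero => cases hn; exact Relation.ReflTransGen.refl
    | succ n ih =>
      obtain ⟨t, h1, h2⟩ := hn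
      exact (ih t h1).tail h2

lemma countable_reach_meas {Ω : Type*} [MeasurableSpace Ω] (R : Ω → V → V → Prop)
    (hR : ∀ u v, MeasurableSet {ω | R ω u v}) (u v : V) :
    MeasurableSet {ω | Relation.ReflTransGen (R ω) u v} := by
  have hn : ∀ (n : ℕ) (w : V), MeasurableSet {ω | stp (R ω) u n w} := by
    intro n
    induction n with
    | zero =>
      intro w
      simp only [stp]
      exact MeasurableSet.const _
    | succ n ih =>
      intro w
      have : {ω | stp (R ω) u (n + 1) w} =
        ⋃ t, ({ω | stp (R ω) u n t} ∩ {ω | R ω t w}) := by ext; simp [stp]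
      rw [this]
      exact MeasurableSet.iUnion fun t => (ih t).inter (hR t w)
  have : {ω | Relation.ReflTransGen (R ω) u v} = ⋃ n, {ω | stp (R ω) u n v} := by
    ext ω; simp [stp_iff]
  rw [this]
  exact MeasurableSet.iUnion fun n => hn n v

lemma adj_meas (u v : V) : MeasurableSet {ω : Ed → Bool | AdjE (op ω) u v} := by
  have : {ω : Ed → Bool | AdjE (op ω) u v} =
      ⋃ e : Ed, {ω | ω e = true} ∩ {_ω | (eS e = u ∧ eT e = v) ∨ (eS e = v ∧ eT e = u)} := by
    ext ω; simp [AdjE, op]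
  rw [this]
  refine MeasurableSet.iUnion fun e => MeasurableSet.inter ?_ (MeasurableSet.const _)
  exact (measurable_pi_apply e : Measurable fun ω : Ed → Bool => ω e) (measurableSet_singleton true)

lemma cn_meas (v w : V) : MeasurableSet (cn v w) := countable_reach_meas _ adj_meas v w

lemma cn_shift (k x y : ℤ) : mu (cn (0, k) (x, y)) ≤ mu (cn (0, 0) (x, y - k)) := by
  rw [← mu_pre_perm (tr_inj 0 (-k)) (cn_meas _ _)]
  refine measure_mono fun ω hω => ?_
  have h : Reach (tr 0 (-k) ⁻¹' op ω) (0, k) (x, y) := hω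
  have := h.map (O' := op ω) (fun v => (v.1 + 0, v.2 + -k)) (tr 0 (-k))
    (fun e => Or.inl (tr_ends _ _ e)) (fun e he => he)
  simpa [cn, sub_eq_add_neg] using this

lemma col_sum (n : ℕ) (hn : 1 ≤ n) :
    (2 * ((n : ENNReal) + 1))⁻¹ ≤ ∑' y : ℤ, mu (cn (0, 0) ((n : ℤ), y)) := by
  set f := ∑' y : ℤ, mu (cn (0, 0) ((n : ℤ), y)) with hf
  have h1 : (2⁻¹ : ENNReal) ≤ ((n : ENNReal) + 1) * f := by
    refine (half_hE (n := n) (by exact_mod_cast hn)).trans ?_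
    have hsub : hE 0 n 0 n ⊆ ⋃ k ∈ Finset.range (n + 1), ⋃ y : ℤ, cn (0, (k : ℤ)) ((n : ℤ), y) := by
      rintro ω ⟨u, t, e1, e2, e3, e4, h⟩
      simp only [Set.mem_iUnion, Finset.mem_range]
      refine ⟨u.2.toNat, by omega, t.2, ?_⟩
      have : u = (0, (u.2.toNat : ℤ)) := Prod.ext e1 (by simp [e3])
      have h' := h.mono Set.inter_subset_left
      rw [this, show t = ((n : ℤ), t.2) from Prod.ext e2 rfl] at h'
      exact h'
    refine (measure_mono hsub).trans ((measure_biUnion_finset_le _ _).trans ?_)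
    have h2 : ∀ k ∈ Finset.range (n + 1), mu (⋃ y : ℤ, cn (0, (k : ℤ)) ((n : ℤ), y)) ≤ f := by
      intro k _
      refine (measure_iUnion_le _).trans ((ENNReal.tsum_le_tsum fun y => cn_shift _ _ _).trans ?_)
      exact ENNReal.tsum_comp_le_tsum_of_injective (f := fun y : ℤ => y - k)
        (fun a b h => by simpa using h) (fun y => mu (cn (0, 0) ((n : ℤ), y)))
    refine (Finset.sum_le_sum h2).trans ?_
    simp
  rw [ENNReal.mul_inv (by simp) (by simp), mul_comm]
  have hne : (n : ENNReal) + 1 ≠ 0 := by simp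
  have hnt : (n : ENNReal) + 1 ≠ ⊤ := by finiteness
  calc ((n : ENNReal) + 1)⁻¹ * 2⁻¹ ≤ ((n : ENNReal) + 1)⁻¹ * (((n : ENNReal) + 1) * f) := by gcongr
    _ = f := by rw [← mul_assoc, ENNReal.inv_mul_cancel hne hnt, one_mul]

lemma harmonic_top : ∑' n : ℕ, (2 * (((n + 1 : ℕ) : ENNReal) + 1))⁻¹ = ⊤ := by
  by_contra h
  have e : ∀ n : ℕ, (2 * (((n + 1 : ℕ) : ENNReal) + 1))⁻¹
      = (((2 * (((n + 1 : ℕ) : NNReal) + 1))⁻¹ : NNReal) : ENNReal) := by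
    intro n
    rw [ENNReal.coe_inv (by positivity)]
    push_cast
    rfl
  simp_rw [e] at h
  rw [← ne_eq, ENNReal.tsum_coe_ne_top_iff_summable] at h
  have h2 := (NNReal.summable_coe.2 h).mul_left 2
  have h3 : Summable (fun n : ℕ => 1 / (((n + 2 : ℕ)) : ℝ)) := by
    refine h2.congr fun n => ?_
    push_cast
    field_simp
    ring
  rw [summable_nat_add_iff (f := fun n : ℕ => 1 / (n : ℝ)) 2] at h3
  exact Real.not_summable_one_div_natCast h3

lemma sum_cn : ∑' v : V, mu (cn (0, 0) v) = ⊤ := by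
  refine top_le_iff.1 ?_
  rw [← harmonic_top, ENNReal.tsum_prod']
  refine le_trans (ENNReal.tsum_le_tsum fun n => col_sum (n + 1) (by omega)) ?_
  exact ENNReal.tsum_comp_le_tsum_of_injective (f := fun n : ℕ => ((n + 1 : ℕ) : ℤ))
    (fun a b h => by simpa using h) (fun x => ∑' y : ℤ, mu (cn (0, 0) (x, y)))

end DaC

end

-- Part 7
section
open MeasureTheory ProbabilityTheory
namespace DaC

/-! ### The product model -/

lemma boolOf_eq_true {P : Prop} : boolOf P = true ↔ P := by
  simp [boolOf]

/-- the edge configuration -/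
noncomputable def eta (ω : Ed → Bool) : EdgeCfg := fun u v => boolOf (AdjE (op ω) u v)

lemma conn_eta (ω : Ed → Bool) (u v : V) : Conn (eta ω) u v ↔ Reach (op ω) u v := by
  simp only [Conn, eta, boolOf_eq_true, Reach]

lemma rep_spec (ω : Ed → Bool) (v : V) : Reach (op ω) v (clusterRep (eta ω) v) ∧
    ∀ w, Reach (op ω) v w → Encodable.encode (clusterRep (eta ω) v) ≤ Encodable.encode w := by
  have hne : (Encodable.encode '' pCluster (eta ω) v).Nonempty :=
    ⟨_, v, (conn_eta ω v v).2 (Reach.refl _ _), rfl⟩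
  obtain ⟨w, hw, hw'⟩ := Nat.sInf_mem hne
  have hrep : clusterRep (eta ω) v = w := by
    simp only [clusterRep]
    rw [← hw', Encodable.encodek]; rfl
  rw [hrep]
  refine ⟨(conn_eta ω v w).1 hw, fun w' h' => ?_⟩
  rw [hw']
  exact Nat.sInf_le ⟨w', (conn_eta ω v w').2 h', rfl⟩

lemma rep_iff (ω : Ed → Bool) (v w : V) : clusterRep (eta ω) v = w ↔
    Reach (op ω) v w ∧ ∀ w', Reach (op ω) v w' → Encodable.encode w ≤ Encodable.encode w' := by
  constructor
  · rintro rfl; exact rep_spec ω v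
  · rintro ⟨h1, h2⟩
    exact Encodable.encode_injective
      (le_antisymm ((rep_spec ω v).2 w h1) (h2 _ (rep_spec ω v).1))

lemma rep_eq {ω : Ed → Bool} {u v : V} (h : Reach (op ω) u v) :
    clusterRep (eta ω) u = clusterRep (eta ω) v := by
  rw [rep_iff]
  exact ⟨h.trans (rep_spec ω v).1, fun w' h' => (rep_spec ω v).2 w' (h.symm.trans h')⟩

lemma reach_of_rep {ω : Ed → Bool} {u v : V} (h : clusterRep (eta ω) u = clusterRep (eta ω) v) :
    Reach (op ω) u v := by
  have := (rep_spec ω u).1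
  rw [h] at this
  exact this.trans (rep_spec ω v).1.symm

lemma rep_meas (v w : V) : MeasurableSet {ω : Ed → Bool | clusterRep (eta ω) v = w} := by
  simp only [rep_iff]
  have : {ω : Ed → Bool | Reach (op ω) v w ∧
      ∀ w', Reach (op ω) v w' → Encodable.encode w ≤ Encodable.encode w'} =
      cn v w ∩ ⋂ w', ((cn v w')ᶜ ∪ {_ω | Encodable.encode w ≤ Encodable.encode w'}) := by
    ext ω
    simp only [cn, Set.mem_inter_iff, Set.mem_iInter, Set.mem_union, Set.mem_compl_iff,
      Set.mem_ofPred_eq, imp_iff_not_or]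
  rw [this]
  exact (cn_meas _ _).inter (MeasurableSet.iInter fun w' =>
    (cn_meas _ _).compl.union (MeasurableSet.const _))

/-- the map from independent labels to DaC configurations -/
noncomputable def Phi (z : (Ed → Bool) × (V → Bool)) : Config :=
  (eta z.1, fun v => z.2 (clusterRep (eta z.1) v))

lemma meas_bool {Ω : Type*} [MeasurableSpace Ω] {f : Ω → Bool} (h : MeasurableSet {x | f x = true}) :
    Measurable f := measurable_to_bool h

lemma measurable_Phi : Measurable Phi := by
  refine Measurable.prodMk ?_ ?_
  · refine measurable_pi_iff.2 fun u => measurable_pi_iff.2 fun v => meas_bool ?_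
    simp only [eta, boolOf_eq_true]
    exact measurable_fst (adj_meas u v)
  · refine measurable_pi_iff.2 fun v => meas_bool ?_
    have : {z : (Ed → Bool) × (V → Bool) | z.2 (clusterRep (eta z.1) v) = true} =
        ⋃ w, ({z | clusterRep (eta z.1) v = w} ∩ {z | z.2 w = true}) := by
      ext z; simp
    rw [this]
    refine MeasurableSet.iUnion fun w => MeasurableSet.inter (measurable_fst (rep_meas v w)) ?_
    exact ((measurable_pi_apply w).comp measurable_snd :
      Measurable fun z : (Ed → Bool) × (V → Bool) => z.2 w) (measurableSet_singleton true)

lemma col_meas (v : V) : MeasurableSet {ω : Config | ω.2 v = true} :=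
  ((measurable_pi_apply v).comp measurable_snd :
      Measurable fun z : Config => z.2 v) (measurableSet_singleton true)

lemma mem_mono_meas (v : V) :
    MeasurableSet {ω : Config | v ∈ monoCluster SqAdj ω.2 true origin} := by
  simp only [monoCluster, Set.mem_ofPred_eq]
  refine (col_meas origin).inter (countable_reach_meas _ (fun a b => ?_) _ _)
  exact (MeasurableSet.const _).inter ((col_meas a).inter (col_meas b))

lemma inf_meas : MeasurableSet {ω : Config | (monoCluster SqAdj ω.2 true origin).Infinite} := by
  have : {ω : Config | (monoCluster SqAdj ω.2 true origin).Infinite} =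
      ⋂ F : Finset V, ⋃ v : V, ({ω | v ∈ monoCluster SqAdj ω.2 true origin} ∩ {_ω | v ∉ F}) := by
    ext ω
    simp only [Set.mem_iInter, Set.mem_iUnion, Set.mem_inter_iff, Set.mem_ofPred_eq]
    constructor
    · intro h F
      exact h.exists_notMem_finset F
    · intro h hfin
      obtain ⟨v, h1, h2⟩ := h hfin.toFinset
      exact h2 (by simpa using h1)
  rw [this]
  exact MeasurableSet.iInter fun F => MeasurableSet.iUnion fun v =>
    (mem_mono_meas v).inter (MeasurableSet.const _)

lemma mono_end {ξ : ColourCfg} {v : V} (h : ξ origin = true) (hv : MonoConn SqAdj ξ true origin v) :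
    ξ v = true := by
  cases hv with
  | refl => exact h
  | tail _ h => exact h.2.2

/-- the law of the labels of the vertices -/
noncomputable def nu (κ : Measure Bool) : Measure (V → Bool) := Measure.infinitePi (fun _ => κ)

instance (κ : Measure Bool) [IsProbabilityMeasure κ] : IsProbabilityMeasure (nu κ) := by
  unfold nu; infer_instance

lemma nu_true (κ : Measure Bool) [IsProbabilityMeasure κ] (v : V) :
    nu κ {ξ | ξ v = true} = κ {true} := by
  have := (Measure.infinitePi_pi (μ := fun _ : V => κ) (s := {v}) (t := fun _ => {true})
    (fun _ _ => measurableSet_singleton _))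
  simp only [Finset.prod_singleton] at this
  rw [← this, nu]
  congr 1
  ext ξ; simp

lemma nu_null (κ : Measure Bool) [IsProbabilityMeasure κ] (hκ : κ {true} < 1) {S : Set V}
    (hS : S.Infinite) : nu κ {ξ | ∀ s ∈ S, ξ s = true} = 0 := by
  have h : ∀ n : ℕ, nu κ {ξ | ∀ s ∈ S, ξ s = true} ≤ κ {true} ^ n := by
    intro n
    obtain ⟨F, hF, hn⟩ := hS.exists_subset_card_eq n
    have := (Measure.infinitePi_pi (μ := fun _ : V => κ) (s := F) (t := fun _ => {true})
      (fun _ _ => measurableSet_singleton _))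
    rw [Finset.prod_const, hn] at this
    rw [← this]
    refine measure_mono fun ξ hξ => ?_
    intro i hi
    exact hξ i (hF hi)
  exact le_antisymm (ge_of_tendsto' (ENNReal.tendsto_pow_atTop_nhds_zero_of_lt_one hκ) h) zero_le

lemma main_null (κ : Measure Bool) [IsProbabilityMeasure κ] (hκ : κ {true} < 1) :
    (mu.prod (nu κ)).map Phi {ω | (monoCluster SqAdj ω.2 true origin).Infinite} = 0 := by
  rw [Measure.map_apply measurable_Phi inf_meas,
    Measure.measure_prod_null (measurable_Phi inf_meas)]
  filter_upwards [cE_io, cE_io_dual] with ω h1 h2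
  obtain ⟨S, hS, hS'⟩ := blockers h1 h2 (clusterRep (eta ω)) (fun u v h => reach_of_rep h)
    (fun u v h => rep_eq h)
  refine measure_mono_null ?_ (nu_null κ hκ hS)
  intro ξ hξ s hs
  have hξ' : (monoCluster SqAdj (Phi (ω, ξ)).2 true origin).Infinite := hξ
  obtain ⟨w, hw⟩ := hξ'.nonempty
  obtain ⟨z, hz, hzs⟩ := hS' s hs (fun a b => SqAdj a b ∧ (Phi (ω, ξ)).2 a = true ∧
    (Phi (ω, ξ)).2 b = true) (fun x y h => h.1) (hξ'.mono fun q hq => hq.2)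
  have := mono_end hw.1 hz
  rw [← hzs]
  exact this

lemma sizeE_eq (S : Set V) : sizeE S = ∑' v : V, S.indicator (fun _ => (1 : ENNReal)) v := by
  rw [← tsum_subtype S (fun _ => (1 : ENNReal)), ENNReal.tsum_set_one, sizeE]

lemma mem_of_reach {ω : Ed → Bool} {ξ : V → Bool} {v : V} (h : Reach (op ω) origin v)
    (h' : ξ (clusterRep (eta ω) origin) = true) :
    v ∈ monoCluster SqAdj (Phi (ω, ξ)).2 true origin := by
  refine ⟨h', ?_⟩
  induction h with
  | refl => exact Relation.ReflTransGen.refl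
  | @tail b c hb hc ih =>
    refine Relation.ReflTransGen.tail ih ⟨hc.sqAdj, ?_, ?_⟩
    · change ξ (clusterRep (eta ω) b) = true
      rw [← rep_eq (show Reach (op ω) origin b from hb)]; exact h'
    · change ξ (clusterRep (eta ω) c) = true
      rw [← rep_eq (show Reach (op ω) origin c from hb.tail hc)]; exact h'

lemma main_mean (κ : Measure Bool) [IsProbabilityMeasure κ] (hκ : 0 < κ {true}) :
    ∫⁻ ω, sizeE (monoCluster SqAdj ω.2 true origin) ∂((mu.prod (nu κ)).map Phi) = ⊤ := by
  have e1 : ∀ ω : Config, sizeE (monoCluster SqAdj ω.2 true origin) =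
      ∑' v : V, {ω : Config | v ∈ monoCluster SqAdj ω.2 true origin}.indicator
        (fun _ => (1 : ENNReal)) ω := by
    intro ω
    rw [sizeE_eq]
    rfl
  simp_rw [e1]
  rw [lintegral_tsum fun v => (measurable_const.indicator (mem_mono_meas v)).aemeasurable]
  refine top_le_iff.1 ?_
  have h0 : ∑' v : V, κ {true} * mu (cn (0, 0) v) = ⊤ := by
    rw [ENNReal.tsum_mul_left, sum_cn, ENNReal.mul_top hκ.ne']
  rw [← h0]
  refine ENNReal.tsum_le_tsum fun v => ?_
  rw [lintegral_indicator (mem_mono_meas v), setLIntegral_one,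
    Measure.map_apply measurable_Phi (mem_mono_meas v),
    Measure.prod_apply (measurable_Phi (mem_mono_meas v)), ← setLIntegral_const]
  refine le_trans ?_ (setLIntegral_le_lintegral (cn (0, 0) v) _)
  refine setLIntegral_mono' (cn_meas _ _) fun ω hω => ?_
  rw [← nu_true κ (clusterRep (eta ω) origin)]
  exact measure_mono fun ξ hξ => mem_of_reach hω hξ

end DaC

end

-- Part 8
section
open MeasureTheory ProbabilityTheory
namespace DaC

/-! ### Binary digits of a uniform variable -/

lemma base_eq : base = volume.restrict (Set.Ico (0 : ℝ) 1) :=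
  (Measure.restrict_congr_set Ico_ae_eq_Ioc).symm

instance : IsProbabilityMeasure base := by
  constructor
  rw [base_eq]; simp

lemma bit_meas (n : ℕ) : Measurable (bit n) := by
  refine meas_bool ?_
  simp only [bit, boolOf_eq_true]
  have h : Measurable (fun x : ℝ => ⌊x * 2 ^ (n + 1)⌋) :=
    Int.measurable_floor.comp (measurable_id.mul_const _)
  exact h (MeasurableSet.of_discrete (s := {z : ℤ | z % 2 = 1}))

lemma vol_half (B : Set ℝ) : volume {y : ℝ | y / 2 ∈ B} = 2 * volume B := by
  have := Real.volume_preimage_mul_left (a := 1 / 2) (by norm_num) B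
  rw [show {y : ℝ | y / 2 ∈ B} = ((1 / 2 : ℝ) * ·) ⁻¹' B by ext y; simp [div_eq_inv_mul], this]
  norm_num

lemma vol_half' (B : Set ℝ) : volume {y : ℝ | (y + 1) / 2 ∈ B} = 2 * volume B := by
  rw [← vol_half B]
  exact measure_preimage_add_right volume 1 {y : ℝ | y / 2 ∈ B}

lemma base_split {A : Set ℝ} (hA : MeasurableSet A) :
    base A = 2⁻¹ * base {y | y / 2 ∈ A} + 2⁻¹ * base {y | (y + 1) / 2 ∈ A} := by
  have m1 : MeasurableSet {y : ℝ | y / 2 ∈ A} := (measurable_id.div_const 2) hA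
  have m2 : MeasurableSet {y : ℝ | (y + 1) / 2 ∈ A} := ((measurable_id.add_const 1).div_const 2) hA
  rw [base_eq, Measure.restrict_apply hA, Measure.restrict_apply m1, Measure.restrict_apply m2]
  have e1 : {y : ℝ | y / 2 ∈ A} ∩ Set.Ico 0 1 = {y : ℝ | y / 2 ∈ A ∩ Set.Ico 0 (1 / 2)} := by
    ext y
    simp only [Set.mem_inter_iff, Set.mem_ofPred_eq, Set.mem_Ico]
    constructor <;> rintro ⟨h1, h2, h3⟩ <;> exact ⟨h1, by linarith, by linarith⟩
  have e2 : {y : ℝ | (y + 1) / 2 ∈ A} ∩ Set.Ico 0 1 =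
      {y : ℝ | (y + 1) / 2 ∈ A ∩ Set.Ico (1 / 2) 1} := by
    ext y
    simp only [Set.mem_inter_iff, Set.mem_ofPred_eq, Set.mem_Ico]
    constructor <;> rintro ⟨h1, h2, h3⟩ <;> exact ⟨h1, by linarith, by linarith⟩
  rw [e1, e2, vol_half, vol_half', ← mul_assoc, ← mul_assoc,
    ENNReal.inv_mul_cancel (by norm_num) (by norm_num), one_mul, one_mul,
    ← measure_union _ (hA.inter measurableSet_Ico), ← Set.inter_union_distrib_left,
    Set.Ico_union_Ico_eq_Ico (by norm_num) (by norm_num)]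
  refine Set.disjoint_left.2 fun x h1 h2 => ?_
  have := h1.2.2; have := h2.2.1; linarith

lemma bit_half (n : ℕ) (y : ℝ) : bit (n + 1) (y / 2) = bit n y := by
  unfold bit
  rw [show y / 2 * 2 ^ (n + 1 + 1) = y * 2 ^ (n + 1) by rw [pow_succ]; ring]

lemma bit_half' (n : ℕ) (y : ℝ) : bit (n + 1) ((y + 1) / 2) = bit n y := by
  unfold bit
  rw [show (y + 1) / 2 * 2 ^ (n + 1 + 1) = y * 2 ^ (n + 1) + ((2 ^ (n + 1) : ℤ) : ℝ) by
    push_cast; rw [pow_succ]; ring, Int.floor_add_intCast, pow_succ]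
  congr 2
  omega

lemma bit_zero {y : ℝ} (h : y ∈ Set.Ico (0 : ℝ) 1) : bit 0 (y / 2) = false := by
  have : ⌊y⌋ = 0 := Int.floor_eq_zero_iff.2 h
  simp [bit, boolOf, this]

lemma bit_zero' {y : ℝ} (h : y ∈ Set.Ico (0 : ℝ) 1) : bit 0 ((y + 1) / 2) = true := by
  have : ⌊y⌋ = 0 := Int.floor_eq_zero_iff.2 h
  simp [bit, boolOf, this]

lemma base_ico : ∀ᵐ y ∂base, y ∈ Set.Ico (0 : ℝ) 1 := by
  rw [base_eq]; exact ae_restrict_mem measurableSet_Ico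

open Classical in
lemma coin_apply (t : Set Bool) :
    coin t = ((if false ∈ t then 2⁻¹ else 0) + (if true ∈ t then 2⁻¹ else 0) : ENNReal) := by
  have h : t = (t ∩ {false}) ∪ (t ∩ {true}) := by ext b; cases b <;> simp
  have hd : Disjoint (t ∩ {false}) (t ∩ {true}) := by
    rw [Set.disjoint_left]; rintro b ⟨_, rfl⟩ ⟨_, h⟩; cases h
  conv_lhs => rw [h]
  rw [measure_union hd (MeasurableSet.of_discrete)]
  congr 1
  · split_ifs with h1
    · rw [Set.inter_eq_right.2 (by simpa using h1), coin_singleton]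
    · rw [Set.inter_singleton_eq_empty.2 h1, measure_empty]
  · split_ifs with h1
    · rw [Set.inter_eq_right.2 (by simpa using h1), coin_singleton]
    · rw [Set.inter_singleton_eq_empty.2 h1, measure_empty]

lemma bits_cyl (N : ℕ) : ∀ t : ℕ → Set Bool,
    base {x | ∀ i < N, bit i x ∈ t i} = ∏ i ∈ Finset.range N, coin (t i) := by
  classical
  induction N with
  | zero => intro t; simp
  | succ N ih =>
    intro t
    have hm : MeasurableSet {x : ℝ | ∀ i < N + 1, bit i x ∈ t i} := by
      have : {x : ℝ | ∀ i < N + 1, bit i x ∈ t i} = ⋂ i, ⋂ (_ : i < N + 1), bit i ⁻¹' t i := by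
        ext; simp
      rw [this]
      exact MeasurableSet.iInter fun i => MeasurableSet.iInter fun _ =>
        bit_meas i MeasurableSet.of_discrete
    have key : ∀ (b : Bool) (f : ℝ → ℝ), (∀ n y, bit (n + 1) (f y) = bit n y) →
        (∀ y ∈ Set.Ico (0 : ℝ) 1, bit 0 (f y) = b) →
        base {y | f y ∈ {x : ℝ | ∀ i < N + 1, bit i x ∈ t i}} =
          if b ∈ t 0 then ∏ i ∈ Finset.range N, coin (t (i + 1)) else 0 := by
      intro b f h1 h2
      have : base {y | f y ∈ {x : ℝ | ∀ i < N + 1, bit i x ∈ t i}} =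
          base {y | b ∈ t 0 ∧ ∀ i < N, bit i y ∈ t (i + 1)} := by
        refine measure_congr ?_
        filter_upwards [base_ico] with y hy
        refine propext ?_
        change (∀ i < N + 1, bit i (f y) ∈ t i) ↔ (b ∈ t 0 ∧ ∀ i < N, bit i y ∈ t (i + 1))
        constructor
        · intro h
          refine ⟨by rw [← h2 y hy]; exact h 0 (by omega), fun i hi => ?_⟩
          rw [← h1]; exact h (i + 1) (by omega)
        · rintro ⟨h3, h4⟩ i hi
          cases i with
          | zero => rw [h2 y hy]; exact h3
          | succ i => rw [h1]; exact h4 i (by omega)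
      rw [this]
      split_ifs with h3
      · simp only [h3, true_and]; exact ih fun i => t (i + 1)
      · simp [h3]
    rw [base_split hm, key false _ bit_half (fun y hy => bit_zero hy),
      key true _ bit_half' (fun y hy => bit_zero' hy), Finset.prod_range_succ', coin_apply (t 0)]
    split_ifs <;> ring

lemma bits_law : base.map (fun x n => bit n x) = Measure.infinitePi (fun _ : ℕ => coin) := by
  classical
  have hmeas : Measurable (fun (x : ℝ) (n : ℕ) => bit n x) := measurable_pi_iff.2 bit_meas
  refine Measure.eq_infinitePi _ fun s t ht => ?_
  rw [Measure.map_apply hmeas (MeasurableSet.pi s.countable_toSet fun i _ => ht i)]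
  obtain ⟨N, hN⟩ := s.exists_nat_subset_range
  have h := bits_cyl N fun i => if i ∈ s then t i else Set.univ
  have e : {x : ℝ | ∀ i < N, bit i x ∈ (if i ∈ s then t i else Set.univ)} =
      (fun (x : ℝ) (n : ℕ) => bit n x) ⁻¹' (Set.pi s t) := by
    ext x
    simp only [Set.mem_ofPred_eq, Set.mem_preimage, Set.mem_pi, Finset.mem_coe]
    constructor
    · intro h i hi
      have := h i (Finset.mem_range.1 (hN hi))
      rwa [if_pos hi] at this
    · intro h i _
      split_ifs with h1
      · exact h i h1
      · trivial
  rw [← e, h, ← Finset.prod_subset hN]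
  · exact Finset.prod_congr rfl fun i hi => by rw [if_pos hi]
  · intro i _ hi
    rw [if_neg hi, measure_univ]

/-! ### Uniform variables from bits -/

/-- the number with the given binary digits -/
noncomputable def Un (b : ℕ → Bool) : ℝ := ∑' k : ℕ, if b k then ((2 : ℝ)⁻¹) ^ (k + 1) else 0

lemma hasSum_half : HasSum (fun k : ℕ => ((2 : ℝ)⁻¹) ^ (k + 1)) 1 := by
  have := (hasSum_geometric_of_lt_one (r := (2 : ℝ)⁻¹) (by norm_num) (by norm_num)).mul_left 2⁻¹
  have e : (fun k : ℕ => ((2 : ℝ)⁻¹) ^ (k + 1)) = fun i => 2⁻¹ * 2⁻¹ ^ i := by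
    funext k; rw [pow_succ']
  have h1 : (2 : ℝ)⁻¹ * (1 - 2⁻¹)⁻¹ = 1 := by norm_num
  rw [e]
  rwa [h1] at this

lemma Un_summable (b : ℕ → Bool) :
    Summable (fun k : ℕ => if b k then ((2 : ℝ)⁻¹) ^ (k + 1) else 0) := by
  refine Summable.of_nonneg_of_le (fun k => ?_) (fun k => ?_) hasSum_half.summable
  · split_ifs <;> positivity
  · split_ifs
    · exact le_rfl
    · positivity

lemma Un_compl (b : ℕ → Bool) : Un b + Un (fun k => !b k) = 1 := by
  unfold Un
  rw [← (Un_summable b).tsum_add (Un_summable _), ← hasSum_half.tsum_eq]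
  refine tsum_congr fun k => ?_
  cases b k <;> simp

lemma Un_ge (b : ℕ → Bool) (s : Finset ℕ) (h : ∀ i ∈ s, b i = true) :
    ∑ i ∈ s, ((2 : ℝ)⁻¹) ^ (i + 1) ≤ Un b := by
  have := (Un_summable b).sum_le_tsum s (fun i _ => by split_ifs <;> positivity)
  refine le_trans (le_of_eq (Finset.sum_congr rfl fun i hi => ?_)) this
  rw [h i hi]; simp

lemma Un_le (b : ℕ → Bool) (s : Finset ℕ) (h : ∀ i ∈ s, b i = false) :
    Un b ≤ 1 - ∑ i ∈ s, ((2 : ℝ)⁻¹) ^ (i + 1) := by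
  have := Un_ge (fun k => !b k) s (fun i hi => by simp [h i hi])
  have := Un_compl b
  linarith

lemma half_sum (n : ℕ) : ∑ i ∈ Finset.range n, ((2 : ℝ)⁻¹) ^ (i + 1) = 1 - 2⁻¹ ^ n := by
  induction n with
  | zero => simp
  | succ n ih => rw [Finset.sum_range_succ, ih, pow_succ]; ring

lemma Un_meas : Measurable Un := by
  unfold Un
  refine Measurable.tsum fun k => ?_
  exact Measurable.ite (p := fun b : ℕ → Bool => b k = true)
    ((measurable_pi_apply k : Measurable fun b : ℕ → Bool => b k) (measurableSet_singleton true))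
    measurable_const measurable_const

/-- the law of fair bits -/
noncomputable def be : Measure (ℕ → Bool) := Measure.infinitePi (fun _ : ℕ => coin)

instance : IsProbabilityMeasure be := by unfold be; infer_instance

lemma be_cyl (s : Finset ℕ) (c : Bool) : be {b | ∀ i ∈ s, b i = c} = 2⁻¹ ^ s.card := by
  have := (Measure.infinitePi_pi (μ := fun _ : ℕ => coin) (s := s) (t := fun _ => {c})
    (fun _ _ => measurableSet_singleton _))
  simp only [coin_singleton, Finset.prod_const] at this
  rw [← this]; rfl

/-- threshold -/
noncomputable def th (r : ℝ) (b : ℕ → Bool) : Bool := boolOf (Un b < r)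

lemma th_meas (r : ℝ) : Measurable (th r) := by
  refine meas_bool ?_
  simp only [th, boolOf_eq_true]
  exact measurableSet_lt Un_meas measurable_const

instance (r : ℝ) : IsProbabilityMeasure (be.map (th r)) :=
  Measure.isProbabilityMeasure_map (th_meas r).aemeasurable

lemma th_true (r : ℝ) : be.map (th r) {true} = be {b | Un b < r} := by
  rw [Measure.map_apply (th_meas r) (measurableSet_singleton _)]
  congr 1
  ext b
  simp [th, boolOf_eq_true]

lemma th_pos {r : ℝ} (hr : 0 < r) : 0 < be.map (th r) {true} := by
  obtain ⟨n, hn⟩ := exists_pow_lt_of_lt_one hr (show (2 : ℝ)⁻¹ < 1 by norm_num)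
  rw [th_true]
  refine lt_of_lt_of_le ?_ (measure_mono (s := {b | ∀ i ∈ Finset.range n, b i = false}) ?_)
  · rw [be_cyl]
    exact ENNReal.pow_pos (by simp) _
  · intro b hb
    have := Un_le b (Finset.range n) hb
    rw [half_sum] at this
    simp only [Set.mem_ofPred_eq]; linarith

lemma th_lt {r : ℝ} (hr : r < 1) : be.map (th r) {true} < 1 := by
  obtain ⟨n, hn⟩ := exists_pow_lt_of_lt_one (sub_pos.2 hr) (show (2 : ℝ)⁻¹ < 1 by norm_num)
  rw [th_true]
  have h1 : be {b | ∀ i ∈ Finset.range n, b i = true} ≠ 0 := by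
    rw [be_cyl]
    exact (ENNReal.pow_pos (by simp) _).ne'
  have hms : MeasurableSet {b | Un b < r} := measurableSet_lt Un_meas measurable_const
  refine lt_of_le_of_ne prob_le_one fun h => h1 ?_
  refine measure_mono_null ?_ ((prob_compl_eq_zero_iff hms).2 h)
  intro b hb hlt
  have := Un_ge b (Finset.range n) hb
  rw [half_sum] at this
  simp only [Set.mem_ofPred_eq] at hlt
  linarith

lemma th_half : be.map (th (1 / 2)) = coin := by
  have h1 : be.map (th (1 / 2)) {true} = 2⁻¹ := by
    rw [th_true]
    have hc : be {b | b 0 = false} = 2⁻¹ := by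
      have := be_cyl {0} false
      simpa using this
    rw [← hc]
    have hnull : be {b | ∀ i, b (i + 1) = true} = 0 := by
      have : ∀ n : ℕ, be {b | ∀ i, b (i + 1) = true} ≤ 2⁻¹ ^ n := by
        intro n
        have := be_cyl ((Finset.range n).map ⟨fun i => i + 1, fun a b h => by simpa using h⟩) true
        rw [Finset.card_map, Finset.card_range] at this
        rw [← this]
        refine measure_mono fun b hb => ?_
        intro i hi
        simp only [Finset.mem_map] at hi
        obtain ⟨j, _, rfl⟩ := hi
        exact hb j
      exact le_antisymm (ge_of_tendsto' (ENNReal.tendsto_pow_atTop_nhds_zero_of_lt_one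
        (by norm_num)) this) zero_le
    refine measure_congr ?_
    have hae : ∀ᵐ b ∂be, ¬ ∀ i, b (i + 1) = true := by
      rw [ae_iff]; simpa using hnull
    filter_upwards [hae] with b hb
    refine propext ?_
    change Un b < 1 / 2 ↔ b 0 = false
    constructor
    · intro h
      by_contra hcon
      have := Un_ge b {0} (by simpa using hcon)
      norm_num at this h
      linarith
    · intro h
      push Not at hb
      obtain ⟨j, hj⟩ := hb
      have := Un_le b {0, j + 1} (by
        intro i hi
        simp only [Finset.mem_insert, Finset.mem_singleton] at hi
        rcases hi with rfl | rfl
        · exact h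
        · simpa using hj)
      rw [Finset.sum_pair (by omega)] at this
      norm_num at this ⊢
      have hp : (0 : ℝ) < (1 / 2) ^ (j + 1 + 1) := by positivity
      linarith
  have h2 : be.map (th (1 / 2)) {false} = 2⁻¹ := by
    have : ({false} : Set Bool) = {true}ᶜ := by ext b; cases b <;> simp
    rw [this, prob_compl_eq_one_sub (measurableSet_singleton _), h1, ENNReal.one_sub_inv_two]
  refine Measure.ext_of_singleton fun b => ?_
  rw [coin_singleton]
  cases b
  · exact h2
  · exact h1

/-! ### The joint law of the labels -/

/-- the index used by each label -/
noncomputable def ix : Ed ⊕ V → ℕ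
  | Sum.inl e => 2 * eIdx (eS e) (eT e)
  | Sum.inr v => 2 * Encodable.encode v + 1

lemma ends_inj {e e' : Ed} (h1 : eS e = eS e') (h2 : eT e = eT e') : e = e' := by
  obtain ⟨x, y, b⟩ := e
  obtain ⟨x', y', b'⟩ := e'
  cases b <;> cases b' <;> simp at h1 h2 ⊢ <;> omega

lemma ends_flip {e e' : Ed} (h1 : eS e = eT e') (h2 : eT e = eS e') : False := by
  obtain ⟨x, y, b⟩ := e
  obtain ⟨x', y', b'⟩ := e'
  cases b <;> cases b' <;> simp at h1 h2 <;> omega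

lemma eIdx_inj {e e' : Ed} (h : eIdx (eS e) (eT e) = eIdx (eS e') (eT e')) : e = e' := by
  unfold eIdx at h
  rcases min_choice (Encodable.encode (eS e, eT e)) (Encodable.encode (eT e, eS e)) with h1 | h1 <;>
  rcases min_choice (Encodable.encode (eS e', eT e')) (Encodable.encode (eT e', eS e')) with h2 | h2 <;>
  rw [h1, h2] at h <;> have h3 := Encodable.encode_injective h <;> rw [Prod.mk.injEq] at h3
  · exact ends_inj h3.1 h3.2
  · exact (ends_flip h3.1 h3.2).elim
  · exact (ends_flip h3.2 h3.1).elim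
  · exact ends_inj h3.2 h3.1

lemma ix_inj : Function.Injective ix := by
  rintro (e | v) (e' | v') h <;> simp only [ix] at h
  · rw [eIdx_inj (e := e) (e' := e') (by omega)]
  · omega
  · omega
  · rw [Encodable.encode_injective (show Encodable.encode v = Encodable.encode v' by omega)]

/-- the threshold of each label -/
noncomputable def thr (r : ℝ) : Ed ⊕ V → ℝ
  | Sum.inl _ => 1 / 2
  | Sum.inr _ => r

/-- all the labels -/
noncomputable def lab (r : ℝ) (x : ℝ) (j : Ed ⊕ V) : Bool :=
  th (thr r j) (fun k => bit (Nat.pair (ix j) k) x)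

lemma lab_law (r : ℝ) : base.map (lab r) = Measure.infinitePi (fun j => be.map (th (thr r j))) := by
  have hmeas : Measurable (fun (x : ℝ) (n : ℕ) => bit n x) := measurable_pi_iff.2 bit_meas
  set g : (Ed ⊕ V) × ℕ → ℕ := fun p => Nat.pair (ix p.1) p.2 with hg
  have hgi : Function.Injective g := by
    rintro ⟨a, b⟩ ⟨c, d⟩ h
    have := Nat.pair_eq_pair.1 h
    exact Prod.ext (ix_inj this.1) this.2
  have h1 : iIndepFun (fun (i : ℕ) (ω : ℕ → Bool) => ω i) be :=
    iIndepFun_infinitePi (X := fun _ b => b) (fun _ => measurable_id)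
  have h2 := (h1.precomp hgi).map_fun_eq_infinitePi_map (fun i => measurable_pi_apply _)
  have h3 : ∀ i, be.map (fun ω => ω (g i)) = coin := fun i =>
    Measure.infinitePi_map_eval (fun _ : ℕ => coin) (g i)
  simp only [h3] at h2
  have h4 := Measure.infinitePi_map_curry (fun (_ : Ed ⊕ V) (_ : ℕ) => coin)
  have h5 := Measure.infinitePi_map_pi (fun _ : Ed ⊕ V => be)
    (f := fun j => th (thr r j)) (fun j => th_meas _)
  rw [← h5]
  have h6 : Measure.infinitePi (fun _ : Ed ⊕ V => be) = base.map (fun x j k => bit (g (j, k)) x) := by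
    unfold be
    have hgm : Measurable (fun (ω : ℕ → Bool) (i : (Ed ⊕ V) × ℕ) => ω (g i)) :=
      measurable_pi_iff.2 fun i => measurable_pi_apply (g i)
    have hc : Measurable (MeasurableEquiv.curry (Ed ⊕ V) ℕ Bool) := MeasurableEquiv.measurable _
    rw [← h4, ← h2, Measure.map_map hc hgm, be, ← bits_law, Measure.map_map (hc.comp hgm) hmeas]
    rfl
  rw [h6, Measure.map_map]
  · rfl
  · exact measurable_pi_iff.2 fun j => (th_meas _).comp (measurable_pi_apply j)
  · exact measurable_pi_iff.2 fun j => measurable_pi_iff.2 fun k => bit_meas _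

lemma lab_meas (r : ℝ) : Measurable (lab r) :=
  measurable_pi_iff.2 fun _ => (th_meas _).comp (measurable_pi_iff.2 fun _ => bit_meas _)

lemma sum_law (κ : Measure Bool) [IsProbabilityMeasure κ] (k : Ed ⊕ V → Measure Bool)
    [∀ j, IsProbabilityMeasure (k j)] (h1 : ∀ e, k (Sum.inl e) = coin) (h2 : ∀ v, k (Sum.inr v) = κ) :
    (mu.prod (nu κ)).map (fun z => Sum.elim z.1 z.2) = Measure.infinitePi k := by
  have hm : Measurable (fun z : (Ed → Bool) × (V → Bool) => Sum.elim z.1 z.2) := by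
    refine measurable_pi_iff.2 ?_
    rintro (e | v)
    · exact (measurable_pi_apply e).comp measurable_fst
    · exact (measurable_pi_apply v).comp measurable_snd
  refine Measure.eq_infinitePi _ fun s t ht => ?_
  rw [Measure.map_apply hm (MeasurableSet.pi s.countable_toSet fun i _ => ht i)]
  have e : (fun z : (Ed → Bool) × (V → Bool) => Sum.elim z.1 z.2) ⁻¹' (Set.pi s t) =
      (Set.pi s.toLeft fun e => t (Sum.inl e)) ×ˢ (Set.pi s.toRight fun v => t (Sum.inr v)) := by
    ext z
    simp [Set.mem_pi]
  rw [e, Measure.prod_prod, mu, nu, Measure.infinitePi_pi _ (fun i _ => ht _),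
    Measure.infinitePi_pi _ (fun i _ => ht _)]
  conv_rhs => rw [← Finset.toLeft_disjSum_toRight (u := s), Finset.prod_disjSum]
  simp only [h1, h2]

/-- the two families of labels -/
noncomputable def Psi (r x : ℝ) : (Ed → Bool) × (V → Bool) :=
  (fun e => lab r x (Sum.inl e), fun v => lab r x (Sum.inr v))

lemma Psi_meas (r : ℝ) : Measurable (Psi r) :=
  (measurable_pi_iff.2 fun _ => (measurable_pi_apply _).comp (lab_meas r)).prodMk
    (measurable_pi_iff.2 fun _ => (measurable_pi_apply _).comp (lab_meas r))

lemma Psi_law (r : ℝ) : base.map (Psi r) = mu.prod (nu (be.map (th r))) := by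
  have h := (lab_law r).trans (sum_law (be.map (th r)) (fun j => be.map (th (thr r j)))
    (fun e => th_half) (fun v => rfl)).symm
  have hs : Measurable (fun y : Ed ⊕ V → Bool => ((fun e => y (Sum.inl e), fun v => y (Sum.inr v)) :
      (Ed → Bool) × (V → Bool))) :=
    (measurable_pi_iff.2 fun _ => measurable_pi_apply _).prodMk
      (measurable_pi_iff.2 fun _ => measurable_pi_apply _)
  have hm : Measurable (fun z : (Ed → Bool) × (V → Bool) => Sum.elim z.1 z.2) := by
    refine measurable_pi_iff.2 ?_
    rintro (e | v)
    · exact (measurable_pi_apply e).comp measurable_fst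
    · exact (measurable_pi_apply v).comp measurable_snd
  have h' := congrArg (Measure.map (fun y : Ed ⊕ V → Bool =>
    ((fun e => y (Sum.inl e), fun v => y (Sum.inr v)) : (Ed → Bool) × (V → Bool)))) h
  rw [Measure.map_map hs (lab_meas r), Measure.map_map hs hm] at h'
  refine Eq.trans ?_ (h'.trans ?_)
  · rfl
  · exact Measure.map_id

lemma eIdx_symm (u v : V) : eIdx u v = eIdx v u := min_comm _ _

lemma edge_eq (r x : ℝ) : edgeCfg SqAdj (1 / 2) x = eta (Psi r x).1 := by
  have hP : ∀ e, (Psi r x).1 e = true ↔ edgeU (eS e) (eT e) x < 1 / 2 := by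
    intro e
    change boolOf _ = true ↔ _
    rw [boolOf_eq_true]
    rfl
  funext u v
  rw [Bool.eq_iff_iff]
  simp only [edgeCfg, eta, Bool.and_eq_true, boolOf_eq_true]
  constructor
  · rintro ⟨h1, h2⟩
    obtain ⟨e, he⟩ := adjE_of_sqAdj h1
    refine ⟨e, ?_, he⟩
    refine (hP e).2 ?_
    rcases he with ⟨rfl, rfl⟩ | ⟨rfl, rfl⟩
    · exact h2
    · unfold edgeU at *; rwa [eIdx_symm]
  · intro h
    refine ⟨h.sqAdj, ?_⟩
    obtain ⟨e, he, hd⟩ := h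
    have h2 := (hP e).1 he
    rcases hd with ⟨rfl, rfl⟩ | ⟨rfl, rfl⟩
    · exact h2
    · unfold edgeU at *; rwa [eIdx_symm]

lemma DaC_law (r : ℝ) :
    DaCMeasure SqAdj (1 / 2) r = (mu.prod (nu (be.map (th r)))).map Phi := by
  rw [← Psi_law, Measure.map_map measurable_Phi (Psi_meas r), DaCMeasure]
  congr 1
  funext x
  change (edgeCfg SqAdj (1 / 2) x, colourCfg SqAdj (1 / 2) r x) = Phi (Psi r x)
  unfold Phi colourCfg
  rw [edge_eq r x]
  rfl

end DaC

end

namespace DaC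

/-- At `p = 1/2`, for every `r ∈ (0,1)` there is no black percolation,
`Θ(1/2,r) = 0`, yet the mean size of the black `r`-cluster of the origin is
infinite. -/
theorem critical_segment (r : ℝ) (hr : r ∈ Set.Ioo (0 : ℝ) 1) :
    thetaSq (1 / 2) r = 0 ∧
    (∫⁻ ω, sizeE (monoCluster SqAdj ω.2 true origin)
        ∂(DaCMeasure SqAdj (1 / 2) r)) = ⊤ := by
  refine ⟨?_, ?_⟩
  · unfold thetaSq percProb; rw [DaC_law]; exact main_null _ (th_lt hr.2)
  · rw [DaC_law]; exact main_mean _ (th_pos hr.1)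

end DaC
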